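/- arXiv:1701.05490 — 2 statements merged into one kernel-verified Lean document; each statement's English description precedes it below -/
import Mathlib

section
/- Let G be a finite group satisfying the two-prime hypothesis with normal subgroups N ≤ M such that M/N ≅ PSL_2(9) (the alternating group A_6) and the centralizer of M/N in G/N is trivial. Then |cd(G)| ≤ 16. -/
open CategoryTheory

/-- The set of degrees of the complex irreducible characters of `G`. -/
def charDegrees (G : Type) [Group G] : Set ℕ :=
  {n | ∃ V : FDRep ℂ G, Simple V ∧ Module.finrank ℂ V = n}

/-- `G` satisfies the two-prime hypothesis: for any distinct irreducible character degrees
`a`, `b`, the gcd `gcd a b` has at most two prime divisors counted with multiplicity. -/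
def TwoPrimeHypothesis (G : Type) [Group G] : Prop :=
  ∀ a ∈ charDegrees G, ∀ b ∈ charDegrees G, a ≠ b →
    (Nat.gcd a b).primeFactorsList.length ≤ 2

/-- `PSL₂(F)`: the quotient of `SL₂(F)` by its center. -/
abbrev PSL2 (F : Type) [Field F] : Type :=
  Matrix.SpecialLinearGroup (Fin 2) F ⧸
    Subgroup.center (Matrix.SpecialLinearGroup (Fin 2) F)

/-!
Let `χ` be an irreducible character of `G` and `θ` a constituent of its restriction to `N`. By
Clifford theory `χ(1) = t * e * θ(1)`, where `t` is the index of the inertia group of `θ` and `e` is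
the multiplicity of `θ` in `χ`. Moreover `t * e` divides `|G/N|`, which divides
`|Aut PSL₂(9)| = 1440`, so `t * e` is one of `1, 2, 3, 4, 5, 6, 9, 10, 15` or a multiple of one of
`8, 12, 18, 20, 27, 30, 45`.

Suppose `t * e` is one of the nine small numbers and `θ(1)` does not divide `4`.
* `θ` is `M`-invariant. Proper subgroups of `PSL₂(9)` have index at least `6`, so otherwise
  `t ∈ {6, 9, 10, 15}` and `e = 1`; by the two-prime hypothesis all irreducible characters of `G`
  over `θ` then have multiplicity one, so the inertia group is abelian modulo `N`, whereas subgroups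
  of these indices in `PSL₂(9)` are not abelian.
* `θ` does not extend to `M`. Otherwise tensoring the extension with a character of `M/N` of degree
  divisible by `8` and comparing with the characters over the latter shows `θ(1) ∣ |G/M| ∣ 4`.
* Hence the obstruction class of `θ` has order divisible by a prime `r ∈ {2, 3}`, and `r` divides
  `θ(1)` and every multiplicity over `θ`. Then `t * e * θ(1)` is a multiple of one of the seven
  numbers unless `t = 1` and `e = r`. In that case `θ(1) = r`, since otherwise `χ(1)` has three
  prime factors, all multiplicities over `θ` equal `r`, and `G/N` has no irreducible character of
  degree greater than `r ^ 2`; but it has one of degree at least `10`.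

So every degree is one of the nine small numbers or a multiple of one of the seven others. Each of
the seven has three prime factors and therefore divides at most one degree: `9 + 7 = 16`.
-/

namespace CharDegreeBound

open Representation Module

section Semisimplicity

variable {k G V : Type*} [Field k] [Group G] [AddCommGroup V] [Module k V]
  {ρ : Representation k G V}

lemma exists_intertwiningMap_eq_self_of_mem [IsSemisimpleRepresentation ρ]
    (S : Subrepresentation ρ) :
    ∃ p : IntertwiningMap ρ S.toRepresentation, ∀ v ∈ S, (p v : V) = v := by
  obtain ⟨T, hST⟩ := exists_isCompl S
  have hST' : IsCompl S.toSubmodule T.toSubmodule := by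
    rw [isCompl_iff, disjoint_iff, codisjoint_iff, ← Subrepresentation.toSubmodule_inf,
      ← Subrepresentation.toSubmodule_sup, hST.inf_eq_bot, hST.sup_eq_top]
    exact ⟨rfl, rfl⟩
  let p := S.toSubmodule.projectionOnto T.toSubmodule hST'
  have hp (s : V) (hs : s ∈ S) (t : V) (ht : t ∈ T) : (p (s + t) : V) = s := by
    rw [map_add, Submodule.projectionOnto_apply_left hST' ⟨s, hs⟩,
      (Submodule.projectionOnto_apply_eq_zero_iff hST').2 ht, add_zero]
  refine ⟨⟨p, fun g => LinearMap.ext fun v => Subtype.ext ?_⟩, fun v hv => ?_⟩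
  · obtain ⟨s, t, hs, ht, rfl⟩ := Submodule.codisjoint_iff_exists_add_eq.1 hST'.codisjoint v
    change (p (ρ g (s + t)) : V) = ρ g (p (s + t))
    rw [hp s hs t ht, map_add,
      hp _ (S.apply_mem_toSubmodule g hs) _ (T.apply_mem_toSubmodule g ht)]
  · simpa using hp v hv 0 T.toSubmodule.zero_mem

lemma exists_subrepresentation_ne_bot_ne_top [Nontrivial V] (hρ : ¬ IsIrreducible ρ) :
    ∃ S : Subrepresentation ρ, S ≠ ⊥ ∧ S ≠ ⊤ := by
  have : Nontrivial (Subrepresentation ρ) := ⟨⊥, ⊤, fun h =>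
    bot_ne_top (congrArg Subrepresentation.toSubmodule h)⟩
  by_contra! h
  exact hρ ⟨fun S => or_iff_not_imp_left.2 (h S)⟩

lemma nontrivial_of_isIrreducible (ρ : Representation k G V) [IsIrreducible ρ] : Nontrivial V := by
  by_contra hV
  rw [not_nontrivial_iff_subsingleton] at hV
  exact bot_ne_top (α := Subrepresentation ρ)
    (Subrepresentation.toSubmodule_injective (Subsingleton.elim _ _))

end Semisimplicity

section FiniteGroup

universe u v w

lemma exists_irreducible_quotient_ne_zero {k : Type u} {G : Type v} {V : Type w} [Field k]
    [Group G] [Finite G] [NeZero (Nat.card G : k)] [AddCommGroup V] [Module k V]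
    [FiniteDimensional k V] (ρ : Representation k G V) {w : V} (hw : w ≠ 0) :
    ∃ (W : Type w) (_ : AddCommGroup W) (_ : Module k W) (_ : FiniteDimensional k W)
      (κ : Representation k G W) (_ : IsIrreducible κ) (p : IntertwiningMap ρ κ), p w ≠ 0 := by
  induction hn : finrank k V using Nat.strong_induction_on generalizing V with
  | _ n ih =>
  subst hn
  by_cases hρ : IsIrreducible ρ
  · exact ⟨V, _, _, inferInstance, ρ, hρ, .id ρ, hw⟩
  suffices ∃ (S : Subrepresentation ρ) (p : IntertwiningMap ρ S.toRepresentation),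
      S ≠ ⊤ ∧ p w ≠ 0 by
    obtain ⟨S, p, hS, hpw⟩ := this
    have hS' : S.toSubmodule < ⊤ :=
      lt_top_iff_ne_top.2 fun h => hS (Subrepresentation.toSubmodule_injective h)
    obtain ⟨W, _, _, _, κ, hκ, q, hq⟩ :=
      ih _ (Submodule.finrank_lt hS'.ne) S.toRepresentation hpw rfl
    exact ⟨W, _, _, inferInstance, κ, hκ, q.comp p, hq⟩
  have : Nontrivial V := ⟨w, 0, hw⟩
  obtain ⟨S, hS0, hS1⟩ := exists_subrepresentation_ne_bot_ne_top hρ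
  obtain ⟨p, hp⟩ := exists_intertwiningMap_eq_self_of_mem S
  by_cases hpw : p w = 0
  · obtain ⟨q, hq⟩ := exists_intertwiningMap_eq_self_of_mem p.ker
    refine ⟨p.ker, q, fun h => hS0 (eq_bot_iff.2 fun s hs => ?_), fun h => hw ?_⟩
    · have hps : p s = 0 := (IntertwiningMap.mem_ker _ _ p s).1 (h ▸ trivial)
      change s = 0
      rw [← hp s hs, hps]
      rfl
    · rw [← hq w ((IntertwiningMap.mem_ker _ _ p w).2 hpw), h]
      rfl
  · exact ⟨S, p, hS1, hpw⟩

lemma isIrreducible_iff_finrank_intertwiningMap_eq_one {k G V : Type*} [Field k] [IsAlgClosed k]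
    [Group G] [Finite G] [NeZero (Nat.card G : k)] [AddCommGroup V] [Module k V]
    [FiniteDimensional k V] (ρ : Representation k G V) :
    IsIrreducible ρ ↔ finrank k (IntertwiningMap ρ ρ) = 1 := by
  refine ⟨fun _ => IsIrreducible.finrank_intertwiningMap_self ρ, fun h => ?_⟩
  have : Nontrivial V := by
    by_contra hV
    rw [not_nontrivial_iff_subsingleton] at hV
    have : Subsingleton (IntertwiningMap ρ ρ) := ⟨fun a b => by ext; exact Subsingleton.elim _ _⟩
    simp [finrank_zero_of_subsingleton] at h
  by_contra hρ
  obtain ⟨S, hS0, hS1⟩ := exists_subrepresentation_ne_bot_ne_top hρ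
  obtain ⟨p, hp⟩ := exists_intertwiningMap_eq_self_of_mem S
  let i : IntertwiningMap S.toRepresentation ρ := ⟨S.toSubmodule.subtype, fun _ => rfl⟩
  have hid : IntertwiningMap.id ρ ≠ 0 := fun h0 => by
    obtain ⟨v, hv⟩ := exists_ne (0 : V)
    exact hv (DFunLike.congr_fun h0 v)
  obtain ⟨c, hc⟩ := (finrank_eq_one_iff_of_nonzero' _ hid).1 h (i.comp p)
  have hcv (v) : c • v = (p v : V) := DFunLike.congr_fun hc v
  by_cases hc0 : c = 0
  · refine hS0 (eq_bot_iff.2 fun s hs => ?_)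
    change s = 0
    rw [← hp s hs, ← hcv, hc0, zero_smul]
  · refine hS1 (eq_top_iff.2 fun v _ => ?_)
    have : c⁻¹ • (p v : V) ∈ S.toSubmodule := S.toSubmodule.smul_mem _ (p v).2
    rwa [← hcv, inv_smul_smul₀ hc0] at this

end FiniteGroup

lemma simple_iff_isIrreducible {G : Type} [Group G] [Finite G] (X : FDRep ℂ G) :
    Simple X ↔ IsIrreducible X.ρ := by
  rw [FDRep.simple_iff_end_is_rank_one, isIrreducible_iff_finrank_intertwiningMap_eq_one,
    ← (FDRep.forget₂HomLinearEquiv X X).finrank_eq, (Rep.homLinearEquiv _ _).finrank_eq]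
  rfl

lemma mem_charDegrees_iff {G : Type} [Group G] [Finite G] {n : ℕ} :
    n ∈ charDegrees G ↔ ∃ (V : Type) (_ : AddCommGroup V) (_ : Module ℂ V)
      (_ : FiniteDimensional ℂ V) (ρ : Representation ℂ G V),
      IsIrreducible ρ ∧ finrank ℂ V = n :=
  ⟨fun ⟨X, hX, hn⟩ => ⟨X, _, _, inferInstance, X.ρ, (simple_iff_isIrreducible X).1 hX, hn⟩,
    fun ⟨_, _, _, _, ρ, hρ, hn⟩ => ⟨FDRep.of ρ, (simple_iff_isIrreducible _).2 hρ, hn⟩⟩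

section Fourier

variable {k G V W : Type*} [Field k] [Group G] [Fintype G] [AddCommGroup V] [Module k V]
  [AddCommGroup W] [Module k W]

/-- The intertwining map `∑ g, τ g ∘ Y ∘ σ g⁻¹` obtained by averaging a linear map `Y`, without
the normalising factor `|G|⁻¹`. -/
def sumConj (σ : Representation k G V) (τ : Representation k G W) (Y : V →ₗ[k] W) :
    IntertwiningMap σ τ where
  toLinearMap := ∑ g, τ g ∘ₗ Y ∘ₗ σ g⁻¹
  isIntertwining' h := by
    ext v
    simp only [LinearMap.comp_apply, LinearMap.sum_apply, map_sum]
    refine Fintype.sum_equiv (Equiv.mulLeft h⁻¹) _ _ fun g => ?_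
    simp [← Module.End.mul_apply, ← map_mul]

lemma sumConj_apply (σ : Representation k G V) (τ : Representation k G W) (Y : V →ₗ[k] W)
    (v : V) : sumConj σ τ Y v = ∑ g, τ g (Y (σ g⁻¹ v)) := by
  change (∑ g, τ g ∘ₗ Y ∘ₗ σ g⁻¹) v = _
  simp

lemma sum_trace_smul_apply [FiniteDimensional k V] (σ : Representation k G V)
    (τ : Representation k G W) (X : End k V) (w : W) :
    ∑ g, LinearMap.trace k V (σ g⁻¹ * X) • τ g w =
      ∑ i, sumConj σ τ (((finBasis k V).coord i).smulRight w) (X (finBasis k V i)) := by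
  simp only [sumConj_apply, LinearMap.smulRight_apply, map_smul]
  rw [Finset.sum_comm]
  refine Finset.sum_congr rfl fun g _ => ?_
  rw [LinearMap.trace_eq_matrix_trace k (finBasis k V), Matrix.trace, Finset.sum_smul]
  simp [LinearMap.toMatrix_apply]

lemma sum_trace_smul_apply_eq_zero [FiniteDimensional k V] {σ : Representation k G V}
    {τ : Representation k G W} [Subsingleton (IntertwiningMap σ τ)] (X : End k V) (w : W) :
    ∑ g, LinearMap.trace k V (σ g⁻¹ * X) • τ g w = 0 := by
  rw [sum_trace_smul_apply]
  exact Finset.sum_eq_zero fun i _ => by rw [Subsingleton.elim (sumConj σ τ _) 0]; rfl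

variable [IsAlgClosed k] [FiniteDimensional k V] (ρ : Representation k G V)
  [IsIrreducible ρ]

lemma finrank_smul_sumConj_self (Y : End k V) (v : V) :
    (finrank k V : k) • sumConj ρ ρ Y v = (Fintype.card G * LinearMap.trace k V Y) • v := by
  obtain ⟨c, hc⟩ :=
    (IsIrreducible.algebraMap_intertwiningMap_bijective_of_isAlgClosed (ρ := ρ)).2 (sumConj ρ ρ Y)
  have hcv (w : V) : sumConj ρ ρ Y w = c • w := by rw [← hc]; rfl
  have htrace : finrank k V * c = Fintype.card G * LinearMap.trace k V Y := by
    have h1 : (sumConj ρ ρ Y).toLinearMap = c • LinearMap.id := LinearMap.ext hcv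
    have h2 (g : G) : LinearMap.trace k V (ρ g ∘ₗ Y ∘ₗ ρ g⁻¹) = LinearMap.trace k V Y := by
      rw [LinearMap.trace_comp_comm', LinearMap.comp_assoc]
      simp [← Module.End.mul_eq_comp, ← map_mul]
    have h3 := congrArg (LinearMap.trace k V) h1
    rw [sumConj, map_sum, Finset.sum_congr rfl fun g _ => h2 g] at h3
    simpa [mul_comm] using h3.symm
  rw [hcv, smul_smul, htrace]

lemma finrank_smul_sum_trace_smul_apply (X : End k V) (v : V) :
    (finrank k V : k) • ∑ g, LinearMap.trace k V (ρ g⁻¹ * X) • ρ g v =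
      (Fintype.card G : k) • X v := by
  simp only [sum_trace_smul_apply, Finset.smul_sum, finrank_smul_sumConj_self,
    LinearMap.trace_smulRight]
  conv_rhs => rw [← (finBasis k V).sum_repr v, map_sum, Finset.smul_sum]
  simp [mul_smul]

end Fourier

section Divisibility

variable {k G V : Type*} [Field k] [Group G] [AddCommGroup V] [Module k V]

lemma isIntegral_trace_of_pow_eq_one [IsAlgClosed k] [FiniteDimensional k V] {f : End k V}
    {n : ℕ} (hn : 0 < n) (hf : f ^ n = 1) : IsIntegral ℤ (LinearMap.trace k V f) := by
  rw [Module.End.trace_eq_sum_roots_charpoly_of_splits (IsAlgClosed.splits _)]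
  refine Multiset.sum_induction (IsIntegral ℤ) _ (fun _ _ => IsIntegral.add) isIntegral_zero
    fun μ hμ => ?_
  obtain ⟨v, hv⟩ := ((Module.End.hasEigenvalue_iff_isRoot_charpoly _ _).2
    (Polynomial.isRoot_of_mem_roots hμ)).exists_hasEigenvector
  have hμv : μ ^ n • v = (1 : k) • v := by
    rw [← hv.pow_apply n, hf, Module.End.one_apply, one_smul]
  exact .of_pow hn (smul_left_injective k hv.2 hμv ▸ isIntegral_one)

lemma sum_eq_card_smul_sum_quotient {A : Type*} [AddCommGroup A] [Fintype G] (Z : Subgroup G)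
    [Fintype (G ⧸ Z)] {f : G → A} (hf : ∀ g, ∀ z ∈ Z, f (g * z) = f g) :
    ∑ g, f g = Nat.card Z • ∑ q : G ⧸ Z, f q.out := by
  classical
  have := Fintype.ofFinite Z
  have hbij : Function.Bijective fun x : (G ⧸ Z) × Z => x.1.out * x.2 := by
    constructor
    · rintro ⟨q, y⟩ ⟨r, z⟩ h
      obtain rfl : q = r := by simpa using congrArg (QuotientGroup.mk (s := Z)) h
      simpa using h
    · exact fun g => ⟨(g, ⟨_, QuotientGroup.eq.1 (QuotientGroup.out_eq' _)⟩),
        mul_inv_cancel_left _ g⟩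
  rw [← hbij.sum_comp f, Fintype.sum_prod_type, Finset.smul_sum]
  simp [hf]

variable [CharZero k]

lemma dvd_of_isIntegral_div {m n : ℕ} (hn : n ≠ 0) (h : IsIntegral ℤ ((m : k) / n)) : n ∣ m := by
  have hQ : IsIntegral ℤ ((m : ℚ) / n) := by
    rw [← isIntegral_algebraMap_iff (algebraMap ℚ k).injective]
    simpa using h
  obtain ⟨c, hc⟩ := IsIntegrallyClosed.isIntegral_iff.1 hQ
  have hmc : (m : ℚ) = n * (c : ℚ) := by
    rw [show (c : ℚ) = (m : ℚ) / n from hc, mul_div_cancel₀ _ (Nat.cast_ne_zero.2 hn)]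
  exact Int.natCast_dvd_natCast.1 ⟨c, mod_cast hmc⟩

variable [IsAlgClosed k] [Finite G] [FiniteDimensional k V] (ρ : Representation k G V)

lemma smul_sum_quotient_trace_smul_apply [IsIrreducible ρ] (Z : Subgroup G) [Fintype (G ⧸ Z)]
    (hZ : ∀ z ∈ Z, ∃ c : k, ρ z = c • 1) (v : V) :
    (finrank k V : k) • ∑ q : G ⧸ Z, ρ.character q.out⁻¹ • ρ q.out v = (Z.index : k) • v := by
  have := Fintype.ofFinite G
  have constant_on_cosets (g : G) (z : G) (hz : z ∈ Z) :
      ρ.character (g * z)⁻¹ • ρ (g * z) v = ρ.character g⁻¹ • ρ g v := by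
    obtain ⟨c, hc⟩ := hZ z hz
    have hcz : c • ρ z⁻¹ = 1 := by
      rw [← mul_one (ρ z⁻¹), ← mul_smul_comm, ← hc, ← map_mul, inv_mul_cancel, map_one]
    have hχ : c • ρ.character (g * z)⁻¹ = ρ.character g⁻¹ := by
      rw [character, character, ← map_smul, mul_inv_rev, map_mul, ← smul_mul_assoc, hcz, one_mul]
    rw [← hχ, map_mul, hc, mul_smul_one, LinearMap.smul_apply, smul_smul, smul_eq_mul, mul_comm]
  have h := finrank_smul_sum_trace_smul_apply ρ 1 v
  simp only [mul_one] at h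
  rw [sum_eq_card_smul_sum_quotient Z constant_on_cosets, ← Nat.card_eq_fintype_card,
    ← Z.card_mul_index, Nat.cast_mul, mul_smul, ← Nat.cast_smul_eq_nsmul k, smul_comm] at h
  exact smul_right_injective V (Nat.cast_ne_zero.2 (Nat.card_pos (α := Z)).ne') h

lemma finrank_dvd_index_of_forall_smul [IsIrreducible ρ] (Z : Subgroup G)
    (hZ : ∀ z ∈ Z, ∃ c : k, ρ z = c • 1) : finrank k V ∣ Z.index := by
  have := Fintype.ofFinite (G ⧸ Z)
  have := nontrivial_of_isIrreducible ρ
  have hV : (finrank k V : k) ≠ 0 := Nat.cast_ne_zero.2 finrank_pos.ne'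
  obtain ⟨v₀, hv₀⟩ := exists_ne (0 : V)
  let O := integralClosure ℤ k
  let L : Submodule O V := Submodule.span O (Set.range fun g => ρ g v₀)
  have hρL (g : G) (v : V) (hv : v ∈ L) : ρ g v ∈ L := by
    refine Submodule.span_le (p := L.comap ((ρ g).restrictScalars O)).2 ?_ hv
    rintro _ ⟨h, rfl⟩
    exact Submodule.subset_span ⟨g * h, by simp⟩
  refine dvd_of_isIntegral_div (k := k) finrank_pos.ne' (isIntegral_trans (A := O) _ ?_)
  refine isIntegral_of_smul_mem_submodule L (fun hL => hv₀ ?_)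
    (Submodule.fg_span (Set.finite_range _)) _ fun v hv => ?_
  · rw [← Submodule.mem_bot O, ← hL]
    exact Submodule.subset_span ⟨1, by simp⟩
  · rw [div_eq_inv_mul, ← smul_smul, ← smul_sum_quotient_trace_smul_apply ρ Z hZ v,
      inv_smul_smul₀ hV]
    have hχ (g : G) : IsIntegral ℤ (ρ.character g) :=
      isIntegral_trace_of_pow_eq_one Nat.card_pos (by rw [← map_pow, pow_card_eq_one', map_one])
    exact L.sum_mem fun q _ => L.smul_mem (⟨_, hχ _⟩ : O) (hρL _ _ hv)

end Divisibility

section Inertia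

variable {k G U : Type*} [Field k] [Group G] [AddCommGroup U] [Module k U]

lemma isIrreducible_of_forall_ne_bot [Nontrivial U] {ρ : Representation k G U}
    (h : ∀ S : Subrepresentation ρ, S ≠ ⊥ → S = ⊤) : IsIrreducible ρ := by
  by_contra hρ
  obtain ⟨S, hS0, hS1⟩ := exists_subrepresentation_ne_bot_ne_top hρ
  exact hS1 (h S hS0)

lemma isIrreducible_comp_of_surjective {H : Type*} [Group H] (ρ : Representation k G U)
    [IsIrreducible ρ] {f : H →* G} (hf : Function.Surjective f) :
    IsIrreducible (ρ.comp f) := by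
  have := nontrivial_of_isIrreducible ρ
  refine isIrreducible_of_forall_ne_bot fun S hS => ?_
  let S' : Subrepresentation ρ := ⟨S.toSubmodule, fun g v hv => by
    obtain ⟨h, rfl⟩ := hf g
    exact S.apply_mem_toSubmodule h hv⟩
  have hS' : S' ≠ ⊥ := fun h => hS (Subrepresentation.toSubmodule_injective
    (congrArg Subrepresentation.toSubmodule h :))
  exact Subrepresentation.toSubmodule_injective
    (congrArg Subrepresentation.toSubmodule ((eq_bot_or_eq_top S').resolve_left hS') :)

lemma exists_eq_smul_id_of_commute [IsAlgClosed k] [FiniteDimensional k U]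
    (ρ : Representation k G U) [IsIrreducible ρ] (f : U →ₗ[k] U)
    (hf : ∀ g u, f (ρ g u) = ρ g (f u)) : ∃ c : k, ∀ u, f u = c • u := by
  let F : IntertwiningMap ρ ρ := ⟨f, fun g => LinearMap.ext (hf g)⟩
  obtain ⟨c, hc⟩ :=
    (IsIrreducible.algebraMap_intertwiningMap_bijective_of_isAlgClosed (ρ := ρ)).2 F
  exact ⟨c, fun u => (DFunLike.congr_fun hc u).symm⟩

variable {N : Subgroup G} [N.Normal]

/-- The twist `n ↦ σ (g n g⁻¹)` of a representation `σ` of a normal subgroup. -/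
abbrev twist (σ : Representation k N U) (g : G) : Representation k N U :=
  σ.comp (MulAut.conjNormal g).toMonoidHom

instance (σ : Representation k N U) [IsIrreducible σ] (g : G) : IsIrreducible (twist σ g) :=
  isIrreducible_comp_of_surjective σ (MulAut.conjNormal g).surjective

/-- A finite group covering the inertia group of `σ`: pairs `(g, A)` where `A` intertwines `σ` with
its twist by `g`. The normalisation `det A = 1` makes it finite, and on it the projective
representations of Clifford theory become linear ones. -/
def inertiaCover (σ : Representation k N U) : Subgroup (G × (U ≃ₗ[k] U)) where
  carrier := {x | LinearEquiv.det x.2 = 1 ∧ ∀ n u, x.2 (σ n u) = twist σ x.1 n (x.2 u)}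
  one_mem' := ⟨map_one _, fun n u => by simp⟩
  mul_mem' {x y} hx hy := ⟨by simp [hx.1, hy.1], fun n u => by
    have := hx.2 (MulAut.conjNormal y.1 n) (y.2 u)
    simp only [MonoidHom.coe_comp, Function.comp_apply, MulEquiv.toMonoidHom_eq_coe,
      MonoidHom.coe_coe, Prod.snd_mul, Prod.fst_mul, LinearEquiv.mul_apply, map_mul,
      MulAut.mul_apply] at this hy ⊢
    rw [hy.2, this]⟩
  inv_mem' {x} hx := ⟨by simp [hx.1], fun n u => by
    have := hx.2 (MulAut.conjNormal x.1⁻¹ n) (x.2⁻¹ u)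
    have h (v : U) : x.2 (x.2⁻¹ v) = v := x.2.apply_symm_apply v
    have h' (v : U) : x.2⁻¹ (x.2 v) = v := x.2.symm_apply_apply v
    simp only [MonoidHom.coe_comp, Function.comp_apply, MulEquiv.toMonoidHom_eq_coe,
      MonoidHom.coe_coe, Prod.snd_inv, Prod.fst_inv, ← MulAut.mul_apply, ← map_mul, mul_inv_cancel,
      map_one, MulAut.one_apply, h] at this ⊢
    rw [← this, h']⟩

/-- The inertia group of `σ`: the stabilizer of its isomorphism class under conjugation. -/
def inertia (σ : Representation k N U) : Subgroup G :=
  (inertiaCover σ).map (MonoidHom.fst _ _)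

variable [IsAlgClosed k] [FiniteDimensional k U]

lemma exists_smul_mem_inertiaCover [Nontrivial U] {σ : Representation k N U} {g : G}
    (A : U ≃ₗ[k] U) (hA : ∀ n u, A (σ n u) = twist σ g n (A u)) :
    ∃ B : U ≃ₗ[k] U, (g, B) ∈ inertiaCover σ ∧ ∃ c : k, c ≠ 0 ∧ ∀ u, B u = c • A u := by
  obtain ⟨c, hc⟩ :=
    IsAlgClosed.exists_pow_nat_eq (LinearEquiv.det A : k)⁻¹ (finrank_pos (R := k) (M := U))
  have hc0 : c ≠ 0 := fun h => (inv_ne_zero (Units.ne_zero _)) (by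
    rw [← hc, h, zero_pow finrank_pos.ne'])
  refine ⟨A.trans (LinearEquiv.smulOfNeZero k U c hc0), ⟨?_, fun n u => ?_⟩, c, hc0, fun u => rfl⟩
  · refine Units.ext ?_
    have h : ((A.trans (LinearEquiv.smulOfNeZero k U c hc0) : U ≃ₗ[k] U) : U →ₗ[k] U) =
      c • (A : U →ₗ[k] U) := rfl
    rw [LinearEquiv.coe_det, h, LinearMap.det_smul, hc, ← LinearEquiv.coe_det,
      inv_mul_cancel₀ (Units.ne_zero _), Units.val_one]
  · change c • A (σ n u) = twist σ g n (c • A u)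
    rw [hA, map_smul]

variable {σ : Representation k N U} [IsIrreducible σ]

lemma exists_mem_inertiaCover_of_ne_zero {g : G} {B : IntertwiningMap σ (twist σ g)} (hB : B ≠ 0) :
    ∃ A, (g, A) ∈ inertiaCover σ ∧ ∃ c : k, c ≠ 0 ∧ ∀ u, A u = c • B u := by
  have := nontrivial_of_isIrreducible σ
  obtain hbij | h0 := IsIrreducible.bijective_or_eq_zero B
  · exact exists_smul_mem_inertiaCover (B.ofBijective hbij).toLinearEquiv fun n u =>
      B.isIntertwining _ _ n u
  · exact absurd h0 hB

lemma mem_inertia_of_ne_zero {g : G} {B : IntertwiningMap σ (twist σ g)} (hB : B ≠ 0) :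
    g ∈ inertia σ := by
  obtain ⟨A, hA, -⟩ := exists_mem_inertiaCover_of_ne_zero hB
  exact ⟨_, hA, rfl⟩

lemma le_inertia : N ≤ inertia σ := by
  intro n hn
  have := nontrivial_of_isIrreducible σ
  refine mem_inertia_of_ne_zero (B := ⟨σ ⟨n, hn⟩, fun m => ?_⟩) fun h => ?_
  · change σ ⟨n, hn⟩ * σ m = σ (MulAut.conjNormal n m) * σ ⟨n, hn⟩
    rw [← map_mul, ← map_mul]
    congr 1
    ext
    simp
  · obtain ⟨u, hu⟩ := exists_ne (0 : U)
    refine hu ?_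
    have h1 : σ ⟨n, hn⟩ u = 0 := DFunLike.congr_fun h u
    simpa using congrArg (σ ⟨n, hn⟩⁻¹) h1

lemma exists_smul_eq_of_mem_inertiaCover {x : G × (U ≃ₗ[k] U)} (hx : x ∈ inertiaCover σ)
    (hN : x.1 ∈ N) : ∃ c : k, ∀ u, x.2 u = c • σ ⟨x.1, hN⟩ u := by
  let n : N := ⟨x.1, hN⟩
  obtain ⟨c, hc⟩ := exists_eq_smul_id_of_commute σ (σ n⁻¹ ∘ₗ x.2) fun m u => by
    have h : twist σ x.1 m = σ (n * m * n⁻¹) := congrArg σ (Subtype.ext (by simp [n]))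
    simp only [LinearMap.comp_apply, LinearEquiv.coe_coe, hx.2, h, map_mul, Module.End.mul_apply]
    simp only [← Module.End.mul_apply, ← map_mul]
    simp
  refine ⟨c, fun u => ?_⟩
  rw [← map_smul, ← hc]
  simp [n]

lemma exists_eq_smul_of_fst_eq_one {x : G × (U ≃ₗ[k] U)} (hx : x ∈ inertiaCover σ)
    (h1 : x.1 = 1) : ∃ c : k, c ^ finrank k U = 1 ∧ ∀ u, x.2 u = c • u := by
  obtain ⟨c, hc⟩ := exists_smul_eq_of_mem_inertiaCover hx (h1 ▸ N.one_mem)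
  have hcu (u : U) : x.2 u = c • u := by
    rw [hc, show (⟨x.1, h1 ▸ N.one_mem⟩ : N) = 1 from Subtype.ext h1, map_one]
    rfl
  refine ⟨c, ?_, hcu⟩
  have hdet := congrArg Units.val hx.1
  rwa [LinearEquiv.coe_det, show (x.2 : U →ₗ[k] U) = c • LinearMap.id from LinearMap.ext hcu,
    LinearMap.det_smul, LinearMap.det_id, mul_one] at hdet

instance [Finite G] : Finite (inertiaCover σ) := by
  have := nontrivial_of_isIrreducible σ
  let f : inertiaCover σ →* G := (MonoidHom.fst _ _).comp (inertiaCover σ).subtype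
  choose c hc hcu using fun x : f.ker => exists_eq_smul_of_fst_eq_one x.1.2 x.2
  have : Finite f.ker := by
    let root (x : f.ker) : Polynomial.nthRootsFinset (finrank k U) (1 : k) :=
      ⟨c x, (Polynomial.mem_nthRootsFinset finrank_pos 1).2 (hc x)⟩
    refine Finite.of_injective root fun x y hxy => ?_
    have hx : x.1.1.1 = 1 := x.2
    have hy : y.1.1.1 = 1 := y.2
    refine Subtype.ext (Subtype.ext (Prod.ext (hx.trans hy.symm) (LinearEquiv.ext fun u => ?_)))
    rw [hcu, hcu, show c x = c y from congrArg Subtype.val hxy]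
  have : Finite (inertiaCover σ ⧸ f.ker) :=
    .of_equiv _ (QuotientGroup.quotientKerEquivRange f).symm.toEquiv
  exact Finite.of_subgroup_quotient f.ker

end Inertia

section Multiplicity

variable {k G U V : Type*} [Field k] [Group G] [AddCommGroup U] [Module k U] [AddCommGroup V]
  [Module k V] {N : Subgroup G}

/-- The restriction of a representation to a subgroup. -/
abbrev res (N : Subgroup G) (ρ : Representation k G V) : Representation k N V := ρ.comp N.subtype

/-- The multiplicity space of `σ` in the restriction of `ρ`; its dimension is the multiplicity of
`σ` when `σ` is irreducible over an algebraically closed field of characteristic zero. -/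
abbrev MulSpace (σ : Representation k N U) (ρ : Representation k G V) : Type _ :=
  IntertwiningMap σ (res N ρ)

lemma mulSpace_apply {σ : Representation k N U} {ρ : Representation k G V} (φ : MulSpace σ ρ)
    (n : N) (u : U) : φ (σ n u) = ρ n (φ u) :=
  φ.isIntertwining _ _ n u

lemma injective_of_ne_zero {σ : Representation k N U} [IsIrreducible σ] {ρ : Representation k G V}
    {φ : MulSpace σ ρ} (hφ : φ ≠ 0) : Function.Injective φ :=
  (IsIrreducible.injective_or_eq_zero φ).resolve_right hφ

variable [N.Normal]

lemma inv_apply_conjNormal {σ : Representation k N U} {x : G × (U ≃ₗ[k] U)}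
    (hx : x ∈ inertiaCover σ) (n : N) (u : U) :
    x.2⁻¹ (twist σ x.1 n u) = σ n (x.2⁻¹ u) := by
  refine x.2.injective ?_
  rw [hx.2]
  change x.2 (x.2.symm _) = twist σ x.1 n (x.2 (x.2.symm u))
  rw [x.2.apply_symm_apply, x.2.apply_symm_apply]

/-- The action of the inertia cover on the multiplicity space, `(g, A) • φ = ρ g ∘ φ ∘ A⁻¹`. -/
def coverRep (σ : Representation k N U) (ρ : Representation k G V) :
    Representation k (inertiaCover σ) (MulSpace σ ρ) where
  toFun x :=
    { toFun φ := ⟨ρ x.1.1 ∘ₗ φ.toLinearMap ∘ₗ (x.1.2⁻¹ : U ≃ₗ[k] U), fun n => by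
        ext u
        obtain ⟨m, rfl⟩ := (MulAut.conjNormal x.1.1).surjective n
        change ρ x.1.1 (φ (x.1.2⁻¹ (twist σ x.1.1 m u))) =
          ρ (MulAut.conjNormal x.1.1 m) (ρ x.1.1 (φ (x.1.2⁻¹ u)))
        rw [inv_apply_conjNormal x.2, mulSpace_apply]
        simp [← Module.End.mul_apply, ← map_mul]⟩
      map_add' φ ψ := DFunLike.ext _ _ fun u => map_add (ρ x.1.1) _ _
      map_smul' c φ := DFunLike.ext _ _ fun u => map_smul (ρ x.1.1) c _ }
  map_one' := by ext φ u; simp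
  map_mul' x y := by ext φ u; simp

lemma coverRep_apply (σ : Representation k N U) (ρ : Representation k G V) (x : inertiaCover σ)
    (φ : MulSpace σ ρ) (u : U) : coverRep σ ρ x φ u = ρ x.1.1 (φ (x.1.2⁻¹ u)) := rfl

variable [IsAlgClosed k] [FiniteDimensional k U] {σ : Representation k N U} [IsIrreducible σ]

lemma exists_coverRep_eq_smul_one (ρ : Representation k G V) {x : inertiaCover σ}
    (hx : x.1.1 ∈ N) : ∃ c : k, coverRep σ ρ x = c • 1 := by
  obtain ⟨c, hc⟩ := exists_smul_eq_of_mem_inertiaCover x⁻¹.2 (N.inv_mem hx)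
  refine ⟨c, LinearMap.ext fun φ => DFunLike.ext _ _ fun u => ?_⟩
  rw [coverRep_apply, show x.1.2⁻¹ u = _ from hc u]
  change ρ x.1.1 (φ (c • σ ⟨x.1.1⁻¹, N.inv_mem hx⟩ u)) = c • φ u
  rw [map_smul, mulSpace_apply, map_smul]
  simp [← Module.End.mul_apply, ← map_mul]

lemma sumConj_comp_mem [Fintype N] {ρ : Representation k G V} (g : G) {φ : MulSpace σ ρ}
    {S : Subrepresentation (coverRep σ ρ)} (hφ : φ ∈ S) :
    sumConj σ (res N ρ) (ρ g ∘ₗ φ.toLinearMap) ∈ S := by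
  let B : IntertwiningMap σ (twist σ g⁻¹) := sumConj σ (twist σ g⁻¹) 1
  have hB (u : U) : sumConj σ (res N ρ) (ρ g ∘ₗ φ.toLinearMap) u = ρ g (φ (B u)) := by
    rw [sumConj_apply, sumConj_apply, map_sum, map_sum]
    refine Finset.sum_congr rfl fun n _ => ?_
    change ρ n (ρ g (φ (σ n⁻¹ u))) = ρ g (φ (σ (MulAut.conjNormal g⁻¹ n) (σ n⁻¹ u)))
    rw [mulSpace_apply φ (MulAut.conjNormal g⁻¹ n)]
    simp [← Module.End.mul_apply, ← map_mul, mul_assoc]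
  by_cases h0 : B = 0
  · have h : sumConj σ (res N ρ) (ρ g ∘ₗ φ.toLinearMap) = 0 := DFunLike.ext _ _ fun u => by
      rw [hB, h0]
      simp
    exact h ▸ S.toSubmodule.zero_mem
  · obtain ⟨A, hA, c, hc, hAc⟩ := exists_mem_inertiaCover_of_ne_zero h0
    have h : sumConj σ (res N ρ) (ρ g ∘ₗ φ.toLinearMap) = c⁻¹ • coverRep σ ρ ⟨_, hA⟩⁻¹ φ :=
      DFunLike.ext _ _ fun u => by
        have hcover : coverRep σ ρ ⟨_, hA⟩⁻¹ φ u = ρ g (φ (A u)) := by simp [coverRep_apply]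
        change _ = c⁻¹ • coverRep σ ρ ⟨_, hA⟩⁻¹ φ u
        rw [hB, hcover, hAc, map_smul, map_smul, inv_smul_smul₀ hc]
    exact h ▸ S.toSubmodule.smul_mem _ (S.apply_mem_toSubmodule _ hφ)

variable [CharZero k] [Finite G] [FiniteDimensional k V]

lemma isIrreducible_coverRep (ρ : Representation k G V) [IsIrreducible ρ]
    [Nontrivial (MulSpace σ ρ)] : IsIrreducible (coverRep σ ρ) := by
  have := Fintype.ofFinite G
  have := Fintype.ofFinite N
  refine isIrreducible_of_forall_ne_bot fun S hS => ?_
  obtain ⟨φ, hφS, hφ⟩ := Submodule.exists_mem_ne_zero_of_ne_bot fun h =>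
    hS (Subrepresentation.toSubmodule_injective h)
  obtain ⟨ℓ, hℓ⟩ := φ.toLinearMap.exists_leftInverse_of_injective
    (LinearMap.ker_eq_bot.2 (injective_of_ne_zero hφ))
  refine eq_top_iff.2 fun ψ _ => ?_
  let X : End k V := ψ.toLinearMap ∘ₗ ℓ
  have hX (u : U) : X (φ u) = ψ u := congrArg ψ (LinearMap.congr_fun hℓ u)
  have average : ((Fintype.card N : k) * Fintype.card G) • ψ =
      ∑ g, ((finrank k V : k) * LinearMap.trace k V (ρ g⁻¹ * X)) •
        sumConj σ (res N ρ) (ρ g ∘ₗ φ.toLinearMap) := DFunLike.ext _ _ fun u => by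
    have fourier (n : N) := finrank_smul_sum_trace_smul_apply ρ X (φ (σ n⁻¹ u))
    have hψ (n : N) : ρ n (ψ (σ n⁻¹ u)) = ψ u := by
      rw [← mulSpace_apply]
      simp [← Module.End.mul_apply, ← map_mul]
    calc _ = ∑ _ : N, (Fintype.card G : k) • ψ u := by simp [mul_smul, Nat.cast_smul_eq_nsmul]
      _ = ∑ n : N, ρ n ((Fintype.card G : k) • X (φ (σ n⁻¹ u))) := by simp [hX, hψ]
      _ = ∑ n : N, ∑ g, ((finrank k V : k) * LinearMap.trace k V (ρ g⁻¹ * X)) •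
          ρ n (ρ g (φ (σ n⁻¹ u))) := by simp [← fourier, Finset.smul_sum, mul_smul]
      _ = _ := by
        rw [Finset.sum_comm]
        simp only [← Finset.smul_sum, IntertwiningMap.sum_apply, IntertwiningMap.smul_apply]
        simp [sumConj_apply]
  have hcard : (Fintype.card N : k) * Fintype.card G ≠ 0 := by simp
  rw [← inv_smul_smul₀ hcard ψ, average]
  exact S.toSubmodule.smul_mem _ (S.toSubmodule.sum_mem fun g _ =>
    S.toSubmodule.smul_mem _ (sumConj_comp_mem g hφS))

lemma finrank_mulSpace_mul_index_inertia_dvd (ρ : Representation k G V) [IsIrreducible ρ]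
    [Nontrivial (MulSpace σ ρ)] : finrank k (MulSpace σ ρ) * (inertia σ).index ∣ N.index := by
  have := isIrreducible_coverRep (σ := σ) ρ
  let f : inertiaCover σ →* G := (MonoidHom.fst _ _).comp (inertiaCover σ).subtype
  have hf : f.range = inertia σ := by
    rw [MonoidHom.range_comp, Subgroup.range_subtype]
    rfl
  have h := finrank_dvd_index_of_forall_smul (coverRep σ ρ) (N.comap f)
    fun x hx => exists_coverRep_eq_smul_one ρ hx
  rw [Subgroup.index_comap, hf] at h
  rw [← Subgroup.relIndex_mul_index (le_inertia (σ := σ))]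
  exact Nat.mul_dvd_mul_right h _

end Multiplicity

section DegreeFormula

variable {k G U V : Type*} [Field k] [Group G] [AddCommGroup U] [Module k U] [AddCommGroup V]
  [Module k V] {N : Subgroup G}

/-- The operator `∑ n ∈ N, tr (σ n⁻¹) • ρ n`, which for irreducible `σ` is a multiple of the
projection onto the `σ`-isotypic part of `ρ`. -/
noncomputable def isotypicSum [Fintype N] (σ : Representation k N U) (ρ : Representation k G V) :
    End k V :=
  ∑ n : N, LinearMap.trace k U (σ n⁻¹) • ρ n

lemma trace_isotypicSum [Fintype N] [CharZero k] [FiniteDimensional k U] [FiniteDimensional k V]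
    (σ : Representation k N U) (ρ : Representation k G V) :
    LinearMap.trace k V (isotypicSum σ ρ) = Fintype.card N * finrank k (MulSpace σ ρ) := by
  have hN : (Nat.card N : k) ≠ 0 := Nat.cast_ne_zero.2 Nat.card_pos.ne'
  have : Invertible (Nat.card N : k) := invertibleOfNonzero hN
  have h := card_inv_mul_sum_char_mul_char_eq_finrank σ (res N ρ)
  rw [inv_mul_eq_iff_eq_mul₀ hN, Nat.card_eq_fintype_card] at h
  rw [← h, isotypicSum, map_sum]
  exact Finset.sum_congr rfl fun n _ => by rw [map_smul, smul_eq_mul, mul_comm]; rfl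

variable [N.Normal]

lemma conj_isotypicSum_apply [Fintype N] {σ : Representation k N U} {ρ : Representation k G V}
    (g : G) (φ : MulSpace σ ρ) (u : U) : ρ g (isotypicSum σ ρ (ρ g⁻¹ (φ u))) =
      φ (∑ n : N, LinearMap.trace k U (σ n⁻¹) • twist σ g n u) := by
  have h (n : N) : φ (twist σ g n u) = ρ g (ρ n (ρ g⁻¹ (φ u))) := by
    rw [show φ (twist σ g n u) = _ from mulSpace_apply φ (MulAut.conjNormal g n) u]
    simp [← Module.End.mul_apply, ← map_mul, mul_assoc]
  simp only [isotypicSum, LinearMap.sum_apply, LinearMap.smul_apply, map_sum, map_smul, h]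

variable [IsAlgClosed k] [FiniteDimensional k U] {σ : Representation k N U} [IsIrreducible σ]
  {ρ : Representation k G V}

lemma smul_conj_isotypicSum_apply_of_mem [Fintype N] {g : G} (hg : g ∈ inertia σ)
    (φ : MulSpace σ ρ) (u : U) :
    (finrank k U : k) • ρ g (isotypicSum σ ρ (ρ g⁻¹ (φ u))) = (Fintype.card N : k) • φ u := by
  obtain ⟨⟨g, A⟩, hA, rfl⟩ := hg
  have h (n : N) : twist σ g n u = A (σ n (A.symm u)) := by rw [hA.2, A.apply_symm_apply]
  have fourier := finrank_smul_sum_trace_smul_apply σ 1 (A.symm u)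
  simp only [mul_one, Module.End.one_apply] at fourier
  simp only [conj_isotypicSum_apply, MonoidHom.coe_fst, h]
  rw [← map_smul φ, ← map_smul φ]
  congr 1
  simp only [← map_smul A, ← map_sum A, fourier]
  rw [map_smul, A.apply_symm_apply]

lemma conj_isotypicSum_apply_of_notMem [Fintype N] {g : G} (hg : g ∉ inertia σ)
    (φ : MulSpace σ ρ) (u : U) :
    ρ g (isotypicSum σ ρ (ρ g⁻¹ (φ u))) = 0 := by
  have : Subsingleton (IntertwiningMap σ (twist σ g)) :=
    subsingleton_of_forall_eq 0 fun B => by_contra fun hB => hg (mem_inertia_of_ne_zero hB)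
  have h := sum_trace_smul_apply_eq_zero (σ := σ) (τ := twist σ g) 1 u
  simp only [mul_one] at h
  rw [conj_isotypicSum_apply, h, map_zero]

theorem finrank_eq_index_inertia_mul [CharZero k] [Finite G] [FiniteDimensional k V]
    [IsIrreducible ρ] [Nontrivial (MulSpace σ ρ)] :
    finrank k V = (inertia σ).index * finrank k (MulSpace σ ρ) * finrank k U := by
  classical
  have := Fintype.ofFinite G
  have := Fintype.ofFinite N
  have := nontrivial_of_isIrreducible σ
  obtain ⟨φ, hφ⟩ := exists_ne (0 : MulSpace σ ρ)
  obtain ⟨u, hu⟩ := exists_ne (0 : U)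
  have hφu : φ u ≠ 0 := fun h => hu (injective_of_ne_zero hφ (h.trans (map_zero φ).symm))
  have sum_conj : (finrank k U : k) • sumConj ρ ρ (isotypicSum σ ρ) (φ u) =
      (Nat.card (inertia σ) * Fintype.card N : k) • φ u := by
    have h (g : G) : (finrank k U : k) • ρ g (isotypicSum σ ρ (ρ g⁻¹ (φ u))) =
        if g ∈ inertia σ then (Fintype.card N : k) • φ u else 0 := by
      split_ifs with hg
      · exact smul_conj_isotypicSum_apply_of_mem hg φ u
      · rw [conj_isotypicSum_apply_of_notMem hg, smul_zero]
    rw [sumConj_apply, Finset.smul_sum, Finset.sum_congr rfl fun g _ => h g, ← Finset.sum_filter,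
      Finset.sum_const, ← Fintype.card_subtype, ← Nat.card_eq_fintype_card, mul_smul]
    simp only [Nat.cast_smul_eq_nsmul]
  have schur := finrank_smul_sumConj_self ρ (isotypicSum σ ρ) (φ u)
  have key : (finrank k V * (Nat.card (inertia σ) * Fintype.card N) : k) =
      finrank k U * (Fintype.card G * (Fintype.card N * finrank k (MulSpace σ ρ))) := by
    refine smul_left_injective k hφu (?_ : _ • _ = _ • _)
    rw [mul_smul, ← sum_conj, smul_comm, schur, ← trace_isotypicSum, smul_smul]
  norm_cast at key
  rw [← Nat.card_eq_fintype_card (α := G), ← (inertia σ).card_mul_index] at key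
  refine Nat.eq_of_mul_eq_mul_right
    (Nat.mul_pos (Nat.card_pos (α := inertia σ)) (Fintype.card_pos (α := N))) ?_
  rw [key]
  ring

end DegreeFormula

section ResMap

variable {k G U V W : Type*} [Field k] [Group G] [AddCommGroup U] [Module k U] [AddCommGroup V]
  [Module k V] [AddCommGroup W] [Module k W] {N : Subgroup G} {ρ : Representation k G V}
  {κ : Representation k G W}

/-- The restriction of an intertwining map to a subgroup. -/
abbrev resMap (N : Subgroup G) (p : IntertwiningMap ρ κ) : IntertwiningMap (res N ρ) (res N κ) :=
  ⟨p.toLinearMap, fun n => p.isIntertwining' n⟩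

lemma resMap_comp_coverRep_apply [N.Normal] {σ : Representation k N U} (p : IntertwiningMap ρ κ)
    (x : inertiaCover σ) (φ : MulSpace σ ρ) :
    (resMap N p).comp (coverRep σ ρ x φ) = coverRep σ κ x ((resMap N p).comp φ) :=
  DFunLike.ext _ _ fun _ => p.isIntertwining _ _ _ _

end ResMap

section RegularRepresentation

variable {k G U : Type*} [Field k] [Group G] [AddCommGroup U] [Module k U] {N : Subgroup G}
  [Fintype N]

/-- The map `u ↦ ∑ n ∈ N, ℓ (σ n⁻¹ u) • n` into the regular representation of `G`. -/
noncomputable def regularMap (σ : Representation k N U) (ℓ : Dual k U) :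
    MulSpace σ (leftRegular k G) :=
  sumConj σ (res N (leftRegular k G)) (ℓ.smulRight (MonoidAlgebra.single 1 1))

lemma regularMap_apply (σ : Representation k N U) (ℓ : Dual k U) (u : U) :
    regularMap σ ℓ u = ∑ n : N, MonoidAlgebra.single (n : G) (ℓ (σ n⁻¹ u)) := by
  simp [regularMap, sumConj_apply, MonoidAlgebra.smul_single]

lemma coeff_regularMap_apply_one (σ : Representation k N U) (ℓ : Dual k U) (u : U) :
    (regularMap σ ℓ u).coeff 1 = ℓ u := by
  classical
  rw [regularMap_apply, MonoidAlgebra.coeff_sum, Finsupp.finsetSum_apply,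
    Finset.sum_eq_single 1]
  · simp
  · intro n _ hn
    simpa [Finsupp.single_apply] using fun h => absurd h hn
  · simp

lemma coeff_regularMap_apply_of_notMem (σ : Representation k N U) (ℓ : Dual k U) (u : U)
    {g : G} (hg : g ∉ N) : (regularMap σ ℓ u).coeff g = 0 := by
  rw [regularMap_apply, MonoidAlgebra.coeff_sum, Finsupp.finsetSum_apply]
  refine Finset.sum_eq_zero fun n _ => Finsupp.single_eq_of_ne ?_
  rintro rfl
  exact hg n.2

end RegularRepresentation

section

universe u v

variable {k G : Type u} {U : Type v} [Field k] [CharZero k] [Group G] [Finite G] [AddCommGroup U]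
  [Module k U] {N : Subgroup G}

lemma exists_irreducible_nontrivial_mulSpace (σ : Representation k N U) [Nontrivial U] :
    ∃ (W : Type u) (_ : AddCommGroup W) (_ : Module k W) (_ : FiniteDimensional k W)
      (κ : Representation k G W) (_ : IsIrreducible κ), Nontrivial (MulSpace σ κ) := by
  have := Fintype.ofFinite N
  have : NeZero (Nat.card G : k) := ⟨Nat.cast_ne_zero.2 Nat.card_pos.ne'⟩
  obtain ⟨u, hu⟩ := exists_ne (0 : U)
  obtain ⟨ℓ, hℓ⟩ : ∃ ℓ : Dual k U, ℓ u ≠ 0 := by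
    simpa using mt (forall_dual_apply_eq_zero_iff k u).1 hu
  have hreg : regularMap σ ℓ u ≠ 0 := fun h =>
    hℓ (by rw [← coeff_regularMap_apply_one σ ℓ u, h]; rfl)
  obtain ⟨W, _, _, _, κ, hκ, p, hp⟩ := exists_irreducible_quotient_ne_zero (leftRegular k G) hreg
  exact ⟨W, _, _, ‹_›, κ, hκ, (resMap N p).comp (regularMap σ ℓ), 0,
    fun h => hp (DFunLike.congr_fun h u)⟩

lemma commute_of_finrank_le_one {k V : Type*} [Field k] [AddCommGroup V] [Module k V]
    [FiniteDimensional k V] (hV : finrank k V ≤ 1) (f g : End k V) : Commute f g := by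
  obtain ⟨v, hv⟩ := finrank_le_one_iff.1 hV
  obtain ⟨a, ha⟩ := hv (f v)
  obtain ⟨b, hb⟩ := hv (g v)
  refine LinearMap.ext fun w => ?_
  obtain ⟨c, rfl⟩ := hv w
  simp [← ha, ← hb, smul_comm a b]

variable [N.Normal] {σ : Representation k N U}

open scoped commutatorElement in
lemma coverRep_commutator_eq_one [FiniteDimensional k U]
    (h : ∀ (W : Type u) [AddCommGroup W] [Module k W] [FiniteDimensional k W]
      (κ : Representation k G W), IsIrreducible κ → finrank k (MulSpace σ κ) ≤ 1)
    {V : Type u} [AddCommGroup V] [Module k V] [FiniteDimensional k V]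
    (ρ : Representation k G V) (x y : inertiaCover σ) : coverRep σ ρ ⁅x, y⁆ = 1 := by
  have : NeZero (Nat.card G : k) := ⟨Nat.cast_ne_zero.2 Nat.card_pos.ne'⟩
  refine LinearMap.ext fun φ => DFunLike.ext _ _ fun u => ?_
  by_contra hne
  obtain ⟨W, _, _, _, κ, hκ, p, hp⟩ := exists_irreducible_quotient_ne_zero ρ (sub_ne_zero.2 hne)
  have hκ1 := h W κ hκ
  have hcomm : coverRep σ κ ⁅x, y⁆ = 1 := by
    rw [commutatorElement_def, map_mul, map_mul, map_mul,
      (commute_of_finrank_le_one hκ1 (coverRep σ κ x) (coverRep σ κ y)).eq,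
      ← map_mul, ← map_mul, ← map_mul, mul_inv_cancel_right, mul_inv_cancel, map_one]
  have hpφ := resMap_comp_coverRep_apply p ⁅x, y⁆ φ
  rw [hcomm] at hpφ
  refine hp ?_
  rw [map_sub, sub_eq_zero]
  exact DFunLike.congr_fun hpφ u

open scoped commutatorElement in
theorem commutator_mem_of_forall_finrank_mulSpace_le_one [FiniteDimensional k U]
    [Nontrivial U]
    (h : ∀ (W : Type u) [AddCommGroup W] [Module k W] [FiniteDimensional k W]
      (κ : Representation k G W), IsIrreducible κ → finrank k (MulSpace σ κ) ≤ 1)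
    {x y : G} (hx : x ∈ inertia σ) (hy : y ∈ inertia σ) : ⁅x, y⁆ ∈ N := by
  have := Fintype.ofFinite N
  obtain ⟨x, hx', rfl⟩ := hx
  obtain ⟨y, hy', rfl⟩ := hy
  let x' : inertiaCover σ := ⟨x, hx'⟩
  let y' : inertiaCover σ := ⟨y, hy'⟩
  let c : inertiaCover σ := ⁅x', y'⁆
  change c.1.1 ∈ N
  by_contra hcN
  obtain ⟨u, hu⟩ := exists_ne (0 : U)
  obtain ⟨ℓ, hℓ⟩ : ∃ ℓ : Dual k U, ℓ (c.1.2⁻¹ u) ≠ 0 := by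
    simpa using mt (forall_dual_apply_eq_zero_iff k (c.1.2⁻¹ u)).1 (by simpa using hu)
  have hφ : coverRep σ (leftRegular k G) c (regularMap σ ℓ) = regularMap σ ℓ := by
    rw [coverRep_commutator_eq_one h, Module.End.one_apply]
  have hzero := coeff_regularMap_apply_of_notMem σ ℓ u hcN
  rw [← hφ, coverRep_apply, coeff_ofMulAction, smul_eq_mul, inv_mul_cancel,
    coeff_regularMap_apply_one] at hzero
  exact hℓ hzero

end

section Tensor

open scoped TensorProduct

lemma tmul_ne_zero {k V X : Type*} [Field k] [AddCommGroup V] [Module k V] [AddCommGroup X]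
    [Module k X] {v : V} {x : X} (hv : v ≠ 0) (hx : x ≠ 0) : v ⊗ₜ[k] x ≠ 0 := by
  obtain ⟨f, hf⟩ : ∃ f : Dual k V, f v ≠ 0 := by
    simpa using mt (forall_dual_apply_eq_zero_iff k v).1 hv
  obtain ⟨g, hg⟩ : ∃ g : Dual k X, g x ≠ 0 := by
    simpa using mt (forall_dual_apply_eq_zero_iff k x).1 hx
  intro h
  have := congrArg (TensorProduct.dualDistrib k V X (f ⊗ₜ g)) h
  rw [TensorProduct.dualDistrib_apply, map_zero] at this
  exact mul_ne_zero hf hg this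

variable {k G U V W X : Type*} [Field k] [Group G] [AddCommGroup U] [Module k U] [AddCommGroup V]
  [Module k V] [AddCommGroup W] [Module k W] [AddCommGroup X] [Module k X] {N : Subgroup G}
  {ρ : Representation k G V} {κ : Representation k G W}
  {χ : Representation k G X}

/-- An intertwining map `p : ρ ⊗ χ → κ` with `χ` trivial on `N` yields for every vector `x` of `χ`
the `N`-intertwining map `p (· ⊗ x)` from `ρ` to `κ`, hence a map of multiplicity spaces. -/
noncomputable def mulSpaceTensor (σ : Representation k N U) (hχ : ∀ n ∈ N, χ n = 1)
    (p : IntertwiningMap (ρ.tprod χ) κ) :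
    X →ₗ[k] MulSpace σ ρ →ₗ[k] MulSpace σ κ :=
  LinearMap.mk₂ k
    (fun x φ => ⟨p.toLinearMap ∘ₗ (TensorProduct.mk k V X).flip x ∘ₗ φ.toLinearMap, fun n => by
      ext u
      have h := p.isIntertwining _ _ n (φ u ⊗ₜ x)
      rw [Representation.tprod_apply, TensorProduct.map_tmul, hχ n n.2] at h
      rw [← mulSpace_apply φ] at h
      exact h⟩)
    (fun x y φ => DFunLike.ext _ _ fun u => by
      change p (φ u ⊗ₜ (x + y)) = p (φ u ⊗ₜ x) + p (φ u ⊗ₜ y)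
      rw [TensorProduct.tmul_add, map_add])
    (fun c x φ => DFunLike.ext _ _ fun u => by
      change p (φ u ⊗ₜ (c • x)) = c • p (φ u ⊗ₜ x)
      rw [TensorProduct.tmul_smul, map_smul])
    (fun x φ ψ => DFunLike.ext _ _ fun u => by
      change p ((φ u + ψ u) ⊗ₜ x) = p (φ u ⊗ₜ x) + p (ψ u ⊗ₜ x)
      rw [TensorProduct.add_tmul, map_add])
    (fun c x φ => DFunLike.ext _ _ fun u => by
      change p ((c • φ u) ⊗ₜ x) = c • p (φ u ⊗ₜ x)
      rw [← TensorProduct.smul_tmul', map_smul])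

lemma mulSpaceTensor_apply (σ : Representation k N U) (hχ : ∀ n ∈ N, χ n = 1)
    (p : IntertwiningMap (ρ.tprod χ) κ) (x : X) (φ : MulSpace σ ρ) (u : U) :
    mulSpaceTensor σ hχ p x φ u = p (φ u ⊗ₜ x) := rfl

variable [N.Normal] {σ : Representation k N U}

lemma mulSpaceTensor_injective [IsIrreducible χ] (hσ : inertia σ = ⊤) (hχ : ∀ n ∈ N, χ n = 1)
    (p : IntertwiningMap (ρ.tprod χ) κ) (hp : mulSpaceTensor σ hχ p ≠ 0) :
    Function.Injective (mulSpaceTensor σ hχ p) := by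
  let S : Subrepresentation χ := ⟨LinearMap.ker (mulSpaceTensor σ hχ p), fun g x hx => by
    refine LinearMap.ext fun φ => DFunLike.ext _ _ fun u => ?_
    obtain ⟨A, hA, rfl⟩ : g ∈ inertia σ := hσ ▸ Subgroup.mem_top g
    let φ' := coverRep σ ρ ⟨A, hA⟩⁻¹ φ
    have hφ' : φ u = ρ A.1 (φ' (A.2⁻¹ u)) := by
      simp [φ', coverRep_apply, ← Module.End.mul_apply, ← map_mul]
    have hzero : p (φ' (A.2⁻¹ u) ⊗ₜ x) = 0 := by
      rw [← mulSpaceTensor_apply σ hχ p, LinearMap.mem_ker.1 hx]; rfl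
    have h := p.isIntertwining _ _ A.1 (φ' (A.2⁻¹ u) ⊗ₜ x)
    rw [Representation.tprod_apply, TensorProduct.map_tmul, ← hφ', hzero, map_zero] at h
    exact h⟩
  have hS : S ≠ ⊤ := fun h => hp (LinearMap.ker_eq_top.1 (congrArg Subrepresentation.toSubmodule h))
  exact LinearMap.ker_eq_bot.1
    (congrArg Subrepresentation.toSubmodule ((eq_bot_or_eq_top S).resolve_right hS))

end Tensor

section

open scoped TensorProduct

universe v w

variable {k G U : Type*} {V : Type v} {X : Type w} [Field k] [CharZero k] [Group G]
  [Finite G] [AddCommGroup U] [Module k U] [FiniteDimensional k U] [AddCommGroup V]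
  [Module k V] [FiniteDimensional k V] [AddCommGroup X] [Module k X] [FiniteDimensional k X]
  {N : Subgroup G} [N.Normal] {σ : Representation k N U}

theorem exists_irreducible_finrank_le_mul (hσ : inertia σ = ⊤) (ρ : Representation k G V)
    [Nontrivial (MulSpace σ ρ)] (χ : Representation k G X) [IsIrreducible χ]
    (hχ : ∀ n ∈ N, χ n = 1) :
    ∃ (W : Type max v w) (_ : AddCommGroup W) (_ : Module k W) (_ : FiniteDimensional k W)
      (κ : Representation k G W) (_ : IsIrreducible κ) (_ : Nontrivial (MulSpace σ κ)),
      finrank k X ≤ finrank k (MulSpace σ ρ) * finrank k (MulSpace σ κ) ∧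
      finrank k W ≤ finrank k V * finrank k X := by
  have : NeZero (Nat.card G : k) := ⟨Nat.cast_ne_zero.2 Nat.card_pos.ne'⟩
  have := nontrivial_of_isIrreducible χ
  obtain ⟨φ, hφ⟩ := exists_ne (0 : MulSpace σ ρ)
  obtain ⟨u, hu⟩ : ∃ u, φ u ≠ 0 := DFunLike.ne_iff.1 hφ
  obtain ⟨x, hx⟩ := exists_ne (0 : X)
  obtain ⟨W, _, _, _, κ, hκ, p, hp⟩ :=
    exists_irreducible_quotient_ne_zero (ρ.tprod χ) (tmul_ne_zero hu hx)
  have hpφ : mulSpaceTensor σ hχ p x φ ≠ 0 := fun h => hp (DFunLike.congr_fun h u)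
  have hinj := mulSpaceTensor_injective hσ hχ p fun h => hpφ (by rw [h]; rfl)
  refine ⟨W, _, _, ‹_›, κ, hκ, ⟨_, 0, hpφ⟩, ?_, ?_⟩
  · simpa only [finrank_linearMap] using LinearMap.finrank_le_finrank_of_injective hinj
  · have hsurj : Function.Surjective p := (IsIrreducible.surjective_or_eq_zero p).resolve_right
      fun h => hp (by rw [h]; rfl)
    simpa only [finrank_tensorProduct] using
      LinearMap.finrank_le_finrank_of_surjective (f := p.toLinearMap) hsurj

end

lemma inertia_res_eq_top {k G U : Type*} [Field k] [IsAlgClosed k] [Group G] [AddCommGroup U]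
    [Module k U] [FiniteDimensional k U] [Nontrivial U] {N : Subgroup G} [N.Normal]
    (τ : Representation k G U) : inertia (res N τ) = ⊤ := by
  refine eq_top_iff.2 fun g _ => ?_
  let A : U ≃ₗ[k] U :=
    .ofLinearMap (τ g) (τ g⁻¹) (by ext; simp [← Module.End.mul_apply, ← map_mul])
      (by ext; simp [← Module.End.mul_apply, ← map_mul])
  obtain ⟨B, hB, -⟩ := exists_smul_mem_inertiaCover (σ := res N τ) (g := g) A fun n u => by
    change τ g (τ n u) = τ (MulAut.conjNormal g n) (τ g u)
    simp [← Module.End.mul_apply, ← map_mul]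
  exact ⟨_, hB, rfl⟩

section

universe v w

variable {k G : Type*} {U : Type v} {X : Type w} [Field k] [CharZero k] [IsAlgClosed k] [Group G]
  [Finite G] [AddCommGroup U] [Module k U] [FiniteDimensional k U] [AddCommGroup X] [Module k X]
  [FiniteDimensional k X] {N : Subgroup G} [N.Normal]

theorem exists_irreducible_finrank_eq_mul (τ : Representation k G U) [IsIrreducible (res N τ)]
    (χ : Representation k G X) [IsIrreducible χ] (hχ : ∀ n ∈ N, χ n = 1) :
    ∃ (W : Type max v w) (_ : AddCommGroup W) (_ : Module k W) (_ : FiniteDimensional k W)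
      (κ : Representation k G W) (_ : IsIrreducible κ) (_ : Nontrivial (MulSpace (res N τ) κ)),
      finrank k W = finrank k U * finrank k X := by
  have := nontrivial_of_isIrreducible (res N τ)
  have hinertia : inertia (res N τ) = ⊤ := inertia_res_eq_top τ
  have hmul : finrank k (MulSpace (res N τ) τ) = 1 :=
    IsIrreducible.finrank_intertwiningMap_self (res N τ)
  have : Nontrivial (MulSpace (res N τ) τ) := nontrivial_of_finrank_pos (R := k) (by omega)
  obtain ⟨W, _, _, _, κ, hκ, hκ', hle, hle'⟩ :=
    exists_irreducible_finrank_le_mul hinertia τ χ hχ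
  refine ⟨W, _, _, ‹_›, κ, hκ, hκ', hle'.antisymm ?_⟩
  rw [finrank_eq_index_inertia_mul (σ := res N τ) (ρ := κ), hinertia, Subgroup.index_top, one_mul,
    mul_comm]
  rw [hmul, one_mul] at hle
  gcongr

end

section Extension

lemma isIrreducible_of_forall_exists_eq_smul {k G U : Type*} [Field k] [Group G]
    [AddCommGroup U] [Module k U] {σ τ : Representation k G U}
    [IsIrreducible σ] (h : ∀ g, ∃ c : k, ∀ u, σ g u = c • τ g u) :
    IsIrreducible τ := by
  have := nontrivial_of_isIrreducible σ
  refine isIrreducible_of_forall_ne_bot fun S hS => ?_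
  let S' : Subrepresentation σ := ⟨S.toSubmodule, fun g u hu => by
    obtain ⟨c, hc⟩ := h g
    rw [hc]
    exact S.toSubmodule.smul_mem c (S.apply_mem_toSubmodule g hu)⟩
  have hS' : S' ≠ ⊥ := fun h => hS (Subrepresentation.toSubmodule_injective
    (congrArg Subrepresentation.toSubmodule h :))
  exact Subrepresentation.toSubmodule_injective
    (congrArg Subrepresentation.toSubmodule ((eq_bot_or_eq_top S').resolve_left hS') :)

lemma exists_apply_eq_of_ker_le {X H P : Type*} [Group X] [Group H] [Monoid P] {f : X →* H}
    (hf : Function.Surjective f) {T : X →* P} (hT : f.ker ≤ T.ker) :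
    ∃ τ : H →* P, ∀ x, τ (f x) = T x := by
  refine ⟨(QuotientGroup.lift f.ker T hT).comp
    (QuotientGroup.quotientKerEquivOfSurjective f hf).symm, fun x => ?_⟩
  change QuotientGroup.lift f.ker T hT
    ((QuotientGroup.quotientKerEquivOfSurjective f hf).symm (f x)) = T x
  rw [show f x = QuotientGroup.quotientKerEquivOfSurjective f hf (x : _ ⧸ f.ker) from rfl,
    MulEquiv.symm_apply_apply]
  rfl

variable {k G U : Type*} [Field k] [Group G] [AddCommGroup U] [Module k U] {N : Subgroup G}
  [N.Normal]

/-- The integers `d` for which the `d`-th power of the scalar character of the kernel of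
`inertiaCover σ → G` extends to a linear character of `inertiaCover σ`. -/
def extensionExponents (σ : Representation k N U) : AddSubgroup ℤ where
  carrier := {d | ∃ δ : inertiaCover σ →* kˣ, ∀ x : inertiaCover σ, x.1.1 = 1 →
    ∀ c : kˣ, (∀ u, x.1.2 u = c • u) → δ x = c ^ d}
  zero_mem' := ⟨1, fun _ _ _ _ => by simp⟩
  add_mem' := by
    rintro d e ⟨δ, hδ⟩ ⟨ε, hε⟩
    exact ⟨δ * ε, fun x hx c hc => by
      rw [MonoidHom.mul_apply, hδ x hx c hc, hε x hx c hc, zpow_add]⟩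
  neg_mem' := by
    rintro d ⟨δ, hδ⟩
    exact ⟨δ⁻¹, fun x hx c hc => by rw [MonoidHom.inv_apply, hδ x hx c hc, zpow_neg]⟩

lemma finrank_mem_extensionExponents (σ : Representation k N U) :
    (finrank k U : ℤ) ∈ extensionExponents σ := by
  refine ⟨1, fun x _ c hc => Units.ext ?_⟩
  have hdet := congrArg Units.val x.2.1
  rw [LinearEquiv.coe_det, show (x.1.2 : U →ₗ[k] U) = (c : k) • LinearMap.id from
    LinearMap.ext hc, LinearMap.det_smul, LinearMap.det_id, mul_one] at hdet
  simpa using hdet.symm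

lemma finrank_mulSpace_mem_extensionExponents {V : Type*} [AddCommGroup V] [Module k V]
    (σ : Representation k N U) (ρ : Representation k G V) :
    (finrank k (MulSpace σ ρ) : ℤ) ∈ extensionExponents σ := by
  refine ⟨(MonoidHom.toHomUnits (LinearMap.det.comp (coverRep σ ρ)))⁻¹, fun x hx c hc => ?_⟩
  have hscalar : coverRep σ ρ x = ((c⁻¹ : kˣ) : k) • 1 :=
    LinearMap.ext fun φ => DFunLike.ext _ _ fun u => by
      rw [coverRep_apply, hx, map_one]
      change φ (x.1.2.symm u) = ((c⁻¹ : kˣ) : k) • φ u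
      rw [← map_smul, (LinearEquiv.symm_apply_eq _).2 ((hc _).trans (smul_inv_smul c u)).symm]
      rfl
  refine Units.ext ?_
  simp [hscalar]

variable [IsAlgClosed k] [FiniteDimensional k U] {σ : Representation k N U} [IsIrreducible σ]

lemma exists_extension_of_one_mem (hσ : inertia σ = ⊤) (h1 : 1 ∈ extensionExponents σ) :
    ∃ τ : Representation k G U, IsIrreducible (res N τ) := by
  have := nontrivial_of_isIrreducible σ
  obtain ⟨δ, hδ⟩ := h1
  let f : inertiaCover σ →* G := (MonoidHom.fst _ _).comp (inertiaCover σ).subtype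
  have hf : Function.Surjective f := fun g => by
    obtain ⟨x, hx, rfl⟩ : g ∈ inertia σ := hσ ▸ Subgroup.mem_top g
    exact ⟨⟨x, hx⟩, rfl⟩
  let T : Representation k (inertiaCover σ) U :=
    { toFun x := ((δ x)⁻¹ : kˣ) • (x.1.2 : U →ₗ[k] U)
      map_one' := by ext; simp
      map_mul' x y := by ext; simp [mul_smul, mul_comm] }
  have hT : f.ker ≤ T.ker := fun x hx => LinearMap.ext fun u => by
    obtain ⟨c, hc, hcu⟩ := exists_eq_smul_of_fst_eq_one x.2 hx
    have hc0 : c ≠ 0 := fun h => by simp [h, finrank_pos.ne'] at hc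
    change (δ x)⁻¹ • x.1.2 u = u
    rw [hδ x hx (Units.mk0 c hc0) hcu, hcu, zpow_one]
    exact inv_smul_smul (Units.mk0 c hc0) u
  obtain ⟨τ, hτ⟩ := exists_apply_eq_of_ker_le hf hT
  refine ⟨τ, isIrreducible_of_forall_exists_eq_smul (σ := σ) fun n => ?_⟩
  obtain ⟨x, hx⟩ := hf n
  have hxN : x.1.1 ∈ N := (show x.1.1 = n from hx) ▸ n.2
  obtain ⟨c, hc⟩ := exists_smul_eq_of_mem_inertiaCover x.2 hxN
  obtain rfl : ⟨x.1.1, hxN⟩ = n := Subtype.ext hx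
  have hc0 : c ≠ 0 := by
    rintro rfl
    obtain ⟨u, hu⟩ := exists_ne (0 : U)
    exact hu (x.1.2.injective (by simp [hc]))
  refine ⟨c⁻¹ * δ x, fun u => ?_⟩
  change _ = _ • τ (f x) u
  rw [hτ]
  change _ = _ • (δ x)⁻¹ • x.1.2 u
  rw [hc, mul_smul, Units.smul_def, Units.val_inv_eq_inv_val, smul_inv_smul₀ (δ x).ne_zero,
    inv_smul_smul₀ hc0]

theorem exists_extension_or_exists_prime_dvd_finrank_mulSpace (hσ : inertia σ = ⊤) :
    (∃ τ : Representation k G U, IsIrreducible (res N τ)) ∨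
      ∃ r : ℕ, r.Prime ∧ r ∣ finrank k U ∧ ∀ (V : Type*) [AddCommGroup V] [Module k V]
        (ρ : Representation k G V), r ∣ finrank k (MulSpace σ ρ) := by
  obtain ⟨a, ha⟩ := Int.subgroup_cyclic (extensionExponents σ)
  have hdvd {d : ℕ} (hd : (d : ℤ) ∈ extensionExponents σ) : a.natAbs ∣ d := by
    rw [ha, ← AddSubgroup.zmultiples_eq_closure, Int.mem_zmultiples_iff] at hd
    exact Int.natAbs_dvd_natAbs.2 hd
  by_cases ha1 : a.natAbs = 1
  · refine .inl (exists_extension_of_one_mem hσ ?_)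
    rw [ha, ← AddSubgroup.zmultiples_eq_closure, Int.mem_zmultiples_iff]
    exact (Int.isUnit_iff_natAbs_eq.2 ha1).dvd
  · refine .inr ⟨_, Nat.minFac_prime ha1,
      (Nat.minFac_dvd _).trans (hdvd (finrank_mem_extensionExponents σ)), fun V _ _ ρ => ?_⟩
    exact (Nat.minFac_dvd _).trans (hdvd (finrank_mulSpace_mem_extensionExponents σ ρ))

end Extension

section RegularRepresentation

lemma trace_mulLeft_pi_matrix {k ι : Type*} {m : ι → Type*} [CommRing k] [Fintype ι]
    [∀ i, Fintype (m i)] (A : ∀ i, Matrix (m i) (m i) k) :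
    LinearMap.trace k _ (LinearMap.mulLeft k A) =
      ∑ i, (Fintype.card (m i) : k) * (A i).trace := by
  classical
  let b := Pi.basis fun i => Matrix.stdBasis k (m i) (m i)
  have hb (x) : b.repr (A * b x) x = A x.1 x.2.1 x.2.1 := by
    obtain ⟨i, a, c⟩ := x
    rw [Pi.basis_repr, Pi.mul_apply, Pi.basis_apply, Pi.single_eq_same, Matrix.stdBasis_eq_single]
    simp [Matrix.stdBasis]
  simp only [LinearMap.trace_eq_matrix_trace k b, Matrix.trace, Matrix.diag_apply,
    LinearMap.toMatrix_apply, LinearMap.mulLeft_apply, hb, Fintype.sum_sigma,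
    Fintype.sum_prod_type, Finset.sum_const, Finset.card_univ, nsmul_eq_mul, Finset.mul_sum]

lemma trace_mulLeft_monoidAlgebra {k G : Type*} [CommRing k] [Group G] [Fintype G]
    (z : MonoidAlgebra k G) :
    LinearMap.trace k _ (LinearMap.mulLeft k z) = Fintype.card G * z.coeff 1 := by
  classical
  have hb (g : G) : (MonoidAlgebra.basis G k).repr (z * MonoidAlgebra.basis G k g) g =
      z.coeff 1 := by
    change (z * MonoidAlgebra.single g 1).coeff g = z.coeff 1
    simp
  simp only [LinearMap.trace_eq_matrix_trace k (MonoidAlgebra.basis G k), Matrix.trace,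
    Matrix.diag_apply, LinearMap.toMatrix_apply, LinearMap.mulLeft_apply, hb, Finset.sum_const,
    Finset.card_univ, nsmul_eq_mul]

lemma isIrreducible_of_surjective_asAlgebraHom {k G V : Type*} [Field k] [Group G]
    [AddCommGroup V] [Module k V] [Nontrivial V] {ρ : Representation k G V}
    (h : Function.Surjective ρ.asAlgebraHom) : IsIrreducible ρ := by
  refine isIrreducible_of_forall_ne_bot fun S hS => ?_
  have hSmem (z : MonoidAlgebra k G) {v : V} (hv : v ∈ S.toSubmodule) :
      ρ.asAlgebraHom z v ∈ S.toSubmodule := by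
    induction z using MonoidAlgebra.induction_on with
    | of g => simpa using S.apply_mem_toSubmodule g hv
    | add x y hx hy => simpa using add_mem hx hy
    | smul r x hx => simpa using S.toSubmodule.smul_mem r hx
  have hS' : S.toSubmodule ≠ ⊥ := fun h => hS (Subrepresentation.toSubmodule_injective h)
  obtain ⟨v, hv, hv0⟩ := (Submodule.ne_bot_iff _).1 hS'
  refine Subrepresentation.toSubmodule_injective (Submodule.eq_top_iff'.2 fun w => ?_)
  obtain ⟨φ, hφ⟩ := Projective.exists_dual_eq_one k hv0
  obtain ⟨z, hz⟩ := h (φ.smulRight w)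
  simpa [hz, hφ] using hSmem z hv

universe u v

/-- Both sides are the trace of `z` on the regular representation, which contains each irreducible
representation as often as its dimension. -/
lemma exists_irreducible_family_mul_coeff_one (k : Type u) (G : Type v) [Field k] [IsAlgClosed k]
    [Group G] [Fintype G] [NeZero (Nat.card G : k)] :
    ∃ (n : ℕ) (d : Fin n → ℕ) (κ : ∀ i, Representation k G (Fin (d i) → k)),
      (∀ i, IsIrreducible (κ i)) ∧ ∀ z : MonoidAlgebra k G,
        Fintype.card G * z.coeff 1 =
          ∑ i, (d i : k) * LinearMap.trace k _ ((κ i).asAlgebraHom z) := by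
  obtain ⟨n, d, hd, ⟨e⟩⟩ :=
    IsSemisimpleRing.exists_algEquiv_pi_matrix_of_isAlgClosed k (MonoidAlgebra k G)
  let f (i : Fin n) : MonoidAlgebra k G →ₐ[k] End k (Fin (d i) → k) :=
    (Matrix.toLinAlgEquiv'.toAlgHom.comp (Pi.evalAlgHom k _ i)).comp e.toAlgHom
  let κ (i : Fin n) : Representation k G (Fin (d i) → k) := (MonoidAlgebra.lift k _ G).symm (f i)
  have hκ (i) : (κ i).asAlgebraHom = f i := (MonoidAlgebra.lift k _ G).apply_symm_apply (f i)
  refine ⟨n, d, κ, fun i => isIrreducible_of_surjective_asAlgebraHom ?_, fun z => ?_⟩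
  · rw [hκ]
    exact (Matrix.toLinAlgEquiv'.surjective.comp (Function.surjective_eval i)).comp e.surjective
  · have he : e.toLinearEquiv.conj (LinearMap.mulLeft k z) = LinearMap.mulLeft k (e z) :=
      LinearMap.ext fun x => by simp [LinearEquiv.conj_apply]
    have hf (i) : LinearMap.trace k _ (f i z) = (e z i).trace := Matrix.trace_toLin'_eq _
    rw [← trace_mulLeft_monoidAlgebra, ← LinearMap.trace_conj' _ e.toLinearEquiv, he,
      trace_mulLeft_pi_matrix]
    simp only [hκ, hf, Fintype.card_fin]

end RegularRepresentation

section MultiplicitySquares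

universe u w

lemma exists_irreducible_family_index_mul_finrank_eq (k : Type u) (G : Type*) [Field k]
    [IsAlgClosed k] [CharZero k] [Group G] [Finite G] :
    ∃ (n : ℕ) (d : Fin n → ℕ) (κ : ∀ i, Representation k G (Fin (d i) → k)),
      (∀ i, IsIrreducible (κ i)) ∧ ∀ {N : Subgroup G} {U : Type w} [AddCommGroup U] [Module k U]
        [FiniteDimensional k U] (σ : Representation k N U),
        N.index * finrank k U = ∑ i, d i * finrank k (MulSpace σ (κ i)) := by
  have := Fintype.ofFinite G
  have : NeZero (Nat.card G : k) := ⟨Nat.cast_ne_zero.2 Nat.card_pos.ne'⟩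
  obtain ⟨n, d, κ, hκ, hreg⟩ := exists_irreducible_family_mul_coeff_one k G
  refine ⟨n, d, κ, hκ, fun {N U} _ _ _ σ => ?_⟩
  have := Fintype.ofFinite N
  let z : MonoidAlgebra k G :=
    ∑ m : N, MonoidAlgebra.single (m : G) (LinearMap.trace k U (σ m⁻¹))
  have hz (i) : (κ i).asAlgebraHom z = isotypicSum σ (κ i) := by simp [z, isotypicSum]
  have hz1 : z.coeff 1 = finrank k U := by
    classical
    simp only [z, MonoidAlgebra.coeff_sum, MonoidAlgebra.coeff_single, Finsupp.coe_finsetSum,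
      Finset.sum_apply, Finsupp.single_apply, OneMemClass.coe_eq_one, Finset.sum_ite_eq',
      Finset.mem_univ, if_true, inv_one, map_one, LinearMap.trace_one]
  have hsum := hreg z
  simp only [hz, trace_isotypicSum, hz1, mul_left_comm _ (Fintype.card N : k)] at hsum
  rw [← Finset.mul_sum, ← Nat.card_eq_fintype_card, ← N.card_mul_index,
    ← Nat.card_eq_fintype_card, Nat.cast_mul, mul_assoc] at hsum
  exact_mod_cast mul_left_cancel₀ (Nat.cast_ne_zero.2 Nat.card_pos.ne') hsum

variable {k : Type u} {G U : Type*} [Field k] [IsAlgClosed k] [CharZero k] [Group G] [Finite G]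
  [AddCommGroup U] [Module k U] [FiniteDimensional k U] {N : Subgroup G}

theorem sq_dvd_index_of_forall_dvd_finrank_mulSpace [N.Normal] {σ : Representation k N U}
    [IsIrreducible σ] (hσ : inertia σ = ⊤) {r : ℕ}
    (h : ∀ (V : Type u) [AddCommGroup V] [Module k V] (ρ : Representation k G V),
      r ∣ finrank k (MulSpace σ ρ)) :
    r ^ 2 ∣ N.index := by
  have := nontrivial_of_isIrreducible σ
  obtain ⟨n, d, κ, hκ, hindex⟩ := exists_irreducible_family_index_mul_finrank_eq k G
  have hsum := hindex σ
  have hd (i) : d i * finrank k (MulSpace σ (κ i)) =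
      finrank k (MulSpace σ (κ i)) ^ 2 * finrank k U := by
    rcases subsingleton_or_nontrivial (MulSpace σ (κ i)) with h0 | h0
    · simp only [finrank_zero_of_subsingleton, mul_zero, zero_pow two_ne_zero, zero_mul]
    · have hdeg := finrank_eq_index_inertia_mul (σ := σ) (ρ := κ i)
      rw [finrank_fin_fun, hσ, Subgroup.index_top, one_mul] at hdeg
      rw [sq, mul_assoc, mul_comm, ← hdeg]
  rw [Finset.sum_congr rfl fun i _ => hd i, ← Finset.sum_mul] at hsum
  rw [Nat.eq_of_mul_eq_mul_right finrank_pos hsum]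
  exact Finset.dvd_sum fun i _ => pow_dvd_pow_of_dvd (h _ _) 2

end MultiplicitySquares

section PSL2

variable {F : Type} [Field F]

/-- The class of the matrix `!![a, b; c, d]` in `PSL2 F`; elements of `PSL2 F` are always written in
this form, so that identities between them reduce to identities between entries, up to a sign. -/
def psl (a b c d : F) (h : a * d - b * c = 1) : PSL2 F :=
  QuotientGroup.mk
    (⟨!![a, b; c, d], by rw [Matrix.det_fin_two_of, h]⟩ : Matrix.SpecialLinearGroup (Fin 2) F)

lemma exists_eq_psl (x : PSL2 F) : ∃ a b c d h, x = psl a b c d h := by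
  obtain ⟨A, rfl⟩ := QuotientGroup.mk_surjective x
  exact ⟨_, _, _, _, (Matrix.det_fin_two A.1).symm.trans A.2,
    congrArg QuotientGroup.mk (Subtype.ext (Matrix.eta_fin_two A.1))⟩

lemma psl_mul_psl {a b c d a' b' c' d' : F} (h : a * d - b * c = 1) (h' : a' * d' - b' * c' = 1) :
    psl a b c d h * psl a' b' c' d' h' =
      psl (a * a' + b * c') (a * b' + b * d') (c * a' + d * c') (c * b' + d * d')
        (by linear_combination (a' * d' - b' * c') * h + h') :=
  congrArg QuotientGroup.mk (Subtype.ext (Matrix.mul_fin_two ..))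

lemma psl_inv {a b c d : F} (h : a * d - b * c = 1) :
    (psl a b c d h)⁻¹ = psl d (-b) (-c) a (by linear_combination h) :=
  congrArg QuotientGroup.mk (Subtype.ext (Matrix.adjugate_fin_two_of ..))

lemma one_eq_psl : (1 : PSL2 F) = psl 1 0 0 1 (by ring) :=
  congrArg QuotientGroup.mk (Subtype.ext Matrix.one_fin_two)

lemma mem_center_specialLinearGroup_two_iff {A : Matrix.SpecialLinearGroup (Fin 2) F} :
    A ∈ Subgroup.center (Matrix.SpecialLinearGroup (Fin 2) F) ↔ A = 1 ∨ A = -1 := by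
  rw [Matrix.SpecialLinearGroup.mem_center_iff, Fintype.card_fin]
  constructor
  · rintro ⟨r, hr, hA⟩
    rcases mul_self_eq_one_iff.1 (sq r ▸ hr) with rfl | rfl
    · exact .inl (Subtype.ext (by simpa using hA.symm))
    · exact .inr (Subtype.ext (by simpa [← Matrix.diagonal_neg] using hA.symm))
  · rintro (rfl | rfl)
    · exact ⟨1, by simp⟩
    · exact ⟨-1, by simp [← Matrix.diagonal_neg]⟩

lemma mk_eq_mk_iff (A B : Matrix.SpecialLinearGroup (Fin 2) F) :
    (A : PSL2 F) = B ↔ A = B ∨ A = -B := by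
  rw [eq_comm, QuotientGroup.eq, mem_center_specialLinearGroup_two_iff, inv_mul_eq_one, eq_comm,
    inv_mul_eq_iff_eq_mul, mul_neg, mul_one]

lemma psl_eq_psl_iff {a b c d a' b' c' d' : F} (h : a * d - b * c = 1)
    (h' : a' * d' - b' * c' = 1) :
    psl a b c d h = psl a' b' c' d' h' ↔
      (a = a' ∧ b = b' ∧ c = c' ∧ d = d') ∨ (a = -a' ∧ b = -b' ∧ c = -c' ∧ d = -d') := by
  refine (mk_eq_mk_iff _ _).trans (or_congr (Subtype.ext_iff.trans ?_) (Subtype.ext_iff.trans ?_))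
  · simp [and_assoc]
  · change !![a, b; c, d] = -!![a', b'; c', d'] ↔ _
    simp [and_assoc]

/-- The image in `PSL2 F` of the upper unitriangular matrices. -/
def unipotent : Multiplicative F →* PSL2 F where
  toFun b := psl 1 b.toAdd 0 1 (by ring)
  map_one' := one_eq_psl.symm
  map_mul' b b' := by
    rw [psl_mul_psl]
    congr 1 <;> simp [add_comm]

/-- The image in `PSL2 F` of the diagonal matrices of determinant one. -/
def torus : Fˣ →* PSL2 F where
  toFun s := psl s 0 0 ↑s⁻¹ (by simp)
  map_one' := by simpa using one_eq_psl.symm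
  map_mul' s s' := by
    rw [psl_mul_psl]
    congr 1 <;> simp [mul_comm]

/-- The class in `PSL2 F` of a matrix representing the nontrivial element of the Weyl group. -/
def weyl : PSL2 F := psl 0 (-1) 1 0 (by ring)

lemma unipotent_ofAdd (b : F) : unipotent (.ofAdd b) = psl 1 b 0 1 (by ring) := rfl

lemma torus_apply (s : Fˣ) : torus s = psl (s : F) 0 0 ↑s⁻¹ (by simp) := rfl

lemma unipotent_injective : Function.Injective (unipotent (F := F)) := fun b b' h => by
  rcases (psl_eq_psl_iff (by ring) (by ring)).1 h with h | ⟨h1, h2, -, -⟩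
  · exact h.2.1
  · change b.toAdd = b'.toAdd
    linear_combination h2 - b'.toAdd * h1

lemma torus_eq_one_iff (s : Fˣ) : torus s = 1 ↔ s ^ 2 = 1 := by
  rw [torus_apply, one_eq_psl, psl_eq_psl_iff, ← Units.val_inj, Units.val_pow_eq_pow_val,
    Units.val_one, sq_eq_one_iff]
  simp [inv_eq_iff_eq_inv]

lemma torus_mul_unipotent (s : Fˣ) (b : F) :
    torus s * unipotent (.ofAdd b) = unipotent (.ofAdd (s ^ 2 * b)) * torus s := by
  rw [torus_apply, unipotent_ofAdd, unipotent_ofAdd, psl_mul_psl, psl_mul_psl, psl_eq_psl_iff]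
  simp [field]

lemma weyl_mul_weyl : (weyl * weyl : PSL2 F) = 1 := by
  rw [weyl, psl_mul_psl, one_eq_psl, psl_eq_psl_iff]
  simp

lemma weyl_mul_torus (s : Fˣ) : weyl * torus s = torus s⁻¹ * weyl := by
  rw [torus_apply, torus_apply, weyl, psl_mul_psl, psl_mul_psl, psl_eq_psl_iff]
  simp

lemma exists_psl_eq_torus_mul_unipotent {a b d : F} (h : a * d - b * 0 = 1) :
    ∃ s, psl a b 0 d h = torus s * unipotent (.ofAdd (b / a)) := by
  have ha : a ≠ 0 := by rintro rfl; simp at h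
  refine ⟨.mk0 a ha, ?_⟩
  rw [torus_apply, unipotent_ofAdd, psl_mul_psl, psl_eq_psl_iff]
  left
  simp only [Units.val_mk0, mul_one, mul_zero, add_zero, fieldEq, Units.val_inv_eq_inv_val,
    zero_mul, zero_add, true_and]
  linear_combination h

lemma eq_torus_mul_unipotent_or (x : PSL2 F) :
    (∃ s b, x = torus s * unipotent b) ∨
      ∃ b s b', x = unipotent b * weyl * torus s * unipotent b' := by
  obtain ⟨a, b, c, d, h, rfl⟩ := exists_eq_psl x
  rcases eq_or_ne c 0 with rfl | hc
  · exact .inl ((exists_psl_eq_torus_mul_unipotent h).imp fun s hs => ⟨_, hs⟩)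
  · refine .inr ⟨.ofAdd (a / c), .mk0 c hc, .ofAdd (d / c), ?_⟩
    rw [torus_apply, unipotent_ofAdd, unipotent_ofAdd, weyl, psl_mul_psl, psl_mul_psl,
      psl_mul_psl, psl_eq_psl_iff]
    left
    simp only [mul_zero, mul_one, zero_add, Units.val_mk0, mul_neg, add_zero,
      Units.val_inv_eq_inv_val, neg_mul, one_mul, fieldEq, neg_zero, zero_mul, and_self, and_true,
      true_and]
    linear_combination -h

lemma natCard_specialLinearGroup_mul {n : Type*} [Fintype n] [DecidableEq n] [Nonempty n]
    {k : Type*} [Field k] :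
    Nat.card (Matrix.SpecialLinearGroup n k) * (Nat.card k - 1) =
      Nat.card (Matrix.GeneralLinearGroup n k) := by
  rw [← Subgroup.card_mul_index (Matrix.GeneralLinearGroup.det (n := n) (R := k)).ker,
    Subgroup.index_ker, MonoidHom.range_eq_top.2 Matrix.GeneralLinearGroup.det_surjective,
    Subgroup.card_top, Nat.card_units]
  have := Nat.card_range_of_injective (Matrix.SpecialLinearGroup.toGL_injective (n := n) (R := k))
  rw [← this, Matrix.SpecialLinearGroup.range_toGL]
  rfl

lemma natCard_rootsOfUnity_two (hF : ringChar F ≠ 2) : Nat.card (rootsOfUnity 2 F) = 2 :=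
  (IsPrimitiveRoot.neg_one _ hF).card_rootsOfUnity

lemma two_mul_natCard_psl2 [Finite F] (hF : ringChar F ≠ 2) :
    2 * Nat.card (PSL2 F) = Nat.card F * (Nat.card F + 1) * (Nat.card F - 1) := by
  have hq : 0 < Nat.card F - 1 := Nat.sub_pos_of_lt Finite.one_lt_card
  have hZ : Nat.card (Subgroup.center (Matrix.SpecialLinearGroup (Fin 2) F)) = 2 := by
    rw [Nat.card_congr
      (Matrix.SpecialLinearGroup.center_equiv_rootsOfUnity (n := Fin 2) (R := F)).toEquiv]
    exact natCard_rootsOfUnity_two hF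
  have := Fintype.ofFinite F
  have hSL := natCard_specialLinearGroup_mul (n := Fin 2) (k := F)
  rw [← Subgroup.card_mul_index (Subgroup.center _), hZ, Matrix.card_GL_field 2] at hSL
  simp only [Fin.prod_univ_two, Fin.val_zero, Fin.val_one, pow_zero, pow_one,
    ← Nat.card_eq_fintype_card] at hSL
  refine Nat.eq_of_mul_eq_mul_right hq (hSL.trans ?_)
  rw [sq, ← Nat.mul_sub_one,
    show Nat.card F * Nat.card F - 1 = _ from Nat.mul_self_sub_mul_self_eq _ 1]
  ring

lemma two_mul_natCard_torus_range (hF : ringChar F ≠ 2) :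
    2 * Nat.card (torus (F := F)).range = Nat.card F - 1 := by
  have hker : (torus (F := F)).ker = rootsOfUnity 2 F := by
    ext s
    rw [MonoidHom.mem_ker, torus_eq_one_iff, mem_rootsOfUnity]
  rw [← Nat.card_units, ← Subgroup.card_mul_index torus.ker, Subgroup.index_ker, hker,
    natCard_rootsOfUnity_two hF]

lemma index_torus_range [Finite F] (hF : ringChar F ≠ 2) :
    (torus (F := F)).range.index = Nat.card F * (Nat.card F + 1) := by
  have hq : 0 < Nat.card F - 1 := Nat.sub_pos_of_lt Finite.one_lt_card
  refine Nat.eq_of_mul_eq_mul_right hq ?_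
  rw [← two_mul_natCard_psl2 hF, ← Subgroup.card_mul_index torus.range,
    ← two_mul_natCard_torus_range hF]
  ring

end PSL2

section Card

lemma natCard_dvd_factorial_index_of_isSimpleGroup {G : Type*} [Group G] [Finite G]
    [IsSimpleGroup G] {H : Subgroup G} (hH : H ≠ ⊤) : Nat.card G ∣ H.index.factorial := by
  have hcore : H.normalCore = ⊥ := H.normalCore_normal.eq_bot_or_eq_top.resolve_right fun h =>
    hH (top_le_iff.1 (h ▸ H.normalCore_le))
  have hinj : Function.Injective (MulAction.toPermHom G (G ⧸ H)) := by
    rw [← MonoidHom.ker_eq_bot_iff, ← H.normalCore_eq_ker, hcore]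
  simpa [Nat.card_perm, Subgroup.index] using Subgroup.card_dvd_of_injective _ hinj

end Card

section NineElements

variable {F : Type} [Field F]

lemma ringChar_ne_two_of_natCard_eq_nine (hF : Nat.card F = 9) : ringChar F ≠ 2 := by
  have := Nat.finite_of_card_ne_zero (hF ▸ by norm_num : Nat.card F ≠ 0)
  have := Fintype.ofFinite F
  intro h
  have := FiniteField.even_card_iff_char_two.1 h
  rw [← Nat.card_eq_fintype_card] at this
  omega

lemma exists_unit_sq_eq_neg_one (hF : Nat.card F = 9) : ∃ j : Fˣ, j ^ 2 = -1 := by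
  have := Nat.finite_of_card_ne_zero (hF ▸ by norm_num : Nat.card F ≠ 0)
  have := Fintype.ofFinite F
  rw [Nat.card_eq_fintype_card] at hF
  obtain ⟨j, hj⟩ := (FiniteField.isSquare_neg_one_iff (F := F)).2 (hF ▸ by norm_num)
  exact ⟨.mk0 j (by rintro rfl; simp at hj), Units.ext (by simp [hj, sq])⟩

lemma natCard_psl2_nine (hF : Nat.card F = 9) : Nat.card (PSL2 F) = 360 := by
  have := Nat.finite_of_card_ne_zero (hF ▸ by norm_num : Nat.card F ≠ 0)
  have := two_mul_natCard_psl2 (ringChar_ne_two_of_natCard_eq_nine hF)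
  rw [hF] at this
  omega

lemma isSimpleGroup_psl2_nine (hF : Nat.card F = 9) : IsSimpleGroup (PSL2 F) :=
  Matrix.ProjectiveSpecialLinearGroup.rank_two_simple (hF ▸ by norm_num)

lemma six_le_index (hF : Nat.card F = 9) {H : Subgroup (PSL2 F)} (hH : H ≠ ⊤) : 6 ≤ H.index := by
  have := Nat.finite_of_card_ne_zero (hF ▸ by norm_num : Nat.card F ≠ 0)
  have := isSimpleGroup_psl2_nine hF
  have hdvd := natCard_dvd_factorial_index_of_isSimpleGroup hH
  rw [natCard_psl2_nine hF] at hdvd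
  by_contra! hlt
  have := Nat.le_of_dvd (Nat.factorial_pos _) hdvd
  have := Nat.factorial_le (Nat.le_of_lt_succ hlt)
  simp only [Nat.factorial, Nat.succ_eq_add_one, Nat.reduceAdd, zero_add, mul_one,
    Nat.reduceMul] at this
  omega

end NineElements

section Involutions

variable {F : Type} [Field F]

lemma torus_eq_psl_neg {j : Fˣ} (hj : j ^ 2 = -1) : torus j = psl (j : F) 0 0 (-j) (by
    have hj2 : (j : F) ^ 2 = -1 := by simpa using congrArg Units.val hj
    linear_combination -hj2) := by
  have hinv : j⁻¹ = -j := inv_eq_of_mul_eq_one_right (by rw [mul_neg, ← sq, hj, neg_neg])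
  rw [torus_apply, psl_eq_psl_iff]
  simp [hinv]

variable (h2 : (2 : F) ≠ 0)

include h2

lemma exists_eq_psl_neg_of_mul_self_eq_one {x : PSL2 F} (hx : x * x = 1) (hx1 : x ≠ 1) :
    ∃ a b c h, x = psl a b c (-a) h := by
  obtain ⟨a, b, c, d, h, rfl⟩ := exists_eq_psl x
  rw [mul_eq_one_iff_eq_inv, psl_inv, psl_eq_psl_iff] at hx
  rcases hx with ⟨rfl, hb, hc, -⟩ | ⟨rfl, -⟩
  · obtain rfl : b = 0 := by
      simpa [h2] using (show 2 * b = 0 by linear_combination hb)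
    obtain rfl : c = 0 := by
      simpa [h2] using (show 2 * c = 0 by linear_combination hc)
    refine absurd ?_ hx1
    rw [one_eq_psl, psl_eq_psl_iff]
    simpa [mul_self_eq_one_iff] using h
  · exact ⟨-d, b, c, by simpa using h, by simp⟩

variable {j : Fˣ} (hj : j ^ 2 = -1)

include hj

lemma isConj_torus_psl_neg_of_ne_zero {a b c : F} (h : a * -a - b * c = 1) (hc : c ≠ 0) :
    IsConj (torus j) (psl a b c (-a) h) := by
  have hj2 : (j : F) ^ 2 = -1 := by simpa using congrArg Units.val hj
  have hj0 : (j : F) ≠ 0 := j.ne_zero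
  -- The columns of the conjugating matrix are eigenvectors for `j` and `-j`.
  refine isConj_iff.2 ⟨psl (a + j) ((a - j) / (2 * c * j)) c (1 / (2 * j)) ?_, ?_⟩
  · field_simp
    ring
  · rw [mul_inv_eq_iff_eq_mul, torus_eq_psl_neg hj, psl_mul_psl, psl_mul_psl, psl_eq_psl_iff]
    refine .inl ⟨?_, ?_, ?_, ?_⟩
    · linear_combination hj2 + h
    · field_simp
      linear_combination hj2 + h
    · ring
    · field_simp
      ring

lemma isConj_torus_psl_neg {a b c : F} (h : a * -a - b * c = 1) :
    IsConj (torus j) (psl a b c (-a) h) := by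
  have hj2 : (j : F) ^ 2 = -1 := by simpa using congrArg Units.val hj
  rcases eq_or_ne c 0 with rfl | hc
  · rcases eq_or_ne b 0 with rfl | hb
    · have haj : a ^ 2 = j ^ 2 := by linear_combination -h - hj2
      convert IsConj.refl (torus j) using 1
      rw [torus_eq_psl_neg hj, psl_eq_psl_iff]
      rcases sq_eq_sq_iff_eq_or_eq_neg.1 haj with rfl | rfl <;> simp
    · refine (isConj_torus_psl_neg_of_ne_zero h2 hj (a := -a) (b := 0) (c := -b)
        (by linear_combination h) (neg_ne_zero.2 hb)).trans (isConj_iff.2 ⟨weyl, ?_⟩)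
      rw [mul_inv_eq_iff_eq_mul, weyl, psl_mul_psl, psl_mul_psl, psl_eq_psl_iff]
      simp
  · exact isConj_torus_psl_neg_of_ne_zero h2 hj h hc

lemma exists_isConj_torus_of_commute_torus {y : PSL2 F} (hy : Commute (torus j) y) :
    ∃ s, IsConj (torus s) y := by
  have hj0 : 2 * (j : F) ≠ 0 := mul_ne_zero h2 j.ne_zero
  obtain ⟨p, q, r, s, h, rfl⟩ := exists_eq_psl y
  have hy := hy.eq
  rw [torus_eq_psl_neg hj, psl_mul_psl, psl_mul_psl, psl_eq_psl_iff] at hy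
  rcases hy with ⟨-, hq, hr, -⟩ | ⟨hp, -, -, hs⟩
  · obtain rfl : q = 0 := (mul_eq_zero.1 (by linear_combination hq)).resolve_left hj0
    obtain rfl : r = 0 := (mul_eq_zero.1 (by linear_combination -hr)).resolve_left hj0
    obtain ⟨t, ht⟩ := exists_psl_eq_torus_mul_unipotent h
    simp only [zero_div, ofAdd_zero, map_one, mul_one] at ht
    exact ⟨t, ht ▸ .refl _⟩
  · obtain rfl : p = 0 := (mul_eq_zero.1 (by linear_combination hp)).resolve_left hj0
    obtain rfl : s = 0 := (mul_eq_zero.1 (by linear_combination -hs)).resolve_left hj0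
    exact ⟨j, by simpa using isConj_torus_psl_neg h2 hj (a := 0) (by simpa using h)⟩

lemma exists_isConj_torus_of_commute {x y : PSL2 F} (hx : x * x = 1) (hx1 : x ≠ 1)
    (hxy : Commute x y) : ∃ s, IsConj (torus s) y := by
  obtain ⟨a, b, c, h, rfl⟩ := exists_eq_psl_neg_of_mul_self_eq_one h2 hx hx1
  obtain ⟨g, hg⟩ := isConj_iff.1 (isConj_torus_psl_neg h2 hj h)
  obtain ⟨s, hs⟩ := exists_isConj_torus_of_commute_torus h2 hj (y := g⁻¹ * y * g) <| by
    rw [← hg] at hxy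
    simpa [mul_assoc] using (Commute.conj_iff g⁻¹).2 hxy
  exact ⟨s, hs.trans (isConj_iff.2 ⟨g, by group⟩)⟩

end Involutions

lemma pow_four_eq_one_of_commute {F : Type} [Field F] (hF : Nat.card F = 9) {x y : PSL2 F}
    (hx : x * x = 1) (hx1 : x ≠ 1) (hxy : Commute x y) : y ^ 4 = 1 := by
  obtain ⟨j, hj⟩ := exists_unit_sq_eq_neg_one hF
  have h2 : (2 : F) ≠ 0 := Ring.two_ne_zero (ringChar_ne_two_of_natCard_eq_nine hF)
  obtain ⟨s, hs⟩ := exists_isConj_torus_of_commute h2 hj hx hx1 hxy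
  have hs8 : s ^ 8 = 1 := by
    have : Nat.card Fˣ = 8 := by rw [Nat.card_units, hF]
    exact this ▸ pow_card_eq_one'
  have : torus s ^ 4 = 1 := by
    rw [← map_pow, torus_eq_one_iff, ← pow_mul, hs8]
  obtain ⟨g, rfl⟩ := isConj_iff.1 hs
  rw [conj_pow, this, mul_one, mul_inv_cancel]

lemma exists_not_commute_of_prime_dvd_natCard {F : Type} [Field F] (hF : Nat.card F = 9)
    {H : Subgroup (PSL2 F)} (h2 : 2 ∣ Nat.card H) {p : ℕ} (hp : p.Prime) (hp2 : p ≠ 2)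
    (hpH : p ∣ Nat.card H) : ∃ x ∈ H, ∃ y ∈ H, ¬ Commute x y := by
  have := Nat.finite_of_card_ne_zero (hF ▸ by norm_num : Nat.card F ≠ 0)
  have := Fact.mk hp
  obtain ⟨x, hx⟩ := exists_prime_orderOf_dvd_card' 2 h2
  obtain ⟨y, hy⟩ := exists_prime_orderOf_dvd_card' p hpH
  rw [← Subgroup.orderOf_coe] at hx hy
  obtain ⟨hx2, hx1⟩ := orderOf_eq_prime_iff.1 hx
  refine ⟨x, x.2, y, y.2, fun hxy => hp2 ?_⟩
  have hy4 := pow_four_eq_one_of_commute hF (sq (x : PSL2 F) ▸ hx2) hx1 hxy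
  have : p ∣ 2 ^ 2 := hy ▸ orderOf_dvd_of_pow_eq_one hy4
  exact (Nat.prime_dvd_prime_iff_eq hp Nat.prime_two).1 (hp.dvd_of_dvd_pow this)

section Invariants

variable {k G V : Type*} [Field k] [Group G] [AddCommGroup V] [Module k V]

lemma sum_trace_eq_card_mul_finrank_invariants [Fintype G] [NeZero (Nat.card G : k)]
    [FiniteDimensional k V] (ρ : Representation k G V) :
    ∑ g, LinearMap.trace k V (ρ g) = Nat.card G * finrank k ρ.invariants := by
  have hG : (Fintype.card G : k) ≠ 0 := Nat.card_eq_fintype_card (α := G) ▸ NeZero.ne _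
  have : Invertible (Fintype.card G : k) := invertibleOfNonzero hG
  have htrace := (ρ.isProj_averageMap).trace
  simp only [averageMap, GroupAlgebra.average, map_smul, map_sum, asAlgebraHom_of,
    smul_eq_mul] at htrace
  rw [← htrace, Nat.card_eq_fintype_card, mul_invOf_cancel_left]

lemma finrank_mulSpace_trivial [Finite G] [CharZero k] [IsAlgClosed k] [FiniteDimensional k V]
    (H : Subgroup G) (ρ : Representation k G V) :
    finrank k (MulSpace (trivial k H k) ρ) = finrank k (res H ρ).invariants := by
  have := Fintype.ofFinite H
  have h := sum_trace_eq_card_mul_finrank_invariants (res H ρ)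
  rw [Nat.card_eq_fintype_card] at h
  have h' := trace_isotypicSum (trivial k H k) ρ
  simp only [isotypicSum, map_sum, isTrivial_def, LinearMap.trace_id, finrank_self,
    Nat.cast_one, one_smul] at h'
  exact_mod_cast mul_left_cancel₀ (Nat.cast_ne_zero.2 Fintype.card_ne_zero) (h'.symm.trans h)

lemma span_range_apply_eq_top (ρ : Representation k G V) [IsIrreducible ρ] {v : V} (hv : v ≠ 0) :
    Submodule.span k (Set.range fun g => ρ g v) = ⊤ := by
  let S : Subrepresentation ρ :=
    { toSubmodule := Submodule.span k (Set.range fun g => ρ g v)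
      apply_mem_toSubmodule := fun g x hx => by
        induction hx using Submodule.span_induction with
        | mem x hx =>
          obtain ⟨h, rfl⟩ := hx
          exact Submodule.subset_span ⟨g * h, by simp⟩
        | zero => simp
        | add x y _ _ hx hy => simpa using Submodule.add_mem _ hx hy
        | smul c x _ hx => simpa using Submodule.smul_mem _ c hx }
  have hvS : v ∈ S.toSubmodule := Submodule.subset_span ⟨1, by simp⟩
  rcases eq_bot_or_eq_top S with hS | hS
  · exact absurd (by rw [hS] at hvS; exact hvS) hv
  · exact congrArg Subrepresentation.toSubmodule hS

variable {U : Subgroup G} {w : G}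
  (hG : ∀ g, g ∈ Subgroup.normalizer (U : Set G) ∨
    ∃ u ∈ U, ∃ b ∈ Subgroup.normalizer (U : Set G), g = u * w * b)

lemma apply_mem_invariants_res {ρ : Representation k G V} {b : G}
    (hb : b ∈ Subgroup.normalizer (U : Set G)) {x : V} (hx : x ∈ (res U ρ).invariants) :
    ρ b x ∈ (res U ρ).invariants := by
  intro u
  have h : b⁻¹ * u * b ∈ U := ((Subgroup.mem_normalizer_iff'' (g := b)).1 hb u).1 u.2
  have := congrArg (ρ b) (hx ⟨_, h⟩)
  simpa [← Module.End.mul_apply, ← map_mul, mul_assoc] using this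

include hG in
lemma finrank_le_card_mul_finrank_invariants_res [Finite U] [FiniteDimensional k V]
    {ρ : Representation k G V} [IsIrreducible ρ] (hρ : (res U ρ).invariants ≠ ⊥) :
    finrank k V ≤ Nat.card U * finrank k (res U ρ).invariants := by
  classical
  have := Fintype.ofFinite U
  let Φ : (U → (res U ρ).invariants) →ₗ[k] V := LinearMap.lsum k _ k fun u : U =>
    (ρ (if u = 1 then 1 else u * w)).comp (res U ρ).invariants.subtype
  have hfix {x} (hx : x ∈ (res U ρ).invariants) : x ∈ LinearMap.range Φ :=
    ⟨Pi.single 1 ⟨x, hx⟩, (LinearMap.lsum_piSingle k _ _ _ _ _).trans (by simp)⟩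
  have hcell {u : U} (hu : u ≠ 1) {x} (hx : x ∈ (res U ρ).invariants) :
      ρ (u * w) x ∈ LinearMap.range Φ :=
    ⟨Pi.single u ⟨x, hx⟩, (LinearMap.lsum_piSingle k _ _ _ _ _).trans (by simp [hu])⟩
  have hweyl {x} (hx : x ∈ (res U ρ).invariants) : ρ w x ∈ LinearMap.range Φ := by
    have hsum : ∑ u : U, ρ (u * w) x ∈ (res U ρ).invariants := fun u => by
      rw [map_sum]
      exact Fintype.sum_equiv (Equiv.mulLeft u) _ _ fun v => by simp
    rw [← Finset.add_sum_erase _ _ (Finset.mem_univ 1), OneMemClass.coe_one, one_mul] at hsum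
    exact (Submodule.add_mem_iff_left _ (Submodule.sum_mem _ fun u hu =>
      hcell (Finset.ne_of_mem_erase hu) hx)).1 (hfix hsum)
  obtain ⟨v, hv, hv0⟩ := Submodule.exists_mem_ne_zero_of_ne_bot hρ
  have hΦ : LinearMap.range Φ = ⊤ := by
    rw [eq_top_iff, ← span_range_apply_eq_top ρ hv0, Submodule.span_le]
    rintro _ ⟨g, rfl⟩
    rcases hG g with hg | ⟨u, hu, b, hb, rfl⟩
    · exact hfix (apply_mem_invariants_res hg hv)
    · have hbv := apply_mem_invariants_res hb hv
      rcases eq_or_ne (⟨u, hu⟩ : U) 1 with hu1 | hu1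
      · obtain rfl : u = 1 := congrArg Subtype.val hu1
        simpa using hweyl hbv
      · simpa using hcell hu1 hbv
  simpa [finrank_pi_fintype] using
    LinearMap.finrank_le_finrank_of_surjective (LinearMap.range_eq_top.1 hΦ)

end Invariants

theorem exists_irreducible_invariants_res_eq_bot (k : Type*) {G : Type*} [Field k] [IsAlgClosed k]
    [CharZero k] [Group G] [Finite G] {U : Subgroup G} (hU : U ≠ ⊥) {w : G}
    (hG : ∀ g, g ∈ Subgroup.normalizer (U : Set G) ∨
      ∃ u ∈ U, ∃ b ∈ Subgroup.normalizer (U : Set G), g = u * w * b) :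
    ∃ (n : ℕ) (κ : Representation k G (Fin n → k)),
      IsIrreducible κ ∧ (res U κ).invariants = ⊥ := by
  obtain ⟨n, d, κ, hκ, hfamily⟩ := exists_irreducible_family_index_mul_finrank_eq k G
  have hindex (H : Subgroup G) : H.index = ∑ i, d i * finrank k (res H (κ i)).invariants := by
    simpa only [finrank_self, mul_one, finrank_mulSpace_trivial] using hfamily (trivial k H k)
  by_contra! hinv
  have hle (i) : d i ≤ Nat.card U * finrank k (res U (κ i)).invariants := by
    simpa using finrank_le_card_mul_finrank_invariants_res hG (hinv _ (κ i) (hκ i))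
  have hbot (i) : finrank k (res ⊥ (κ i)).invariants = d i := by
    have h : (res ⊥ (κ i)).invariants = ⊤ :=
      eq_top_iff.2 fun v _ g => by simp [Subgroup.mem_bot.1 g.2]
    rw [h, finrank_top, finrank_fin_fun]
  have hsum : ∑ i, d i * d i = ∑ i, d i * (Nat.card U * finrank k (res U (κ i)).invariants) := by
    have h := hindex ⊥
    simp only [hbot] at h
    rw [Finset.sum_congr rfl fun i _ => mul_left_comm (d i) (Nat.card U) _, ← Finset.mul_sum,
      ← hindex, U.card_mul_index, ← h, Subgroup.index_bot]
  have heq := (Finset.sum_eq_sum_iff_of_le fun i _ => Nat.mul_le_mul_left (d i) (hle i)).1 hsum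
  refine hU (Subgroup.card_eq_one.1 (Nat.dvd_one.1 ?_))
  rw [← Subgroup.index_top (G := G), hindex]
  refine Finset.dvd_sum fun i hi => ?_
  rcases (d i).eq_zero_or_pos with h0 | h0
  · simp only [h0, zero_mul, dvd_zero]
  · exact Dvd.dvd.mul_right ⟨_, Nat.eq_of_mul_eq_mul_left h0 (heq i hi)⟩ _

section TraceZero

variable {k G V : Type*} [Field k] [CharZero k] [Group G] [AddCommGroup V] [Module k V]
  [FiniteDimensional k V]

lemma natCard_dvd_finrank_of_trace_eq_zero [Finite G] {ρ : Representation k G V} {H : Subgroup G}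
    (h : ∀ g ∈ H, g ≠ 1 → LinearMap.trace k V (ρ g) = 0) : Nat.card H ∣ finrank k V := by
  have := Fintype.ofFinite H
  have hsum := sum_trace_eq_card_mul_finrank_invariants (res H ρ)
  have hne (g : H) (hg : g ≠ 1) : LinearMap.trace k V (res H ρ g) = 0 :=
    h g g.2 (by simpa using hg)
  rw [Fintype.sum_eq_single 1 hne, map_one, LinearMap.trace_one] at hsum
  exact ⟨_, by exact_mod_cast hsum⟩

end TraceZero

section Cuspidal

variable {F : Type} [Field F]

lemma isConj_torus_torus_mul_unipotent {s : Fˣ} (hs : s ^ 2 ≠ 1) (b : Multiplicative F) :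
    IsConj (torus s) (torus s * unipotent b) := by
  have hs' : 1 - (s : F) ^ 2 ≠ 0 := fun h => hs (Units.ext (by simpa using (sub_eq_zero.1 h).symm))
  let c : F := s ^ 2 * b.toAdd / (1 - s ^ 2)
  have hc : (s : F) ^ 2 * (b.toAdd + c) = c := by
    linear_combination -div_mul_cancel₀ ((s : F) ^ 2 * b.toAdd) hs'
  refine isConj_iff.2 ⟨unipotent (.ofAdd c), mul_inv_eq_iff_eq_mul.2 ?_⟩
  rw [mul_assoc, ← map_mul]
  have := torus_mul_unipotent s (b.toAdd + c)
  rw [hc] at this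
  exact this.symm

lemma trace_torus_eq_zero [Finite F] {k V : Type*} [Field k] [CharZero k] [AddCommGroup V]
    [Module k V] {κ : Representation k (PSL2 F) V}
    (hκ : (res unipotent.range κ).invariants = ⊥) {s : Fˣ} (hs : s ^ 2 ≠ 1) :
    LinearMap.trace k V (κ (torus s)) = 0 := by
  have := Fintype.ofFinite (Multiplicative F)
  have hsum : ∑ b, κ (unipotent b) = 0 := LinearMap.ext fun v => by
    have : (∑ b, κ (unipotent b)) v ∈ (res unipotent.range κ).invariants := by
      rintro ⟨_, c, rfl⟩
      rw [LinearMap.sum_apply, map_sum]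
      exact Fintype.sum_equiv (Equiv.mulLeft c) _ _ fun b => by simp
    simpa [hκ] using this
  have htrace (b) : LinearMap.trace k V (κ (torus s) * κ (unipotent b)) =
      LinearMap.trace k V (κ (torus s)) := by
    obtain ⟨g, hg⟩ := isConj_iff.1 (isConj_torus_torus_mul_unipotent hs b)
    rw [← map_mul, ← hg, map_mul, LinearMap.trace_mul_comm, ← map_mul]
    group
  have h := congrArg (LinearMap.trace k V) (congrArg (κ (torus s) * ·) hsum)
  simp only [Finset.mul_sum, map_sum, htrace, Finset.sum_const, mul_zero, map_zero,
    Finset.card_univ, smul_eq_zero, Fintype.card_ne_zero, false_or] at h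
  exact h

lemma exists_isConj_torus_of_isPGroup_two (h2 : (2 : F) ≠ 0) {j : Fˣ} (hj : j ^ 2 = -1)
    {H : Subgroup (PSL2 F)} (hH : IsPGroup 2 H) {x : PSL2 F} (hx : x ∈ H) (hx1 : x ≠ 1) :
    ∃ s : Fˣ, s ^ 2 ≠ 1 ∧ IsConj (torus s) x := by
  obtain ⟨k, hk⟩ := IsPGroup.iff_orderOf.1 hH ⟨x, hx⟩
  rw [Subgroup.orderOf_mk] at hk
  have h2x : 2 ∣ orderOf x := by
    rw [hk]
    exact dvd_pow_self 2 fun h => hx1 (orderOf_eq_one_iff.1 (by rw [hk, h, pow_zero]))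
  have hz : orderOf (x ^ (orderOf x / 2)) = 2 :=
    orderOf_pow_orderOf_div (hk ▸ pow_ne_zero k two_ne_zero) h2x
  obtain ⟨hz2, hz1⟩ := orderOf_eq_prime_iff.1 hz
  obtain ⟨s, hs⟩ := exists_isConj_torus_of_commute h2 hj (sq (x ^ _) ▸ hz2) hz1
    (Commute.pow_self x _)
  refine ⟨s, fun hs1 => hx1 ?_, hs⟩
  rwa [(torus_eq_one_iff s).2 hs1, isConj_one_right] at hs

lemma torus_mem_normalizer (s : Fˣ) :
    torus s ∈ Subgroup.normalizer ((unipotent (F := F)).range : Set (PSL2 F)) := by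
  have h (s : Fˣ) (b : F) :
      torus s * unipotent (.ofAdd b) * (torus s)⁻¹ = unipotent (.ofAdd (s ^ 2 * b)) := by
    rw [torus_mul_unipotent, mul_inv_cancel_right]
  refine Subgroup.mem_normalizer_iff.2 fun x => ⟨?_, fun ⟨b, hb⟩ => ?_⟩
  · rintro ⟨b, rfl⟩
    exact ⟨_, (h s b.toAdd).symm⟩
  · refine ⟨.ofAdd ((s⁻¹ : Fˣ) ^ 2 * b.toAdd), ?_⟩
    rw [← h, map_inv, ofAdd_toAdd, hb]
    group

lemma exists_irreducible_invariants_res_unipotent_eq_bot [Finite F] (k : Type*) [Field k]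
    [IsAlgClosed k] [CharZero k] : ∃ (n : ℕ) (κ : Representation k (PSL2 F) (Fin n → k)),
      IsIrreducible κ ∧ (res unipotent.range κ).invariants = ⊥ := by
  have hU : (unipotent (F := F)).range ≠ ⊥ := fun h => by
    have : Multiplicative.ofAdd (1 : F) = .ofAdd 0 :=
      unipotent_injective (by rw [MonoidHom.range_eq_bot_iff.1 h]; rfl)
    exact one_ne_zero (Multiplicative.ofAdd.injective this)
  have hB (s : Fˣ) (b) :
      torus s * unipotent b ∈ Subgroup.normalizer ((unipotent (F := F)).range : Set (PSL2 F)) :=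
    mul_mem (torus_mem_normalizer s) (Subgroup.le_normalizer ⟨b, rfl⟩)
  refine exists_irreducible_invariants_res_eq_bot k hU (w := weyl) fun g => ?_
  rcases eq_torus_mul_unipotent_or g with ⟨s, b, rfl⟩ | ⟨b, s, b', rfl⟩
  · exact .inl (hB s b)
  · exact .inr ⟨_, ⟨b, rfl⟩, _, hB s b', by simp only [mul_assoc]⟩

end Cuspidal

theorem exists_irreducible_eight_dvd_finrank (k : Type*) {F : Type} [Field k] [IsAlgClosed k]
    [CharZero k] [Field F] (hF : Nat.card F = 9) :
    ∃ (n : ℕ) (κ : Representation k (PSL2 F) (Fin n → k)), IsIrreducible κ ∧ 8 ∣ n := by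
  have := Nat.finite_of_card_ne_zero (hF ▸ by norm_num : Nat.card F ≠ 0)
  obtain ⟨j, hj⟩ := exists_unit_sq_eq_neg_one hF
  have h2 : (2 : F) ≠ 0 := Ring.two_ne_zero (ringChar_ne_two_of_natCard_eq_nine hF)
  obtain ⟨n, κ, hκ, hinv⟩ := exists_irreducible_invariants_res_unipotent_eq_bot (F := F) k
  obtain ⟨H, hH⟩ := Sylow.exists_subgroup_card_pow_prime 2 (n := 3)
    (natCard_psl2_nine hF ▸ by norm_num : 2 ^ 3 ∣ Nat.card (PSL2 F))
  have hdvd : Nat.card H ∣ finrank k (Fin n → k) :=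
    natCard_dvd_finrank_of_trace_eq_zero (ρ := κ) fun x hx hx1 => by
      obtain ⟨s, hs, hsx⟩ := exists_isConj_torus_of_isPGroup_two h2 hj (.of_card hH) hx hx1
      obtain ⟨g, rfl⟩ := isConj_iff.1 hsx
      rw [map_mul, LinearMap.trace_mul_comm, ← map_mul, inv_mul_cancel_left,
        trace_torus_eq_zero hinv hs]
  exact ⟨n, κ, hκ, by simpa [hH] using hdvd⟩

section Semiinvariants

lemma linearIndependent_apply_of_forall_apply_eq_zero {ι k G V : Type*} [Field k] [Group G]
    [AddCommGroup V] [Module k V] (ρ : Representation k G V) {v : V} {A : End k V} (hA : A v ≠ 0)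
    {g : ι → G} (hg : ∀ i j, i ≠ j → A (ρ ((g i)⁻¹ * g j) v) = 0) :
    LinearIndependent k fun i => ρ (g i) v := by
  rw [linearIndependent_iff']
  intro s c hc i hi
  have h := congrArg (fun x => A (ρ (g i)⁻¹ x)) hc
  simp only [map_sum, map_smul, map_zero, ← Module.End.mul_apply (ρ _), ← map_mul] at h
  rw [Finset.sum_eq_single_of_mem i hi fun j _ hj => by rw [hg i j hj.symm, smul_zero],
    inv_mul_cancel, map_one, Module.End.one_apply] at h
  exact (smul_eq_zero.1 h).resolve_right hA

variable {X k G V : Type*} [Group X] [Field k] [Group G] [AddCommGroup V] [Module k V]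
  (π : X →* G) (χ : X →* kˣ) (ρ : Representation k G V)

/-- The vectors on which `X`, acting through `π : X →* G`, acts by the linear character `χ`. -/
def semiinvariants : Submodule k V where
  carrier := {v | ∀ x, ρ (π x) v = χ x • v}
  zero_mem' := by simp
  add_mem' hv hw x := by rw [map_add, hv, hw, smul_add]
  smul_mem' c v hv x := by rw [map_smul, hv, smul_comm]

/-- The operator `∑ x, χ(x)⁻¹ ρ(π x)`, which is `|X|` times a projection onto the
`χ`-semiinvariants. -/
def semiinvariantSum [Fintype X] : End k V := ∑ x, (χ x)⁻¹ • ρ (π x)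

variable {π χ ρ}

lemma semiinvariantSum_apply [Fintype X] (v : V) :
    semiinvariantSum π χ ρ v = ∑ x, (χ x)⁻¹ • ρ (π x) v := by
  simp only [semiinvariantSum, LinearMap.sum_apply, LinearMap.smul_apply]

lemma semiinvariantSum_apply_mem [Fintype X] (v : V) :
    semiinvariantSum π χ ρ v ∈ semiinvariants π χ ρ := fun x => by
  rw [semiinvariantSum_apply, map_sum, Finset.smul_sum]
  refine Fintype.sum_equiv (Equiv.mulLeft x) _ _ fun y => ?_
  simp [smul_smul, Units.smul_def, mul_comm]

lemma semiinvariantSum_apply_apply [Fintype X] (x : X) (v : V) :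
    semiinvariantSum π χ ρ (ρ (π x) v) = χ x • semiinvariantSum π χ ρ v := by
  rw [semiinvariantSum_apply, semiinvariantSum_apply, Finset.smul_sum]
  refine Fintype.sum_equiv (Equiv.mulRight x) _ _ fun y => ?_
  simp [smul_smul, Units.smul_def]

lemma semiinvariantSum_apply_of_mem [Fintype X] {v : V} (hv : v ∈ semiinvariants π χ ρ) :
    semiinvariantSum π χ ρ v = (Fintype.card X : k) • v := by
  simp [semiinvariantSum_apply, hv _, Nat.cast_smul_eq_nsmul]

lemma semiinvariantSum_apply_eq_zero [Fintype X] {v : V} (hv : v ∈ semiinvariants π χ ρ) {g : G}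
    {x y : X} (hg : π y * g = g * π x) (hχ : χ y ≠ χ x) :
    semiinvariantSum π χ ρ (ρ g v) = 0 := by
  have h : (χ y : k) • semiinvariantSum π χ ρ (ρ g v) =
      (χ x : k) • semiinvariantSum π χ ρ (ρ g v) := by
    rw [← Units.smul_def, ← Units.smul_def, ← semiinvariantSum_apply_apply,
      ← Module.End.mul_apply (ρ _), ← map_mul, hg, map_mul, Module.End.mul_apply, hv,
      Units.smul_def, map_smul, map_smul, Units.smul_def]
  rw [← sub_eq_zero, ← sub_smul, smul_eq_zero, sub_eq_zero] at h
  exact h.resolve_left fun h => hχ (Units.ext h)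

universe u v

lemma exists_irreducible_semiinvariants_ne_bot {k : Type u} {G : Type v} {X : Type*} [Group X]
    [Finite X] [Field k] [CharZero k] [Group G] [Finite G] {π : X →* G} {χ : X →* kˣ}
    (h : π.ker ≤ χ.ker) :
    ∃ (W : Type (max u v)) (_ : AddCommGroup W) (_ : Module k W) (_ : FiniteDimensional k W)
      (κ : Representation k G W), IsIrreducible κ ∧ semiinvariants π χ κ ≠ ⊥ := by
  classical
  have := Fintype.ofFinite X
  have := Fintype.ofFinite G
  have : NeZero (Nat.card G : k) := ⟨Nat.cast_ne_zero.2 Nat.card_pos.ne'⟩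
  let v := semiinvariantSum π χ (leftRegular k G) (MonoidAlgebra.single 1 1)
  have hv : v.coeff 1 = ({x | π x = 1} : Finset X).card := by
    have hterm (x : X) : ((χ x)⁻¹ • leftRegular k G (π x) (.single 1 1)).coeff 1 =
        if π x = 1 then 1 else 0 := by
      split_ifs with hx
      · simp [hx, MonoidHom.mem_ker.1 (h hx)]
      · simp [Units.smul_def, hx]
    simp only [v, semiinvariantSum_apply, MonoidAlgebra.coeff_sum, Finsupp.coe_finsetSum,
      Finset.sum_apply, hterm, Finset.sum_boole]
  have hv0 : v ≠ 0 := fun h0 => by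
    have hcard : ({x | π x = 1} : Finset X).card ≠ 0 :=
      Finset.card_ne_zero_of_mem (a := 1) (by simp)
    rw [h0, MonoidAlgebra.coeff_zero, Finsupp.coe_zero, Pi.zero_apply, eq_comm,
      Nat.cast_eq_zero] at hv
    exact hcard hv
  obtain ⟨W, _, _, _, κ, hκ, p, hp⟩ := exists_irreducible_quotient_ne_zero (leftRegular k G) hv0
  refine ⟨W, _, _, ‹_›, κ, hκ, (Submodule.ne_bot_iff _).2 ⟨p v, fun x => ?_, hp⟩⟩
  rw [← p.isIntertwining, semiinvariantSum_apply_mem, Units.smul_def, map_smul, Units.smul_def]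

end Semiinvariants

universe u

section PrincipalSeries

variable {F : Type} [Field F]

variable (F) in
/-- The action of the torus on the unipotent subgroup by conjugation, with `s` acting as
multiplication by `s ^ 2`. -/
def torusAction : Fˣ →* MulAut (Multiplicative F) :=
  (MulAutMultiplicative F).symm.toMonoidHom.comp
    ((DistribMulAction.toAddAut Fˣ F).comp (powMonoidHom 2))

/-- The map onto the image in `PSL2 F` of the upper triangular matrices. -/
def borel : Multiplicative F ⋊[torusAction F] Fˣ →* PSL2 F :=
  SemidirectProduct.lift unipotent torus fun s => MonoidHom.ext fun b => by
    refine (mul_inv_eq_iff_eq_mul.2 (torus_mul_unipotent s b.toAdd)).symm.trans ?_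
    simp

lemma torus_mul_unipotent_mem_borel_range (s : Fˣ) (b : Multiplicative F) :
    torus s * unipotent b ∈ (borel (F := F)).range :=
  mul_mem ⟨.inr s, SemidirectProduct.lift_inr ..⟩ ⟨.inl b, SemidirectProduct.lift_inl ..⟩

lemma psl_mem_borel_range_iff {a b c d : F} (h : a * d - b * c = 1) :
    psl a b c d h ∈ (borel (F := F)).range ↔ c = 0 := by
  refine ⟨fun ⟨⟨b', s⟩, hs⟩ => ?_, ?_⟩
  · have hs : unipotent (.ofAdd b'.toAdd) * torus s = psl a b c d h := hs
    rw [torus_apply, unipotent_ofAdd, psl_mul_psl, psl_eq_psl_iff] at hs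
    rcases hs with ⟨-, -, hc, -⟩ | ⟨-, -, hc, -⟩ <;> simpa using hc.symm
  · rintro rfl
    obtain ⟨s, hs⟩ := exists_psl_eq_torus_mul_unipotent h
    exact hs ▸ torus_mul_unipotent_mem_borel_range _ _

lemma right_sq_eq_one_of_borel_eq_one {x : Multiplicative F ⋊[torusAction F] Fˣ}
    (hx : borel x = 1) : x.right ^ 2 = 1 := by
  have hx : unipotent (.ofAdd x.left.toAdd) * torus x.right = 1 := hx
  rw [torus_apply, unipotent_ofAdd, psl_mul_psl, one_eq_psl, psl_eq_psl_iff] at hx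
  have h : ((x.right⁻¹ : Fˣ) : F) ^ 2 = 1 := by
    rw [sq_eq_one_iff]
    simpa using hx.imp (fun h => h.2.2.2) fun h => h.2.2.2
  rw [← inv_eq_one, ← inv_pow]
  exact Units.ext h

/-- Representatives of the cosets of the Borel subgroup, indexed by the projective line. -/
def borelCosetRep (i : Option F) : PSL2 F :=
  i.elim 1 fun b => unipotent (.ofAdd b) * weyl

lemma inv_borelCosetRep_mul_notMem {i j : Option F} (hij : i ≠ j) :
    (borelCosetRep i)⁻¹ * borelCosetRep j ∉ (borel (F := F)).range := by
  have hsome (b : F) : borelCosetRep (some b) ∉ (borel (F := F)).range := by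
    rw [borelCosetRep, Option.elim_some, unipotent_ofAdd, weyl, psl_mul_psl,
      psl_mem_borel_range_iff]
    simp
  rcases i with - | b <;> rcases j with - | b'
  · exact absurd rfl hij
  · simpa [borelCosetRep] using hsome b'
  · rw [← inv_mem_iff]
    simpa [borelCosetRep] using hsome b
  · rw [borelCosetRep, borelCosetRep, Option.elim_some, Option.elim_some, unipotent_ofAdd,
      unipotent_ofAdd, weyl, psl_mul_psl, psl_mul_psl, psl_inv, psl_mul_psl,
      psl_mem_borel_range_iff]
    intro h
    exact hij (congrArg some (by linear_combination h))

variable {k V : Type*} [Field k] [AddCommGroup V] [Module k V]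

lemma semiinvariantSum_borel_apply_eq_zero [Fintype (Multiplicative F ⋊[torusAction F] Fˣ)]
    {ρ : Representation k (PSL2 F) V} {χ : Fˣ →* kˣ} {t : Fˣ} (ht : χ t ^ 2 ≠ 1) {v : V}
    (hv : v ∈ semiinvariants borel (χ.comp SemidirectProduct.rightHom) ρ) {g : PSL2 F}
    (hg : g ∉ (borel (F := F)).range) :
    semiinvariantSum borel (χ.comp SemidirectProduct.rightHom) ρ (ρ g v) = 0 := by
  have hweyl : semiinvariantSum borel (χ.comp SemidirectProduct.rightHom) ρ (ρ weyl v) = 0 := by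
    refine semiinvariantSum_apply_eq_zero hv (x := .inr t) (y := .inr t⁻¹) ?_ fun h => ht ?_
    · simp only [borel, SemidirectProduct.lift_inr, weyl_mul_torus]
    · simpa [sq, inv_eq_iff_mul_eq_one] using h
  rcases eq_torus_mul_unipotent_or g with ⟨s, b, rfl⟩ | ⟨b, s, b', rfl⟩
  · exact absurd (torus_mul_unipotent_mem_borel_range s b) hg
  · obtain ⟨y, hy⟩ := torus_mul_unipotent_mem_borel_range s b'
    have hb : unipotent b = borel (.inl b) := (SemidirectProduct.lift_inl ..).symm
    rw [mul_assoc _ (torus s), ← hy, hb, map_mul, map_mul, Module.End.mul_apply, hv y,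
      Module.End.mul_apply, Units.smul_def, map_smul, map_smul, map_smul,
      semiinvariantSum_apply_apply, hweyl, smul_zero, smul_zero]

theorem exists_irreducible_natCard_add_one_le_finrank (k : Type u) {F : Type} [Field k]
    [IsAlgClosed k] [CharZero k] [Field F] [Finite F] (hF : ¬ Nat.card F - 1 ∣ 4) :
    ∃ (W : Type u) (_ : AddCommGroup W) (_ : Module k W) (_ : FiniteDimensional k W)
      (κ : Representation k (PSL2 F) W), IsIrreducible κ ∧ Nat.card F + 1 ≤ finrank k W := by
  have := Fintype.ofFinite F
  have : Finite (Multiplicative F ⋊[torusAction F] Fˣ) :=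
    .of_equiv _ SemidirectProduct.equivProd.symm
  have := Fintype.ofFinite (Multiplicative F ⋊[torusAction F] Fˣ)
  obtain ⟨ψ, hψ⟩ : ∃ ψ : Fˣ →* kˣ, orderOf ψ = Nat.card F - 1 := by
    have : NeZero (Nat.card Fˣ : k) := ⟨Nat.cast_ne_zero.2 Nat.card_pos.ne'⟩
    obtain ⟨e⟩ := IsCyclic.monoidHom_equiv_self Fˣ k
    obtain ⟨s, hs⟩ := IsCyclic.exists_ofOrder_eq_natCard (α := Fˣ)
    exact ⟨e.symm s, by rw [MulEquiv.orderOf_eq, hs, Nat.card_units]⟩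
  obtain ⟨t, ht⟩ : ∃ t, (ψ ^ 2) t ^ 2 ≠ 1 := by
    by_contra! h
    refine hF (hψ ▸ orderOf_dvd_of_pow_eq_one (MonoidHom.ext fun t => ?_))
    simpa [← pow_mul] using h t
  obtain ⟨W, _, _, _, κ, hκ, hbot⟩ := exists_irreducible_semiinvariants_ne_bot (k := k)
    (π := borel) (χ := (ψ ^ 2).comp SemidirectProduct.rightHom) fun x hx => by
      simp [← map_pow, right_sq_eq_one_of_borel_eq_one hx]
  obtain ⟨v, hv, hv0⟩ := (Submodule.ne_bot_iff _).1 hbot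
  have hA : semiinvariantSum borel ((ψ ^ 2).comp SemidirectProduct.rightHom) κ v ≠ 0 := by
    rw [semiinvariantSum_apply_of_mem hv]
    exact smul_ne_zero (Nat.cast_ne_zero.2 Fintype.card_ne_zero) hv0
  have hind := linearIndependent_apply_of_forall_apply_eq_zero κ hA (g := borelCosetRep)
    fun i j hij => semiinvariantSum_borel_apply_eq_zero ht hv (inv_borelCosetRep_mul_notMem hij)
  refine ⟨W, _, _, ‹_›, κ, hκ, ?_⟩
  simpa [Nat.card_eq_fintype_card] using hind.fintype_card_le_finrank

end PrincipalSeries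

section FiniteField

variable {F : Type*} [Field F]

lemma exists_sq_add_sq_eq [Finite F] (x : F) : ∃ a b : F, a ^ 2 + b ^ 2 = x := by
  have := Fintype.ofFinite F
  rcases eq_or_ne (ringChar F) 2 with h | h
  · obtain ⟨a, rfl⟩ := FiniteField.isSquare_of_char_two h x
    exact ⟨a, 0, by ring⟩
  · obtain ⟨a, b, hab⟩ := FiniteField.exists_root_sum_quadratic (f := .X ^ 2)
      (g := .X ^ 2 - .C x) (Polynomial.degree_X_pow 2) (Polynomial.degree_X_pow_sub_C two_pos x)
      (FiniteField.odd_card_of_char_ne_two h)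
    refine ⟨a, b, sub_eq_zero.1 ?_⟩
    simpa [add_sub_assoc] using hab

lemma exists_ringEquiv_mul_of_sq_mul [Finite F] {f : F →+ F} (hf : Function.Injective f)
    (h : ∀ s, ∃ r, ∀ b, f (s ^ 2 * b) = r * f b) :
    ∃ (c : Fˣ) (φ : F ≃+* F), ∀ b, f b = c * φ b := by
  have hf1 : f 1 ≠ 0 := (map_ne_zero_iff f hf).2 one_ne_zero
  have hsq (s b : F) : f (s ^ 2 * b) * f 1 = f (s ^ 2) * f b := by
    obtain ⟨r, hr⟩ := h s
    have h1 := hr 1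
    rw [mul_one] at h1
    rw [hr, h1]
    ring
  have hmul (x b : F) : f (x * b) * f 1 = f x * f b := by
    obtain ⟨y, z, rfl⟩ := exists_sq_add_sq_eq x
    rw [add_mul, map_add, map_add, add_mul, add_mul, hsq, hsq]
  let φ : F →+* F :=
    { toFun := fun b => f b / f 1
      map_one' := div_self hf1
      map_mul' := fun x y => by
        field_simp
        linear_combination hmul x y
      map_zero' := by simp
      map_add' := fun x y => by rw [map_add, add_div] }
  refine ⟨.mk0 _ hf1, .ofBijective φ (Finite.injective_iff_bijective.1 φ.injective), fun b => ?_⟩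
  exact (mul_div_cancel₀ (f b) hf1).symm

lemma natCard_ringEquiv [Finite F] (p n : ℕ) [Fact p.Prime] (hF : Nat.card F = p ^ n) :
    Nat.card (F ≃+* F) = n := by
  have := Fintype.ofFinite F
  have : CharP F p := charP_of_card_eq_prime_pow (Nat.card_eq_fintype_card.symm.trans hF)
  let _ : Algebra (ZMod p) F := ZMod.algebra F p
  let e : (F ≃+* F) ≃ (F ≃ₐ[ZMod p] F) :=
    { toFun := fun φ => .ofRingEquiv (f := φ) fun x =>
        RingHom.congr_fun (Subsingleton.elim ((φ : F →+* F).comp (algebraMap (ZMod p) F)) _) x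
      invFun := AlgEquiv.toRingEquiv
      left_inv := fun _ => rfl
      right_inv := fun _ => rfl }
  have hp : p ^ finrank (ZMod p) F = p ^ n := by
    rw [← hF, Module.natCard_eq_pow_finrank (K := ZMod p), Nat.card_zmod]
  rw [Nat.card_congr e, IsGalois.card_aut_eq_finrank]
  exact Nat.pow_right_injective (Fact.out : p.Prime).two_le hp

end FiniteField

section Index

variable {G : Type*} [Group G]

lemma relIndex_sup_eq_relIndex_of_normal [Finite G] (H K : Subgroup G) [K.Normal] :
    H.relIndex (H ⊔ K) = H.relIndex K := by
  have h1 := Subgroup.relIndex_mul_relIndex (H ⊓ K) K (H ⊔ K) inf_le_right le_sup_right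
  have h2 := Subgroup.relIndex_mul_relIndex (H ⊓ K) H (H ⊔ K) inf_le_left le_sup_left
  rw [Subgroup.inf_relIndex_right, Subgroup.relIndex_sup_right] at h1
  rw [Subgroup.inf_relIndex_left, ← h1, mul_comm] at h2
  exact Nat.eq_of_mul_eq_mul_right (Nat.pos_of_ne_zero Subgroup.index_ne_zero_of_finite) h2

lemma natCard_dvd_natCard_of_forall_exists {A B : Type*} [Group A] [Group B] [Finite B]
    (R : Subgroup (A × B)) (hA : ∀ a, ∃ b, (a, b) ∈ R) (hB : ∀ a, (a, 1) ∈ R → a = 1) :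
    Nat.card A ∣ Nat.card B := by
  refine (Subgroup.card_dvd_of_surjective ((MonoidHom.fst A B).comp R.subtype) fun a => ?_).trans
    (Subgroup.card_dvd_of_injective ((MonoidHom.snd A B).comp R.subtype) ?_)
  · obtain ⟨b, hb⟩ := hA a
    exact ⟨⟨_, hb⟩, rfl⟩
  · rw [injective_iff_map_eq_one]
    rintro ⟨⟨a, b⟩, h⟩ rfl
    obtain rfl := hB a h
    rfl

end Index

section AutomorphismGroup

open scoped Pointwise

lemma conj_smul_eq_iff_mem_normalizer {G : Type*} [Group G] {H : Subgroup G} {g : G} :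
    MulAut.conj g • H = H ↔ g ∈ Subgroup.normalizer (H : Set G) :=
  Subgroup.conjAct_pointwise_smul_iff

lemma smul_conj_smul {G : Type*} [Group G] (α : MulAut G) (g : G) (H : Subgroup G) :
    α • MulAut.conj g • H = MulAut.conj (α g) • α • H := by
  rw [smul_smul, smul_smul]
  congr 1
  ext
  simp

variable {F : Type} [Field F]

lemma normalizer_unipotent_range :
    Subgroup.normalizer ((unipotent (F := F)).range : Set (PSL2 F)) = borel.range := by
  refine le_antisymm (fun g hg => ?_) ?_
  · obtain ⟨a, b, c, d, h, rfl⟩ := exists_eq_psl g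
    obtain ⟨x, hx⟩ := (Subgroup.mem_normalizer_iff.1 hg _).1 ⟨.ofAdd 1, rfl⟩
    have hB : unipotent x ∈ (borel (F := F)).range := ⟨.inl x, SemidirectProduct.lift_inl ..⟩
    rw [hx, unipotent_ofAdd, psl_inv, psl_mul_psl, psl_mul_psl, psl_mem_borel_range_iff] at hB
    rw [psl_mem_borel_range_iff]
    simpa using (by linear_combination -hB : c ^ 2 = 0)
  · rintro - ⟨x, rfl⟩
    exact mul_mem (Subgroup.le_normalizer ⟨x.left, rfl⟩) (torus_mem_normalizer x.right)

lemma conj_smul_unipotent_range {x : PSL2 F} (hx : x ∈ (borel (F := F)).range) :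
    MulAut.conj x • (unipotent (F := F)).range = unipotent.range := by
  rwa [conj_smul_eq_iff_mem_normalizer, normalizer_unipotent_range]

lemma weyl_mul_psl_mul_weyl {a b c d : F} (h : a * d - b * c = 1) :
    weyl * psl a b c d h * weyl = psl d (-c) (-b) a (by linear_combination h) := by
  rw [weyl, psl_mul_psl, psl_mul_psl, psl_eq_psl_iff]
  right
  refine ⟨?_, ?_, ?_, ?_⟩ <;> ring

lemma inv_weyl : (weyl : PSL2 F)⁻¹ = weyl :=
  inv_eq_of_mul_eq_one_left weyl_mul_weyl

lemma mem_torus_range_iff {g : PSL2 F} :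
    g ∈ torus.range ↔ g ∈ borel.range ∧ weyl * g * weyl ∈ borel.range := by
  constructor
  · rintro ⟨s, rfl⟩
    rw [torus_apply, weyl_mul_psl_mul_weyl, psl_mem_borel_range_iff, psl_mem_borel_range_iff]
    simp
  · obtain ⟨a, b, c, d, h, rfl⟩ := exists_eq_psl g
    rw [weyl_mul_psl_mul_weyl, psl_mem_borel_range_iff, psl_mem_borel_range_iff, neg_eq_zero]
    rintro ⟨rfl, rfl⟩
    obtain ⟨s, hs⟩ := exists_psl_eq_torus_mul_unipotent h
    exact ⟨s, by rw [hs, zero_div, ofAdd_zero, map_one, mul_one]⟩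

lemma eq_one_of_forall_conj_mem_borel_range {y : PSL2 F}
    (h : ∀ x, x⁻¹ * y * x ∈ (borel (F := F)).range) : y = 1 := by
  have hy := h 1
  have hyw := h weyl
  rw [inv_one, one_mul, mul_one] at hy
  rw [inv_weyl] at hyw
  obtain ⟨s, rfl⟩ := mem_torus_range_iff.2 ⟨hy, hyw⟩
  have hu := h (unipotent (.ofAdd 1) * weyl)
  have hassoc : (unipotent (.ofAdd 1) * weyl)⁻¹ * torus s * (unipotent (.ofAdd 1) * weyl) =
      weyl * ((unipotent (.ofAdd 1))⁻¹ * torus s * unipotent (.ofAdd 1)) * weyl := by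
    rw [mul_inv_rev, inv_weyl]
    group
  rw [hassoc, unipotent_ofAdd, torus_apply, psl_inv, psl_mul_psl, psl_mul_psl,
    weyl_mul_psl_mul_weyl, psl_mem_borel_range_iff] at hu
  rw [torus_eq_one_iff, sq, mul_eq_one_iff_eq_inv]
  exact Units.ext (by linear_combination -hu)

variable (F) in
/-- The automorphisms of `PSL2 F` which normalize the groups of upper and of lower unitriangular
matrices. -/
def unitriangularStabilizer : Subgroup (MulAut (PSL2 F)) :=
  MulAction.stabilizer _ (unipotent (F := F)).range ⊓
    MulAction.stabilizer _ (MulAut.conj (weyl : PSL2 F) • (unipotent (F := F)).range)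

lemma conj_mem_unitriangularStabilizer_iff {g : PSL2 F} :
    MulAut.conj g ∈ unitriangularStabilizer F ↔ g ∈ torus.range := by
  rw [mem_torus_range_iff, unitriangularStabilizer, Subgroup.mem_inf, MulAction.mem_stabilizer_iff,
    MulAction.mem_stabilizer_iff, conj_smul_eq_iff_mem_normalizer, normalizer_unipotent_range,
    smul_smul, ← inv_smul_eq_iff, smul_smul, ← map_inv, ← map_mul, ← map_mul, inv_weyl, ← mul_assoc,
    conj_smul_eq_iff_mem_normalizer, normalizer_unipotent_range]

lemma apply_torus_mem_of_mem_unitriangularStabilizer {α : MulAut (PSL2 F)}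
    (hα : α ∈ unitriangularStabilizer F) (s : Fˣ) : α (torus s) ∈ (torus (F := F)).range := by
  rw [← conj_mem_unitriangularStabilizer_iff]
  have h : MulAut.conj (α (torus s)) = α * MulAut.conj (torus s) * α⁻¹ := by ext; simp
  rw [h]
  exact mul_mem (mul_mem hα (conj_mem_unitriangularStabilizer_iff.2 ⟨s, rfl⟩)) (inv_mem hα)

lemma eq_one_of_mem_unitriangularStabilizer {α : MulAut (PSL2 F)}
    (hα : α ∈ unitriangularStabilizer F) (hu : ∀ b, α (unipotent b) = unipotent b) : α = 1 := by
  have hfix (x : PSL2 F) : α • MulAut.conj x • (unipotent (F := F)).range =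
      MulAut.conj x • (unipotent (F := F)).range := by
    rcases eq_torus_mul_unipotent_or x with ⟨s, b, rfl⟩ | ⟨b, s, b', rfl⟩
    · rw [conj_smul_unipotent_range (torus_mul_unipotent_mem_borel_range s b), hα.1]
    · rw [mul_assoc _ (torus s), map_mul, mul_smul,
        conj_smul_unipotent_range (torus_mul_unipotent_mem_borel_range s b'), map_mul,
        mul_smul, smul_conj_smul, hα.2, hu]
  refine MulEquiv.ext fun g => ?_
  have h : g⁻¹ * α g = 1 := eq_one_of_forall_conj_mem_borel_range fun x => ?_
  · rw [inv_mul_eq_one] at h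
    exact h.symm
  · have hg := hfix (g * x)
    rw [map_mul, mul_smul, smul_conj_smul, hfix x] at hg
    rw [← normalizer_unipotent_range, ← conj_smul_eq_iff_mem_normalizer, map_mul, map_mul, mul_smul,
      mul_smul, map_inv, inv_smul_eq_iff, map_mul, mul_smul, hg, map_inv, inv_smul_smul]

lemma natCard_unipotent_range : Nat.card (unipotent (F := F)).range = Nat.card F :=
  (Nat.card_congr (MonoidHom.ofInjective unipotent_injective).toEquiv).symm

lemma two_mul_index_unipotent_range [Finite F] (hF : ringChar F ≠ 2) :
    2 * (unipotent (F := F)).range.index = (Nat.card F + 1) * (Nat.card F - 1) := by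
  have h := (unipotent (F := F)).range.card_mul_index
  rw [natCard_unipotent_range] at h
  refine Nat.eq_of_mul_eq_mul_left (Nat.card_pos (α := F)) ?_
  rw [mul_left_comm, h, two_mul_natCard_psl2 hF, mul_assoc]

lemma exists_conj_smul_smul_unipotent_range [Finite F] (hF : ringChar F ≠ 2)
    (α : MulAut (PSL2 F)) :
    ∃ g : PSL2 F, MulAut.conj g • α • (unipotent (F := F)).range = unipotent.range := by
  have : Fact (ringChar F).Prime := ⟨CharP.char_is_prime F _⟩
  have := Fintype.ofFinite F
  obtain ⟨n, -, hn⟩ := FiniteField.card F (ringChar F)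
  have hP : IsPGroup (ringChar F) (unipotent (F := F)).range := by
    refine IsPGroup.of_card (n := n) ?_
    rw [natCard_unipotent_range, Nat.card_eq_fintype_card, hn]
  have hindex : ¬ ringChar F ∣ (unipotent (F := F)).range.index := fun h => by
    have hdvd : ringChar F ∣ Nat.card F := by
      rw [Nat.card_eq_fintype_card, hn]
      exact dvd_pow_self _ n.ne_zero
    have h2 := (h.mul_left 2).trans (two_mul_index_unipotent_range hF).dvd
    have hq := Nat.sub_add_cancel (Finite.one_lt_card (α := F)).le
    rcases (Fact.out : (ringChar F).Prime).dvd_mul.1 h2 with h | h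
    · exact (Fact.out : (ringChar F).Prime).not_dvd_one ((Nat.dvd_add_right hdvd).1 h)
    · exact (Fact.out : (ringChar F).Prime).not_dvd_one ((Nat.dvd_add_right h).1 (hq ▸ hdvd))
  let P : Sylow (ringChar F) (PSL2 F) := hP.toSylow hindex
  obtain ⟨g, hg⟩ := MulAction.exists_smul_eq (PSL2 F) (α • P) P
  exact ⟨g, congrArg Sylow.toSubgroup hg⟩

lemma exists_conj_mul_mem_unitriangularStabilizer [Finite F] (hF : ringChar F ≠ 2)
    (α : MulAut (PSL2 F)) : ∃ g, MulAut.conj g * α ∈ unitriangularStabilizer F := by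
  obtain ⟨g, hg⟩ := exists_conj_smul_smul_unipotent_range hF α
  have hw := smul_conj_smul (MulAut.conj g * α) weyl (unipotent (F := F)).range
  rw [← mul_smul] at hg
  rw [hg] at hw
  rcases eq_torus_mul_unipotent_or ((MulAut.conj g * α) weyl) with ⟨s, b, h⟩ | ⟨b, s, b', h⟩
  · rw [h, conj_smul_unipotent_range (torus_mul_unipotent_mem_borel_range s b)] at hw
    have hmem := smul_left_cancel _ (hw.trans hg.symm)
    rw [conj_smul_eq_iff_mem_normalizer, normalizer_unipotent_range, weyl,
      psl_mem_borel_range_iff] at hmem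
    exact absurd hmem one_ne_zero
  · refine ⟨(unipotent b)⁻¹ * g, Subgroup.mem_inf.2 ⟨?_, ?_⟩⟩
    · rw [map_mul, mul_assoc, MulAction.mem_stabilizer_iff, mul_smul, hg]
      exact Subgroup.conj_smul_eq_self_of_mem (inv_mem ⟨b, rfl⟩)
    · rw [map_mul, mul_assoc, MulAction.mem_stabilizer_iff, mul_smul, hw, h,
        mul_assoc _ (torus s), map_mul, mul_smul,
        conj_smul_unipotent_range (torus_mul_unipotent_mem_borel_range s b'), map_mul, mul_smul,
        map_inv, inv_smul_smul]

lemma index_unitriangularStabilizer_dvd [Finite F] (hF : ringChar F ≠ 2) :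
    (unitriangularStabilizer F).index ∣ Nat.card F * (Nat.card F + 1) := by
  have htop : unitriangularStabilizer F ⊔ (MulAut.conj (G := PSL2 F)).range = ⊤ := by
    refine eq_top_iff.2 fun α _ => ?_
    obtain ⟨g, hg⟩ := exists_conj_mul_mem_unitriangularStabilizer hF α
    rw [← inv_mul_cancel_left (MulAut.conj g) α, ← map_inv]
    exact mul_mem (Subgroup.mem_sup_right ⟨_, rfl⟩) (Subgroup.mem_sup_left hg)
  have hnormal : (MulAut.conj (G := PSL2 F)).range.Normal :=
    ⟨by rintro - ⟨g, rfl⟩ α; exact ⟨α g, by ext; simp⟩⟩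
  rw [← Subgroup.relIndex_top_right, ← htop, relIndex_sup_eq_relIndex_of_normal,
    ← Subgroup.index_comap, ← index_torus_range hF]
  exact Subgroup.index_dvd_of_le fun g hg => conj_mem_unitriangularStabilizer_iff.2 hg

lemma exists_apply_unipotent_eq [Finite F] {α : MulAut (PSL2 F)}
    (hα : α ∈ unitriangularStabilizer F) : ∃ (c : Fˣ) (φ : F ≃+* F),
      ∀ b, α (unipotent (.ofAdd b)) = unipotent (.ofAdd (c * φ b)) := by
  have hex (b : F) : ∃ b', unipotent (.ofAdd b') = α (unipotent (.ofAdd b)) :=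
    hα.1.le ⟨_, ⟨_, rfl⟩, rfl⟩
  choose f hf using hex
  have hadd (x y : F) : f (x + y) = f x + f y := by
    refine Multiplicative.ofAdd.injective (unipotent_injective ?_)
    rw [hf, ofAdd_add, ofAdd_add, map_mul, map_mul, map_mul, hf, hf]
  have hinj : Function.Injective f := fun x y hxy => by
    refine Multiplicative.ofAdd.injective (unipotent_injective (α.injective ?_))
    rw [← hf, hxy, hf]
  have hsq (s : F) : ∃ r, ∀ b, f (s ^ 2 * b) = r * f b := by
    rcases eq_or_ne s 0 with rfl | hs
    · exact ⟨0, fun b => by simpa using hadd 0 0⟩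
    · obtain ⟨r, hr⟩ := apply_torus_mem_of_mem_unitriangularStabilizer hα (.mk0 s hs)
      refine ⟨r ^ 2, fun b => Multiplicative.ofAdd.injective (unipotent_injective ?_)⟩
      have h := congrArg α (torus_mul_unipotent (.mk0 s hs) b)
      rw [map_mul, map_mul, ← hr, ← hf, torus_mul_unipotent] at h
      rw [hf, ← Units.val_mk0 hs]
      exact (mul_right_cancel h).symm
  obtain ⟨c, φ, h⟩ := exists_ringEquiv_mul_of_sq_mul (f := ⟨⟨f, by simpa using hadd 0 0⟩, hadd⟩)
    hinj hsq
  exact ⟨c, φ, fun b => by rw [← hf, ← h]; rfl⟩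

lemma natCard_unitriangularStabilizer_dvd [Finite F] :
    Nat.card (unitriangularStabilizer F) ∣ (Nat.card F - 1) * Nat.card (F ≃+* F) := by
  let ψ : (F ≃+* F) →* MulAut Fˣ :=
    { toFun := fun φ => Units.mapEquiv φ.toMulEquiv
      map_one' := rfl
      map_mul' := fun _ _ => rfl }
  have hcard : Nat.card (Fˣ ⋊[ψ] (F ≃+* F)) = (Nat.card F - 1) * Nat.card (F ≃+* F) := by
    rw [SemidirectProduct.card, Nat.card_units]
  let R : Subgroup (unitriangularStabilizer F × Fˣ ⋊[ψ] (F ≃+* F)) :=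
    { carrier := {x | ∀ b, (x.1 : MulAut (PSL2 F)) (unipotent (.ofAdd b)) =
        unipotent (.ofAdd (x.2.left * x.2.right b))}
      one_mem' := by simp
      mul_mem' := by
        rintro ⟨α, c, φ⟩ ⟨β, d, θ⟩ hα hβ b
        change (α : MulAut (PSL2 F)) ((β : MulAut (PSL2 F)) _) =
          unipotent (.ofAdd (↑(c * ψ φ d) * φ (θ b)))
        rw [hβ b, hα (d * θ b)]
        simp [ψ, mul_assoc]
      inv_mem' := by
        rintro ⟨α, c, φ⟩ hα b
        change (α : MulAut (PSL2 F)).symm _ =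
          unipotent (.ofAdd (↑(ψ φ⁻¹ c⁻¹) * φ.symm b))
        rw [MulEquiv.symm_apply_eq, hα]
        simp [ψ] }
  have : Finite (F ≃+* F) := .of_injective _ DFunLike.coe_injective
  have : Finite (Fˣ ⋊[ψ] (F ≃+* F)) := .of_equiv _ SemidirectProduct.equivProd.symm
  rw [← hcard]
  refine natCard_dvd_natCard_of_forall_exists R (fun α => ?_) fun α hα => ?_
  · obtain ⟨c, φ, h⟩ := exists_apply_unipotent_eq α.2
    exact ⟨⟨c, φ⟩, h⟩
  · exact Subtype.ext (eq_one_of_mem_unitriangularStabilizer α.2 fun b => by simpa using hα b.toAdd)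

theorem natCard_mulAut_psl2_dvd [Finite F] (hF : ringChar F ≠ 2) :
    Nat.card (MulAut (PSL2 F)) ∣
      Nat.card F * (Nat.card F + 1) * ((Nat.card F - 1) * Nat.card (F ≃+* F)) := by
  rw [← (unitriangularStabilizer F).index_mul_card]
  exact mul_dvd_mul (index_unitriangularStabilizer_dvd hF) natCard_unitriangularStabilizer_dvd

lemma natCard_mulAut_psl2_nine_dvd (hF : Nat.card F = 9) : Nat.card (MulAut (PSL2 F)) ∣ 1440 := by
  have := Nat.finite_of_card_ne_zero (hF ▸ by norm_num : Nat.card F ≠ 0)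
  have : Fact (Nat.Prime 3) := ⟨Nat.prime_three⟩
  have h := natCard_mulAut_psl2_dvd (ringChar_ne_two_of_natCard_eq_nine hF)
  rwa [natCard_ringEquiv 3 2 hF, hF] at h

lemma natCard_dvd_natCard_mulAut {G : Type*} [Group G] {M : Subgroup G} [M.Normal]
    (h : Subgroup.centralizer (M : Set G) = ⊥) : Nat.card G ∣ Nat.card (MulAut M) := by
  refine Subgroup.card_dvd_of_injective MulAut.conjNormal ?_
  rw [injective_iff_map_eq_one]
  intro g hg
  rw [← Subgroup.mem_bot, ← h, Subgroup.mem_centralizer_iff]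
  intro m hm
  have hgm := congrArg Subtype.val (DFunLike.congr_fun hg ⟨m, hm⟩)
  rw [MulAut.conjNormal_apply, MulAut.one_apply, mul_inv_eq_iff_eq_mul] at hgm
  exact hgm.symm

end AutomorphismGroup

section Constituents

lemma exists_isIrreducible_subrepresentation {k G V : Type*} [Field k] [Group G] [AddCommGroup V]
    [Module k V] [FiniteDimensional k V] [Nontrivial V] (ρ : Representation k G V) :
    ∃ S : Subrepresentation ρ, IsIrreducible S.toRepresentation := by
  have htop : (⊤ : Subrepresentation ρ) ≠ ⊥ := fun h =>
    top_ne_bot (α := Submodule k V) (congrArg Subrepresentation.toSubmodule h)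
  obtain ⟨S, hS, hmin⟩ := exists_minimalFor_of_wellFoundedLT
    (fun S : Subrepresentation ρ => S ≠ ⊥) (fun S => finrank k S.toSubmodule) ⟨⊤, htop⟩
  have hS' : S.toSubmodule ≠ ⊥ := fun h => hS (Subrepresentation.toSubmodule_injective h)
  have : Nontrivial S.toSubmodule := Submodule.nontrivial_iff_ne_bot.2 hS'
  refine ⟨S, isIrreducible_of_forall_ne_bot fun T hT => ?_⟩
  let T' : Subrepresentation ρ := ⟨T.toSubmodule.map S.toSubmodule.subtype, by
    rintro g _ ⟨v, hv, rfl⟩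
    exact ⟨_, T.apply_mem_toSubmodule g hv, rfl⟩⟩
  have hfinrank : finrank k T'.toSubmodule = finrank k T.toSubmodule :=
    Submodule.finrank_map_subtype_eq _ _
  have hT' : T' ≠ ⊥ := fun h => hT (Subrepresentation.toSubmodule_injective
    (Submodule.finrank_eq_zero.1 (hfinrank ▸ h ▸ finrank_bot k V)))
  refine Subrepresentation.toSubmodule_injective (Submodule.eq_top_of_finrank_eq ?_)
  have hle := Submodule.finrank_le T.toSubmodule
  exact hle.antisymm ((hmin hT' (hfinrank.trans_le hle)).trans_eq hfinrank)

lemma exists_irreducible_nontrivial_mulSpace_of_subgroup {k G V : Type*} [Field k] [Group G]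
    [AddCommGroup V] [Module k V] [FiniteDimensional k V] [Nontrivial V]
    (ρ : Representation k G V) (N : Subgroup G) :
    ∃ (S : Submodule k V) (σ : Representation k N S) (_ : IsIrreducible σ),
      Nontrivial (MulSpace σ ρ) := by
  obtain ⟨S, hS⟩ := exists_isIrreducible_subrepresentation (res N ρ)
  have := nontrivial_of_isIrreducible S.toRepresentation
  obtain ⟨v, hv⟩ := exists_ne (0 : S.toSubmodule)
  let i : MulSpace S.toRepresentation ρ := ⟨S.toSubmodule.subtype, fun _ => rfl⟩
  exact ⟨S.toSubmodule, S.toRepresentation, hS, i, 0, fun h =>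
    hv (Subtype.ext (DFunLike.congr_fun h v))⟩

variable {k G U V : Type*} [Field k] [Group G] [AddCommGroup U] [Module k U] [AddCommGroup V]
  [Module k V] {N M : Subgroup G} [N.Normal]

lemma apply_eq_one_of_nontrivial_mulSpace (hNM : N ≤ M) {β : Representation k M U}
    (hβ : ∀ n ∈ N.subgroupOf M, β n = 1) {ρ : Representation k G V} [IsIrreducible ρ]
    [Nontrivial (MulSpace β ρ)] {n : G} (hn : n ∈ N) : ρ n = 1 := by
  obtain ⟨φ, hφ⟩ := exists_ne (0 : MulSpace β ρ)
  obtain ⟨u, hu⟩ : ∃ u, φ u ≠ 0 := DFunLike.ne_iff.1 hφ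
  let fixed : Subrepresentation ρ := ⟨⨅ n : N, LinearMap.eqLocus (ρ n) 1, fun g v hv => by
    simp only [Submodule.mem_iInf, LinearMap.mem_eqLocus, Module.End.one_apply] at hv ⊢
    intro n
    have h := congrArg (ρ g) (hv (MulAut.conjNormal g⁻¹ n))
    simpa [← Module.End.mul_apply, ← map_mul, mul_assoc] using h⟩
  have hfixed (v : V) : v ∈ fixed ↔ ∀ n ∈ N, ρ n v = v := by
    change v ∈ ⨅ n : N, LinearMap.eqLocus (ρ n) 1 ↔ _
    simp
  have hu' : φ u ∈ fixed := (hfixed _).2 fun n hn => by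
    have h := mulSpace_apply φ ⟨n, hNM hn⟩ u
    rw [hβ _ hn] at h
    exact h.symm
  have htop : fixed = ⊤ := (eq_bot_or_eq_top fixed).resolve_left fun h => hu (by
    rw [h] at hu'
    exact hu')
  exact LinearMap.ext fun v => (hfixed v).1 (htop ▸ trivial) n hn

end Constituents

section Intermediate

variable {k G U V : Type*} [Field k] [Group G] [AddCommGroup U] [Module k U] [AddCommGroup V]
  [Module k V] {N M : Subgroup G}

/-- A representation of `N`, viewed as one of the copy of `N` inside an intermediate group `M`. -/
abbrev resSubgroupOf (hNM : N ≤ M) (σ : Representation k N U) :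
    Representation k (N.subgroupOf M) U :=
  σ.comp (Subgroup.subgroupOfEquivOfLe hNM).toMonoidHom

instance (hNM : N ≤ M) (σ : Representation k N U) [IsIrreducible σ] :
    IsIrreducible (resSubgroupOf hNM σ) :=
  isIrreducible_comp_of_surjective σ (Subgroup.subgroupOfEquivOfLe hNM).surjective

lemma finrank_mulSpace_resSubgroupOf (hNM : N ≤ M) (σ : Representation k N U)
    (ρ : Representation k G V) :
    finrank k (MulSpace (resSubgroupOf hNM σ) (res M ρ)) = finrank k (MulSpace σ ρ) := by
  let e : MulSpace σ ρ ≃ₗ[k] MulSpace (resSubgroupOf hNM σ) (res M ρ) :=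
    { toFun φ := ⟨φ.toLinearMap, fun n => φ.2 (Subgroup.subgroupOfEquivOfLe hNM n)⟩
      invFun φ := ⟨φ.toLinearMap, fun n => by
        have h := φ.2 ((Subgroup.subgroupOfEquivOfLe hNM).symm n)
        simp only [MonoidHom.comp_apply, MulEquiv.toMonoidHom_eq_coe, MonoidHom.coe_coe,
          MulEquiv.apply_symm_apply] at h
        exact h⟩
      map_add' _ _ := rfl
      map_smul' _ _ := rfl
      left_inv _ := rfl
      right_inv _ := rfl }
  exact e.finrank_eq.symm

lemma inertia_resSubgroupOf [N.Normal] (hNM : N ≤ M) (σ : Representation k N U) :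
    inertia (resSubgroupOf hNM σ) = (inertia σ).subgroupOf M := by
  let e := Subgroup.subgroupOfEquivOfLe hNM
  have hcover (m : M) (A : U ≃ₗ[k] U) :
      (m, A) ∈ inertiaCover (resSubgroupOf hNM σ) ↔ ((m : G), A) ∈ inertiaCover σ := by
    have hconj (n : N.subgroupOf M) : e (MulAut.conjNormal m n) = MulAut.conjNormal (m : G) (e n) :=
      Subtype.ext (by simp [e])
    refine and_congr_right fun _ => e.toEquiv.forall_congr fun {n} => forall_congr' fun u => ?_
    change _ = σ (e (MulAut.conjNormal m n)) (A u) ↔ _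
    rw [hconj]
    rfl
  ext m
  constructor
  · rintro ⟨⟨m, A⟩, hA, rfl⟩
    exact ⟨_, (hcover m A).1 hA, rfl⟩
  · rintro ⟨⟨_, A⟩, hA, hm⟩
    obtain rfl : _ = (m : G) := hm
    exact ⟨(m, A), (hcover m A).2 hA, rfl⟩

end Intermediate

section TwoPrime

open ArithmeticFunction.Omega

lemma cardFactors_le_of_dvd {a b : ℕ} (h : a ∣ b) (hb : b ≠ 0) : Ω a ≤ Ω b :=
  (Nat.primeFactorsList_sublist_of_dvd h hb).length_le

lemma two_lt_cardFactors_mul {m n : ℕ} (hm : Ω m = 2) (hn : 1 < n) : 2 < Ω (m * n) := by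
  have hm0 : m ≠ 0 := by
    rintro rfl
    simp at hm
  have hn' := ArithmeticFunction.cardFactors_pos_iff_one_lt.2 hn
  rw [ArithmeticFunction.cardFactors_mul hm0 (by omega)]
  omega

variable {G : Type} [Group G] [Finite G]

lemma finrank_mem_charDegrees {V : Type} [AddCommGroup V] [Module ℂ V] [FiniteDimensional ℂ V]
    (ρ : Representation ℂ G V) [IsIrreducible ρ] : finrank ℂ V ∈ charDegrees G :=
  mem_charDegrees_iff.2 ⟨V, _, _, ‹_›, ρ, ‹_›, rfl⟩

lemma ne_zero_of_mem_charDegrees {a : ℕ} (ha : a ∈ charDegrees G) : a ≠ 0 := by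
  obtain ⟨V, _, _, _, ρ, hρ, rfl⟩ := mem_charDegrees_iff.1 ha
  have := nontrivial_of_isIrreducible ρ
  exact finrank_pos.ne'

lemma eq_of_dvd_of_two_lt_cardFactors (hG : TwoPrimeHypothesis G) {a b c : ℕ}
    (ha : a ∈ charDegrees G) (hb : b ∈ charDegrees G) (hc : 2 < Ω c) (hca : c ∣ a)
    (hcb : c ∣ b) : a = b := by
  by_contra hab
  have hgcd : Nat.gcd a b ≠ 0 :=
    fun h => ne_zero_of_mem_charDegrees ha (Nat.eq_zero_of_gcd_eq_zero_left h)
  exact (hc.trans_le (cardFactors_le_of_dvd (Nat.dvd_gcd hca hcb) hgcd)).not_ge (hG a ha b hb hab)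

lemma ncard_charDegrees_le (hG : TwoPrimeHypothesis G) (L C : Finset ℕ)
    (hC : ∀ c ∈ C, 2 < Ω c) (h : ∀ a ∈ charDegrees G, a ∈ L ∨ ∃ c ∈ C, c ∣ a) :
    (charDegrees G).ncard ≤ L.card + C.card := by
  let multiples (c : ℕ) : Set ℕ := {a ∈ charDegrees G | c ∣ a}
  have hsub (c) (hc : c ∈ C) : (multiples c).Subsingleton := fun a ha b hb =>
    eq_of_dvd_of_two_lt_cardFactors hG ha.1 hb.1 (hC c hc) ha.2 hb.2
  have hfin : (⋃ c ∈ C, multiples c).Finite :=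
    C.finite_toSet.biUnion fun c hc => (hsub c hc).finite
  calc (charDegrees G).ncard ≤ (L ∪ ⋃ c ∈ C, multiples c : Set ℕ).ncard := by
        refine Set.ncard_le_ncard (fun a ha => (h a ha).imp id ?_) (L.finite_toSet.union hfin)
        rintro ⟨c, hc, hca⟩
        exact Set.mem_biUnion hc ⟨ha, hca⟩
    _ ≤ (L : Set ℕ).ncard + ∑ c ∈ C, (multiples c).ncard :=
        (Set.ncard_union_le _ _).trans (by gcongr; exact C.set_ncard_biUnion_le _)
    _ ≤ L.card + ∑ c ∈ C, 1 := by
        rw [Set.ncard_coe_finset]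
        gcongr with c hc
        have := (hsub c hc).finite.to_subtype
        exact Set.ncard_le_one_iff_subsingleton.2 (hsub c hc)
    _ = L.card + C.card := by rw [Finset.card_eq_sum_ones C]

end TwoPrime

section Clifford

open ArithmeticFunction.Omega

variable {G U V : Type} [Group G] [Finite G] [AddCommGroup U] [Module ℂ U] [FiniteDimensional ℂ U]
  [AddCommGroup V] [Module ℂ V] [FiniteDimensional ℂ V] {N M : Subgroup G}

section

variable [N.Normal] {σ : Representation ℂ N U} [IsIrreducible σ]

lemma finrank_mulSpace_eq_of_dvd (hG : TwoPrimeHypothesis G) (ρ : Representation ℂ G V)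
    [IsIrreducible ρ] [Nontrivial (MulSpace σ ρ)] (hρ : 2 < Ω (finrank ℂ V)) {W : Type}
    [AddCommGroup W] [Module ℂ W] [FiniteDimensional ℂ W] (κ : Representation ℂ G W)
    [IsIrreducible κ] [Nontrivial (MulSpace σ κ)]
    (h : finrank ℂ (MulSpace σ ρ) ∣ finrank ℂ (MulSpace σ κ)) :
    finrank ℂ (MulSpace σ κ) = finrank ℂ (MulSpace σ ρ) := by
  have := nontrivial_of_isIrreducible σ
  have hρdeg := finrank_eq_index_inertia_mul (σ := σ) (ρ := ρ)
  have hκdeg := finrank_eq_index_inertia_mul (σ := σ) (ρ := κ)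
  have hdvd : finrank ℂ V ∣ finrank ℂ W := by
    rw [hρdeg, hκdeg]
    gcongr
  have heq := eq_of_dvd_of_two_lt_cardFactors hG (finrank_mem_charDegrees ρ)
    (finrank_mem_charDegrees κ) hρ dvd_rfl hdvd
  rw [hρdeg, hκdeg] at heq
  have hindex : 0 < (inertia σ).index := Nat.pos_of_ne_zero Subgroup.index_ne_zero_of_finite
  exact (Nat.eq_of_mul_eq_mul_left hindex (Nat.eq_of_mul_eq_mul_right finrank_pos heq)).symm

lemma finrank_le_sq_finrank_mulSpace (hG : TwoPrimeHypothesis G) (hσ : inertia σ = ⊤)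
    (ρ : Representation ℂ G V) [IsIrreducible ρ] [Nontrivial (MulSpace σ ρ)]
    (hρ : 2 < Ω (finrank ℂ V))
    (hdvd : ∀ (W : Type) [AddCommGroup W] [Module ℂ W] [FiniteDimensional ℂ W]
      (κ : Representation ℂ G W), finrank ℂ (MulSpace σ ρ) ∣ finrank ℂ (MulSpace σ κ))
    {X : Type} [AddCommGroup X] [Module ℂ X] [FiniteDimensional ℂ X] (χ : Representation ℂ G X)
    [IsIrreducible χ] (hχ : ∀ n ∈ N, χ n = 1) :
    finrank ℂ X ≤ finrank ℂ (MulSpace σ ρ) ^ 2 := by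
  obtain ⟨W, _, _, _, κ, hκ, hκ', hle, -⟩ := exists_irreducible_finrank_le_mul hσ ρ χ hχ
  rwa [finrank_mulSpace_eq_of_dvd hG ρ hρ κ (hdvd W κ), ← sq] at hle

open scoped commutatorElement in
lemma commutator_mem_of_finrank_mulSpace_eq_one (hG : TwoPrimeHypothesis G)
    (ρ : Representation ℂ G V) [IsIrreducible ρ] (hρ : 2 < Ω (finrank ℂ V))
    (hone : finrank ℂ (MulSpace σ ρ) = 1) {x y : G} (hx : x ∈ inertia σ) (hy : y ∈ inertia σ) :
    ⁅x, y⁆ ∈ N := by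
  have := nontrivial_of_isIrreducible σ
  have : Nontrivial (MulSpace σ ρ) := nontrivial_of_finrank_pos (R := ℂ) (by omega)
  refine commutator_mem_of_forall_finrank_mulSpace_le_one (σ := σ) (fun W _ _ _ κ hκ => ?_) hx hy
  rcases subsingleton_or_nontrivial (MulSpace σ κ) with h0 | h0
  · exact (finrank_zero_of_subsingleton (R := ℂ)).trans_le zero_le_one
  · rw [finrank_mulSpace_eq_of_dvd hG ρ hρ κ (hone ▸ one_dvd _), hone]

end

lemma finrank_dvd_index_of_isIrreducible_res (hG : TwoPrimeHypothesis G) [M.Normal]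
    {K : Subgroup M} [K.Normal] (τ : Representation ℂ M U) [IsIrreducible (res K τ)]
    {E : Type} [AddCommGroup E] [Module ℂ E] [FiniteDimensional ℂ E] (β : Representation ℂ M E)
    [IsIrreducible β] (hβ : ∀ n ∈ K, β n = 1) (hE : 2 < Ω (finrank ℂ E)) :
    finrank ℂ U ∣ M.index := by
  have := nontrivial_of_isIrreducible β
  obtain ⟨S, _, _, _, κ, hκ, -, hS⟩ := exists_irreducible_finrank_eq_mul τ β hβ
  have := nontrivial_of_isIrreducible κ
  obtain ⟨W, _, _, _, χ, hχ, hχκ⟩ := exists_irreducible_nontrivial_mulSpace κ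
  obtain ⟨W', _, _, _, χ', hχ', hχβ⟩ := exists_irreducible_nontrivial_mulSpace β
  have hW : finrank ℂ U * finrank ℂ E ∣ finrank ℂ W := by
    rw [← hS, finrank_eq_index_inertia_mul (σ := κ) (ρ := χ)]
    exact dvd_mul_left _ _
  have hW' := finrank_eq_index_inertia_mul (σ := β) (ρ := χ')
  have heq : finrank ℂ W = finrank ℂ W' :=
    eq_of_dvd_of_two_lt_cardFactors hG (finrank_mem_charDegrees χ) (finrank_mem_charDegrees χ') hE
      (dvd_of_mul_left_dvd hW) (hW' ▸ dvd_mul_left _ _)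
  rw [heq, hW', mul_comm (inertia β).index] at hW
  exact (Nat.dvd_of_mul_dvd_mul_right finrank_pos hW).trans
    (finrank_mulSpace_mul_index_inertia_dvd χ')

end Clifford

section Classification

open ArithmeticFunction.Omega

/-- Degrees that the classification leaves undivided by any member of `degreeDivisors`. -/
def smallDegrees : Finset ℕ := {1, 2, 3, 4, 5, 6, 9, 10, 15}

/-- Products of at least three primes such that every degree outside `smallDegrees` is divisible by
one of them; by the two-prime hypothesis each of them divides at most one degree. -/
def degreeDivisors : Finset ℕ := {8, 12, 18, 20, 27, 30, 45}

lemma two_lt_cardFactors_of_mem_degreeDivisors : ∀ c ∈ degreeDivisors, 2 < Ω c := by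
  simp [degreeDivisors, ArithmeticFunction.cardFactors_apply]

/-- The conclusion of the classification for a single degree. -/
def IsClassified (n : ℕ) : Prop := n ∈ smallDegrees ∨ ∃ c ∈ degreeDivisors, c ∣ n

instance : DecidablePred IsClassified := fun _ => inferInstanceAs (Decidable (_ ∨ _))

lemma isClassified_of_dvd {m n : ℕ} (hm : ∃ c ∈ degreeDivisors, c ∣ m) (h : m ∣ n) :
    IsClassified n :=
  hm.elim fun c hc => .inr ⟨c, hc.1, hc.2.trans h⟩

lemma isClassified_of_dvd_1440 {n : ℕ} (h : n ∣ 1440) : IsClassified n := by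
  obtain ⟨a, b, ha, hb, rfl⟩ := (Nat.dvd_mul (k := n) (m := 32) (n := 45)).1 h
  have key : ∀ a ∈ Nat.divisors 32, ∀ b ∈ Nat.divisors 45, IsClassified (a * b) := by decide
  exact key a (Nat.mem_divisors.2 ⟨ha, by norm_num⟩) b (Nat.mem_divisors.2 ⟨hb, by norm_num⟩)

lemma isClassified_mul_of_dvd_four {s n : ℕ} (hs : s ∈ smallDegrees) (hn : n ∣ 4) :
    IsClassified (s * n) := by
  have key : ∀ s ∈ smallDegrees, ∀ n ∈ Nat.divisors 4, IsClassified (s * n) := by decide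
  exact key s hs n (Nat.mem_divisors.2 ⟨hn, by norm_num⟩)

lemma eq_of_dvd_mem_smallDegrees {s t : ℕ} (hs : s ∈ smallDegrees) (hts : t ∣ s) (ht : 6 ≤ t) :
    t = s ∧ t ∈ ({6, 9, 10, 15} : Finset ℕ) := by
  have key : ∀ s ∈ smallDegrees, ∀ t ∈ Nat.divisors s, 6 ≤ t →
      t = s ∧ t ∈ ({6, 9, 10, 15} : Finset ℕ) := by decide
  refine key s hs t (Nat.mem_divisors.2 ⟨hts, ?_⟩) ht
  rintro rfl
  simp [smallDegrees] at hs

lemma isClassified_mul_mul {t e d r : ℕ} (hr : r = 2 ∨ r = 3) (ht : t ∣ 4)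
    (hte : t * e ∈ smallDegrees) (hre : r ∣ e) (hrd : r ∣ d) (h : t = 1 → e = r → d = r) :
    IsClassified (t * e * d) := by
  have key : ∀ s ∈ smallDegrees, ∀ t ∈ Nat.divisors 4, ∀ e ∈ Nat.divisors s,
      ∀ r ∈ ({2, 3} : Finset ℕ), t * e = s → r ∣ e → (¬ (t = 1 ∧ e = r)) →
        ∃ c ∈ degreeDivisors, c ∣ s * r := by decide
  by_cases hter : t = 1 ∧ e = r
  · rw [hter.1, hter.2, h hter.1 hter.2]
    rcases hr with rfl | rfl <;> decide
  · have hdiv : ∀ {m n : ℕ}, m ∣ n → n ≠ 0 → m ∈ Nat.divisors n := fun h h0 =>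
      Nat.mem_divisors.2 ⟨h, h0⟩
    have hte0 : t * e ≠ 0 := fun h0 => absurd (h0 ▸ hte) (by decide)
    exact isClassified_of_dvd (key _ hte t (hdiv ht (by norm_num)) e (hdiv (dvd_mul_left _ _) hte0)
      r (by simpa using hr) rfl hre hter) (Nat.mul_dvd_mul_left _ hrd)

end Classification

section NormalSeries

open ArithmeticFunction.Omega

variable {F : Type} [Field F]

lemma exists_not_commute_of_index_mem (hF : Nat.card F = 9) {H : Subgroup (PSL2 F)}
    (hH : H.index ∈ ({6, 9, 10, 15} : Finset ℕ)) : ∃ x ∈ H, ∃ y ∈ H, ¬ Commute x y := by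
  have hcard := H.card_mul_index
  rw [natCard_psl2_nine hF] at hcard
  simp only [Finset.mem_insert, Finset.mem_singleton] at hH
  rcases hH with h | h | h | h <;> rw [h] at hcard
  · exact exists_not_commute_of_prime_dvd_natCard hF (p := 3) (by omega) (by norm_num)
      (by norm_num) (by omega)
  · exact exists_not_commute_of_prime_dvd_natCard hF (p := 5) (by omega) (by norm_num)
      (by norm_num) (by omega)
  · exact exists_not_commute_of_prime_dvd_natCard hF (p := 3) (by omega) (by norm_num)
      (by norm_num) (by omega)
  · exact exists_not_commute_of_prime_dvd_natCard hF (p := 3) (by omega) (by norm_num)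
      (by norm_num) (by omega)

variable {G : Type} [Group G] {N M : Subgroup G} {q : M →* PSL2 F}

lemma relIndex_eq_natCard_psl2 (hq : Function.Surjective q) (hker : q.ker = N.subgroupOf M) :
    N.relIndex M = Nat.card (PSL2 F) := by
  rw [Subgroup.relIndex, ← hker, Subgroup.index_ker, MonoidHom.range_eq_top.2 hq,
    Subgroup.card_top]

variable [Finite G] [N.Normal] [M.Normal]
  {U V : Type} [AddCommGroup U] [Module ℂ U] [FiniteDimensional ℂ U]
  [AddCommGroup V] [Module ℂ V] [FiniteDimensional ℂ V]
  {σ : Representation ℂ N U} [IsIrreducible σ]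

open scoped commutatorElement in
lemma le_inertia_of_mem_smallDegrees (hF : Nat.card F = 9) (hG : TwoPrimeHypothesis G)
    (hq : Function.Surjective q) (hker : q.ker = N.subgroupOf M)
    (ρ : Representation ℂ G V) [IsIrreducible ρ] [Nontrivial (MulSpace σ ρ)]
    (hsmall : (inertia σ).index * finrank ℂ (MulSpace σ ρ) ∈ smallDegrees)
    (hU : finrank ℂ U ≠ 1) : M ≤ inertia σ := by
  by_contra hM
  let H := ((inertia σ).subgroupOf M).map q
  have hH : H.index = (inertia σ).relIndex M :=
    Subgroup.index_map_eq _ hq (hker ▸ Subgroup.comap_mono le_inertia)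
  have hHtop : H ≠ ⊤ := fun h => hM (by
    rwa [← Subgroup.index_eq_one, hH, Subgroup.relIndex_eq_one] at h)
  have hdvd : H.index ∣ (inertia σ).index := by
    rw [hH, ← relIndex_sup_eq_relIndex_of_normal]
    exact Subgroup.relIndex_dvd_index_of_le le_sup_left
  obtain ⟨heq, hmem⟩ := eq_of_dvd_mem_smallDegrees hsmall (hdvd.mul_right _) (six_le_index hF hHtop)
  have hone : finrank ℂ (MulSpace σ ρ) = 1 := by
    have hindex : 0 < (inertia σ).index := Nat.pos_of_ne_zero Subgroup.index_ne_zero_of_finite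
    have hle : (inertia σ).index * finrank ℂ (MulSpace σ ρ) ≤ (inertia σ).index * 1 := by
      rw [mul_one, ← heq]
      exact Nat.le_of_dvd hindex hdvd
    exact le_antisymm (le_of_mul_le_mul_left hle hindex) finrank_pos
  have hV : 2 < Ω (finrank ℂ V) := by
    have := nontrivial_of_isIrreducible σ
    have htwo : ∀ t ∈ ({6, 9, 10, 15} : Finset ℕ), Ω t = 2 := by
      simp [ArithmeticFunction.cardFactors_apply]
    rw [finrank_eq_index_inertia_mul (σ := σ) (ρ := ρ), ← heq]
    exact two_lt_cardFactors_mul (htwo _ hmem) (lt_of_le_of_ne finrank_pos hU.symm)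
  obtain ⟨_, ⟨x, hx, rfl⟩, _, ⟨y, hy, rfl⟩, hxy⟩ := exists_not_commute_of_index_mem hF hmem
  refine hxy ?_
  have h : ⁅x, y⁆ ∈ q.ker := hker ▸ commutator_mem_of_finrank_mulSpace_eq_one hG ρ hV hone hx hy
  rwa [MonoidHom.mem_ker, map_commutatorElement, commutatorElement_eq_one_iff_commute] at h

lemma exists_prime_dvd_finrank_mulSpace (hF : Nat.card F = 9) (hG : TwoPrimeHypothesis G)
    (hNM : N ≤ M) (hq : Function.Surjective q) (hker : q.ker = N.subgroupOf M)
    (hσ : M ≤ inertia σ) (hU : ¬ finrank ℂ U ∣ M.index) :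
    ∃ r, (r = 2 ∨ r = 3) ∧ r ∣ finrank ℂ U ∧ ∀ (W : Type) [AddCommGroup W] [Module ℂ W]
      (κ : Representation ℂ G W), r ∣ finrank ℂ (MulSpace σ κ) := by
  have htop : inertia (resSubgroupOf hNM σ) = ⊤ := by
    rw [inertia_resSubgroupOf, Subgroup.subgroupOf_eq_top.2 hσ]
  obtain ⟨τ, hτ⟩ | ⟨r, hr, hrU, hdvd⟩ := exists_extension_or_exists_prime_dvd_finrank_mulSpace htop
  · obtain ⟨n, κ, hκ, hn⟩ := exists_irreducible_eight_dvd_finrank ℂ hF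
    have := isIrreducible_comp_of_surjective κ hq
    have := nontrivial_of_isIrreducible κ
    have hΩ : 2 < Ω (finrank ℂ (Fin n → ℂ)) := by
      have h8 : Ω 8 = 3 := by simp [ArithmeticFunction.cardFactors_apply]
      have h := cardFactors_le_of_dvd (by simpa using hn)
        (finrank_pos (R := ℂ) (M := Fin n → ℂ)).ne'
      omega
    refine absurd (finrank_dvd_index_of_isIrreducible_res (K := N.subgroupOf M) hG τ (κ.comp q)
      (fun m hm => ?_) hΩ) hU
    have hm : q m = 1 := MonoidHom.mem_ker.1 (hker ▸ hm)
    rw [MonoidHom.comp_apply, hm, map_one]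
  · have hsq : r ^ 2 ∣ 360 := by
      rw [← natCard_psl2_nine hF, ← relIndex_eq_natCard_psl2 hq hker]
      exact sq_dvd_index_of_forall_dvd_finrank_mulSpace htop fun V => hdvd V
    refine ⟨r, ?_, hrU, fun W _ _ κ => finrank_mulSpace_resSubgroupOf hNM σ κ ▸ hdvd W (res M κ)⟩
    have hle : r ≤ 18 := by
      have := Nat.le_of_dvd (by norm_num) hsq
      nlinarith
    interval_cases r <;> revert hr hsq <;> decide

end NormalSeries

section DegreeClassification

open ArithmeticFunction.Omega

variable {F : Type} [Field F] {G : Type} [Group G] [Finite G] {N M : Subgroup G} [N.Normal]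
  {q : M →* PSL2 F}

lemma exists_irreducible_ten_le_finrank (hF : Nat.card F = 9) (hNM : N ≤ M)
    (hq : Function.Surjective q) (hker : q.ker = N.subgroupOf M) :
    ∃ (X : Type) (_ : AddCommGroup X) (_ : Module ℂ X) (_ : FiniteDimensional ℂ X)
      (χ : Representation ℂ G X), IsIrreducible χ ∧ 10 ≤ finrank ℂ X ∧ ∀ n ∈ N, χ n = 1 := by
  have : Finite F := Nat.finite_of_card_ne_zero (hF ▸ by norm_num : Nat.card F ≠ 0)
  obtain ⟨W, _, _, _, κ, hκ, hW⟩ :=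
    exists_irreducible_natCard_add_one_le_finrank ℂ (F := F) (by rw [hF]; norm_num)
  have := isIrreducible_comp_of_surjective κ hq
  have := nontrivial_of_isIrreducible κ
  obtain ⟨X, _, _, _, χ, hχ, hmul⟩ := exists_irreducible_nontrivial_mulSpace (κ.comp q)
  obtain ⟨φ, hφ⟩ := exists_ne (0 : MulSpace (κ.comp q) χ)
  refine ⟨X, _, _, ‹_›, χ, hχ, ?_, fun n => apply_eq_one_of_nontrivial_mulSpace hNM
    (β := κ.comp q) fun m hm => ?_⟩
  · rw [hF] at hW
    exact hW.trans (LinearMap.finrank_le_finrank_of_injective (f := φ.toLinearMap)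
      (injective_of_ne_zero hφ))
  · have hm : q m = 1 := MonoidHom.mem_ker.1 (hker ▸ hm)
    rw [MonoidHom.comp_apply, hm, map_one]

variable {U V : Type} [AddCommGroup U] [Module ℂ U] [FiniteDimensional ℂ U]
  [AddCommGroup V] [Module ℂ V] [FiniteDimensional ℂ V] {σ : Representation ℂ N U} [IsIrreducible σ]

lemma finrank_eq_of_forall_dvd_finrank_mulSpace (hF : Nat.card F = 9) (hG : TwoPrimeHypothesis G)
    (hNM : N ≤ M) (hq : Function.Surjective q) (hker : q.ker = N.subgroupOf M)
    (ρ : Representation ℂ G V) [IsIrreducible ρ] [Nontrivial (MulSpace σ ρ)] (hσ : inertia σ = ⊤)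
    (hr : finrank ℂ (MulSpace σ ρ) = 2 ∨ finrank ℂ (MulSpace σ ρ) = 3)
    (hU : finrank ℂ (MulSpace σ ρ) ∣ finrank ℂ U)
    (hdvd : ∀ (W : Type) [AddCommGroup W] [Module ℂ W] (κ : Representation ℂ G W),
      finrank ℂ (MulSpace σ ρ) ∣ finrank ℂ (MulSpace σ κ)) :
    finrank ℂ U = finrank ℂ (MulSpace σ ρ) := by
  have := nontrivial_of_isIrreducible σ
  obtain ⟨m, hm⟩ := hU
  have hpos : 0 < finrank ℂ U := finrank_pos
  by_contra hne
  have hm1 : 1 < m := by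
    by_contra! hle
    interval_cases m <;> omega
  have hV : 2 < Ω (finrank ℂ V) := by
    rw [finrank_eq_index_inertia_mul (σ := σ) (ρ := ρ), hσ, Subgroup.index_top, one_mul, hm,
      ← mul_assoc]
    refine two_lt_cardFactors_mul ?_ hm1
    rcases hr with h | h <;> rw [h] <;> simp [ArithmeticFunction.cardFactors_apply]
  obtain ⟨X, _, _, _, χ, hχ, hX, hχN⟩ := exists_irreducible_ten_le_finrank hF hNM hq hker
  have hle := hX.trans
    (finrank_le_sq_finrank_mulSpace hG hσ ρ hV (fun W _ _ _ κ => hdvd W κ) χ hχN)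
  rcases hr with h | h <;> rw [h] at hle <;> norm_num at hle

variable [M.Normal]

theorem isClassified_finrank (hF : Nat.card F = 9) (hG : TwoPrimeHypothesis G) (hNM : N ≤ M)
    (hq : Function.Surjective q) (hker : q.ker = N.subgroupOf M) (hN : N.index ∣ 1440)
    (ρ : Representation ℂ G V) [IsIrreducible ρ] [Nontrivial (MulSpace σ ρ)] :
    IsClassified (finrank ℂ V) := by
  set t := (inertia σ).index
  set e := finrank ℂ (MulSpace σ ρ)
  have hM : M.index ∣ 4 := by
    have h : N.relIndex M * M.index ∣ 360 * 4 := by rwa [Subgroup.relIndex_mul_index hNM]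
    rw [relIndex_eq_natCard_psl2 hq hker, natCard_psl2_nine hF] at h
    exact Nat.dvd_of_mul_dvd_mul_left (by norm_num) h
  have hte : t * e ∣ 1440 :=
    (mul_comm t e ▸ finrank_mulSpace_mul_index_inertia_dvd (σ := σ) ρ).trans hN
  rw [finrank_eq_index_inertia_mul (σ := σ) (ρ := ρ)]
  rcases isClassified_of_dvd_1440 hte with hsmall | hlarge
  swap
  · exact isClassified_of_dvd hlarge (dvd_mul_right _ _)
  by_cases hU : finrank ℂ U ∣ 4
  · exact isClassified_mul_of_dvd_four hsmall hU
  have hMσ : M ≤ inertia σ :=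
    le_inertia_of_mem_smallDegrees hF hG hq hker ρ hsmall fun h => hU (h ▸ one_dvd 4)
  obtain ⟨r, hr, hrU, hdvd⟩ :=
    exists_prime_dvd_finrank_mulSpace hF hG hNM hq hker hMσ fun h => hU (h.trans hM)
  refine isClassified_mul_mul hr ((Subgroup.index_dvd_of_le hMσ).trans hM) hsmall (hdvd V ρ) hrU
    fun ht1 her => ?_
  subst her
  exact finrank_eq_of_forall_dvd_finrank_mulSpace hF hG hNM hq hker ρ
    (Subgroup.index_eq_one.1 ht1) hr hrU fun W _ _ κ => hdvd W κ

theorem isClassified_of_mem_charDegrees (hF : Nat.card F = 9) (hG : TwoPrimeHypothesis G)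
    (hNM : N ≤ M) (hq : Function.Surjective q) (hker : q.ker = N.subgroupOf M)
    (hN : N.index ∣ 1440) {a : ℕ} (ha : a ∈ charDegrees G) : IsClassified a := by
  obtain ⟨V, _, _, _, ρ, _, rfl⟩ := mem_charDegrees_iff.1 ha
  have := nontrivial_of_isIrreducible ρ
  obtain ⟨S, σ, _, _⟩ := exists_irreducible_nontrivial_mulSpace_of_subgroup ρ N
  exact isClassified_finrank hF hG hNM hq hker hN (σ := σ) ρ

end DegreeClassification

section Quotient

variable {F : Type} [Field F] {G : Type} [Group G] {N M : Subgroup G} [N.Normal]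

lemma index_dvd_of_centralizer_eq_bot [Finite G] [M.Normal] (hF : Nat.card F = 9)
    (e : M.map (QuotientGroup.mk' N) ≃* PSL2 F)
    (hcent : Subgroup.centralizer (M.map (QuotientGroup.mk' N) : Set (G ⧸ N)) = ⊥) :
    N.index ∣ 1440 := by
  have := Subgroup.Normal.map ‹M.Normal› _ (QuotientGroup.mk'_surjective N)
  have h := natCard_dvd_natCard_mulAut hcent
  rw [Nat.card_congr (MulAut.congr e).toEquiv] at h
  exact h.trans (natCard_mulAut_psl2_nine_dvd hF)

lemma exists_surjective_ker_eq_subgroupOf {P : Type} [Group P]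
    (e : M.map (QuotientGroup.mk' N) ≃* P) :
    ∃ q : M →* P, Function.Surjective q ∧ q.ker = N.subgroupOf M := by
  refine ⟨e.toMonoidHom.comp ((QuotientGroup.mk' N).subgroupMap M),
    e.surjective.comp ((QuotientGroup.mk' N).subgroupMap_surjective M), ?_⟩
  ext m
  rw [MonoidHom.mem_ker, Subgroup.mem_subgroupOf, ← QuotientGroup.eq_one_iff]
  exact (map_eq_one_iff e e.injective).trans Subtype.ext_iff

end Quotient

end CharDegreeBound

/-- If `G` satisfies the two-prime hypothesis and has normal subgroups `N ≤ M` with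
`M/N ≅ PSL₂(9)` and the centralizer of `M/N` in `G/N` trivial, then `|cd(G)| ≤ 16`. -/
theorem cd_bound_psl2_9
    (F : Type) [Field F] [Fintype F] (hF : Fintype.card F = 9)
    (G : Type) [Group G] [Finite G] (hG : TwoPrimeHypothesis G)
    (N M : Subgroup G) [N.Normal] [M.Normal] (hNM : N ≤ M)
    (hiso : Nonempty ((M.map (QuotientGroup.mk' N)) ≃* PSL2 F))
    (hcent : Subgroup.centralizer ((M.map (QuotientGroup.mk' N)) : Set (G ⧸ N)) = ⊥) :
    (charDegrees G).ncard ≤ 16 := by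
  have hF9 : Nat.card F = 9 := Nat.card_eq_fintype_card.trans hF
  obtain ⟨e⟩ := hiso
  have hindex : N.index ∣ 1440 := CharDegreeBound.index_dvd_of_centralizer_eq_bot hF9 e hcent
  obtain ⟨q, hq, hker⟩ := CharDegreeBound.exists_surjective_ker_eq_subgroupOf e
  calc (charDegrees G).ncard
      ≤ CharDegreeBound.smallDegrees.card + CharDegreeBound.degreeDivisors.card :=
        CharDegreeBound.ncard_charDegrees_le hG _ _
          CharDegreeBound.two_lt_cardFactors_of_mem_degreeDivisors
          fun _ => CharDegreeBound.isClassified_of_mem_charDegrees hF9 hG hNM hq hker hindex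
    _ = 16 := by decide
end

section
/- Let f > 1 be an odd integer such that Ω(2^f − 1) ≤ 2. Then f is either a prime or the square of a prime. -/
/-- `Ω n`: the number of prime divisors of `n` counted with multiplicity. -/
def bigOmega (n : ℕ) : ℕ := n.primeFactorsList.length

/-!
For `b ≥ 2` the repunit `1 + b + ⋯ + b ^ (n - 1)` is the product of the cyclotomic values `Φ_d(b)`
over the divisors `d ≠ 1` of `n`, and each of these values exceeds `1` in absolute value. So the
repunit has at least `d(n) - 1` prime factors. If it has at most two, then `n` has at most three
divisors, which for `n > 1` leaves only primes and squares of primes. Mersenne numbers are the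
repunits in base `2`.
-/

open Finset Polynomial
open scoped ArithmeticFunction.Omega

theorem bigOmega_eq_cardFactors (n : ℕ) : bigOmega n = Ω n :=
  ArithmeticFunction.cardFactors_apply.symm

theorem cardFactors_prod {ι : Type*} {s : Finset ι} {g : ι → ℕ} (hg : ∀ i ∈ s, g i ≠ 0) :
    Ω (∏ i ∈ s, g i) = ∑ i ∈ s, Ω (g i) :=
  (ArithmeticFunction.cardFactors_multiset_prod (prod_ne_zero_iff.2 hg)).trans
    (congrArg Multiset.sum (Multiset.map_map ..))

theorem card_le_cardFactors_prod {ι : Type*} {s : Finset ι} {g : ι → ℕ}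
    (hg : ∀ i ∈ s, 1 < g i) : #s ≤ Ω (∏ i ∈ s, g i) := by
  rw [cardFactors_prod fun i hi ↦ Nat.ne_zero_of_lt (hg i hi), card_eq_sum_ones]
  exact sum_le_sum fun i hi ↦ ArithmeticFunction.cardFactors_pos_iff_one_lt.2 (hg i hi)

theorem one_lt_natAbs_eval_cyclotomic {b d : ℕ} (hb : 2 ≤ b) (hd : 1 < d) :
    1 < ((cyclotomic d ℤ).eval (b : ℤ)).natAbs := by
  have := sub_one_lt_natAbs_cyclotomic_eval hd (q := b) (by lia)
  lia

theorem prod_natAbs_eval_cyclotomic_eq_geom_sum (b : ℕ) {n : ℕ} (hn : 0 < n) :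
    ∏ d ∈ n.divisors.erase 1, ((cyclotomic d ℤ).eval (b : ℤ)).natAbs = ∑ i ∈ range n, b ^ i := by
  have heval : ∏ d ∈ n.divisors.erase 1, (cyclotomic d ℤ).eval (b : ℤ) =
      ((∑ i ∈ range n, b ^ i : ℕ) : ℤ) := by
    rw [← eval_prod, prod_cyclotomic_eq_geom_sum hn, eval_geom_sum]
    norm_cast
  simpa only [map_prod, Int.natAbsHom_apply, Int.natAbs_natCast] using
    congrArg Int.natAbsHom heval

theorem card_divisors_le_cardFactors_geom_sum_add_one {b : ℕ} (hb : 2 ≤ b) (n : ℕ) :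
    #n.divisors ≤ Ω (∑ i ∈ range n, b ^ i) + 1 := by
  obtain rfl | hn := n.eq_zero_or_pos
  · simp
  have hone_lt : ∀ d ∈ n.divisors.erase 1, 1 < ((cyclotomic d ℤ).eval (b : ℤ)).natAbs := by
    intro d hd
    obtain ⟨hd1, hdn⟩ := mem_erase.1 hd
    exact one_lt_natAbs_eval_cyclotomic hb
      (Nat.one_lt_iff_ne_zero_and_ne_one.2 ⟨(Nat.pos_of_mem_divisors hdn).ne', hd1⟩)
  calc #n.divisors = #(n.divisors.erase 1) + 1 :=
        (card_erase_add_one (Nat.one_mem_divisors.2 hn.ne')).symm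
    _ ≤ Ω (∑ i ∈ range n, b ^ i) + 1 := by
        rw [← prod_natAbs_eval_cyclotomic_eq_geom_sum b hn]
        gcongr
        exact card_le_cardFactors_prod hone_lt

theorem prime_or_eq_prime_sq_of_card_divisors_le_three {n : ℕ} (hn : 1 < n)
    (hcard : #n.divisors ≤ 3) : n.Prime ∨ ∃ p : ℕ, p.Prime ∧ n = p ^ 2 := by
  refine or_iff_not_imp_left.2 fun hprime ↦ ?_
  have hp : n.minFac.Prime := Nat.minFac_prime hn.ne'
  have hlt : n.minFac < n := (Nat.not_prime_iff_minFac_lt hn).1 hprime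
  refine ⟨n.minFac, hp, ?_⟩
  have hsub : {1, n.minFac, n} ⊆ n.divisors := by
    simp [insert_subset_iff, Nat.minFac_dvd, (zero_lt_one.trans hn).ne']
  have hthree : #{1, n.minFac, n} = 3 :=
    card_eq_three.2 ⟨1, n.minFac, n, hp.one_lt.ne, hn.ne, hlt.ne, rfl⟩
  have hdivisors : {1, n.minFac, n} = n.divisors := eq_of_subset_of_card_le hsub (by lia)
  obtain ⟨q, hq⟩ := n.minFac_dvd
  have hmem : q ∈ ({1, n.minFac, n} : Finset ℕ) :=
    hdivisors ▸ Nat.mem_divisors.2 ⟨Dvd.intro_left _ hq.symm, by lia⟩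
  simp only [mem_insert, mem_singleton] at hmem
  rcases hmem with hq1 | hqp | hqn
  · rw [hq1, mul_one] at hq
    exact absurd hq hlt.ne'
  · rw [sq]
    exact hq.trans (congrArg _ hqp)
  · have := hp.one_lt
    nlinarith

theorem mersenne_two_prime_divisors_general {b n : ℕ} (hb : 2 ≤ b) (hn : 1 < n)
    (h : bigOmega (∑ i ∈ range n, b ^ i) ≤ 2) :
    n.Prime ∨ ∃ p : ℕ, p.Prime ∧ n = p ^ 2 := by
  rw [bigOmega_eq_cardFactors] at h
  have := card_divisors_le_cardFactors_geom_sum_add_one hb n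
  exact prime_or_eq_prime_sq_of_card_divisors_le_three hn (by lia)

/-- If `f > 1` is odd and `2^f - 1` has at most two prime divisors counted with multiplicity,
then `f` is a prime or the square of a prime. -/
theorem mersenne_two_prime_divisors (f : ℕ) (hf : 1 < f) (hodd : Odd f)
    (h : bigOmega (2 ^ f - 1) ≤ 2) :
    f.Prime ∨ ∃ p : ℕ, p.Prime ∧ f = p ^ 2 :=
  mersenne_two_prime_divisors_general le_rfl hf (by simpa [Nat.geomSum_eq le_rfl] using h)
end
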